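/- arXiv:0903.2016 — 7 statements merged into one kernel-verified Lean document; each statement's English description precedes it below -/
import Mathlib

section
/- Let t ≥ 3 be an odd integer and let g_t(x,y,z) = (x^t + y^t + z^t + (x+y+z)^t)/((x+y)(x+z)(y+z)) ∈ F_2[x,y,z]. If g_t(x,y,z) has an absolutely irreducible factor defined over F_2, then for all sufficiently large n there exists a point (α, β, γ) ∈ (F_{2^n})^3 with pairwise distinct coordinates such that g_t(α, β, γ) = 0. -/
open MvPolynomial

/-!
By Stepanov's method, a plane curve `f(x, y) = 0` of degree `d` in `y`, absolutely irreducible over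
a finite field `k` with `q` elements, has points over every large extension `l` of `k`. Write
`#l = P * Q` with `Q = q ^ s` fixed and `P` a large power of `q`. If no point `(x, y)` of the curve
with `x ∈ l` were rational over `l`, then `Y = y ^ (P * Q) ≠ y` would be a second root of
`f(x, ·)`, so it would satisfy the relation `(f(x, Y) - f(x, y)) / (Y - y) = 0` of degree `d - 1`.
This saving makes the functions `x ^ (P * i + j) * y ^ (P * u) * Y ^ v` linearly dependent on these
points; as `x ^ (P * Q) = x`, the dependence is the `P`-th power of a polynomial
`ψ = ∑ c x ^ (i + Q * j) * y ^ (u + Q * v)`. It has low degree and vanishes at too many points, so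
`f ∣ ψ`. On the other hand the subfields `L ^ (q ^ s)` of the function field `L` over the algebraic
closure of `k` shrink to the constants, so for large `s` the functions `x ^ i * y ^ u` are linearly
independent over `L ^ (q ^ s)`, which forces `ψ = 0`.

For the curve `g_t(y, x, 1) = 0`, differentiating the equation for `g_t` in its first variable at a
zero with `y = x` or `y = 1` gives `x ^ (t - 1) = 1`, and this excludes only finitely many `x`.
-/

section DirectedSubfields

variable {L V : Type*} [Field L] [AddCommGroup V] [Module L V]

theorem linearIndependent_subfield_of_subset_range {K ι : Type*} [Field K] [Algebra K L]
    [Module K V] [IsScalarTower K L V] {E : Subfield L}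
    (hE : (E : Set L) ⊆ Set.range (algebraMap K L)) {v : ι → V} (hv : LinearIndependent K v) :
    LinearIndependent E v := by
  rw [linearIndependent_iff'] at hv ⊢
  intro S a ha i hi
  choose c hc using fun j => hE (a j).2
  have hca (j : ι) : c j • v j = a j • v j := by
    rw [← algebraMap_smul L (c j), hc]
    rfl
  have hci : c i = 0 := hv S c (by simpa only [hca] using ha) i hi
  exact Subtype.ext (by simp [← hc, hci])

theorem mem_span_range_iInf_subfield {κ : Type*} {E : κ → Subfield L} (hE : Directed (· ≥ ·) E)
    {ι : Type*} [Finite ι] {v : ι → V} {s₀ : κ} (hv : LinearIndependent (E s₀) v) {x : V}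
    (hx : ∀ s, E s ≤ E s₀ → x ∈ Submodule.span (E s) (Set.range v)) :
    x ∈ Submodule.span (⨅ s, E s : Subfield L) (Set.range v) := by
  have := Fintype.ofFinite ι
  obtain ⟨c, rfl⟩ := Submodule.mem_span_range_iff_exists_fun (E s₀) |>.1 (hx s₀ le_rfl)
  have hc : ∀ i, (c i : L) ∈ ⨅ s, E s := fun i => by
    rw [Subfield.mem_iInf]
    intro t
    obtain ⟨s, hs₀, hst⟩ := hE s₀ t
    obtain ⟨b, hb⟩ := Submodule.mem_span_range_iff_exists_fun (E s) |>.1 (hx s hs₀)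
    have hbc : (fun i => Subfield.inclusion hs₀ (b i)) = c :=
      funext (Fintype.linearIndependent_iffₛ.1 hv _ _ hb)
    rw [← hbc]
    exact hst (b i).2
  exact (Submodule.mem_span_range_iff_exists_fun _).2 ⟨fun i => ⟨c i, hc i⟩, rfl⟩

theorem exists_linearIndependent_of_iInf_subfield {κ : Type*} [Nonempty κ] {E : κ → Subfield L}
    (hE : Directed (· ≥ ·) E) {ι : Type*} [Finite ι] {v : ι → V}
    (hv : LinearIndependent (⨅ s, E s : Subfield L) v) : ∃ s, LinearIndependent (E s) v := by
  obtain ⟨n, ⟨e⟩⟩ := Finite.exists_equiv_fin ι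
  rw [← linearIndependent_equiv e.symm] at hv
  simp only [← linearIndependent_equiv e.symm (f := v)]
  generalize v ∘ e.symm = w at hv
  clear e
  induction n with
  | zero => exact ⟨Classical.arbitrary κ, linearIndependent_empty_type⟩
  | succ n ih =>
    rw [← Fin.cons_self_tail w, linearIndependent_finCons] at hv
    obtain ⟨s₀, hs₀⟩ := ih _ hv.1
    obtain ⟨s, hs, hws⟩ :
        ∃ s, E s ≤ E s₀ ∧ w 0 ∉ Submodule.span (E s) (Set.range (Fin.tail w)) := by
      by_contra! h
      exact hv.2 (mem_span_range_iInf_subfield hE hs₀ h)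
    refine ⟨s, ?_⟩
    rw [← Fin.cons_self_tail w, linearIndependent_finCons]
    exact ⟨linearIndependent_subfield_of_subset_range (K := E s₀)
      (fun a ha => ⟨⟨a, hs ha⟩, rfl⟩) hs₀, hws⟩

end DirectedSubfields

section Constants

open Filter

theorem natDegree_eq_zero_of_pow_dvd {R : Type*} [CommRing R] [IsDomain R] {a b : Polynomial R}
    {n : ℕ} (hb : b ≠ 0) (h : a ^ n ∣ b) (hn : b.natDegree < n) : a.natDegree = 0 := by
  by_contra ha
  have hle := Polynomial.natDegree_le_of_dvd h hb
  rw [Polynomial.natDegree_pow] at hle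
  have := Nat.le_mul_of_pos_right n (Nat.pos_of_ne_zero ha)
  omega

theorem mem_range_algebraMap_of_frequently_pow_eq {K F : Type*} [Field K] [Field F]
    [Algebra (Polynomial K) F] [IsFractionRing (Polynomial K) F] [Algebra K F]
    [IsScalarTower K (Polynomial K) F] {u : F} (hu : ∃ᶠ n in atTop, ∃ w : F, w ^ n = u) :
    u ∈ Set.range (algebraMap K F) := by
  rcases eq_or_ne u 0 with rfl | h0
  · exact ⟨0, map_zero _⟩
  let num := IsFractionRing.num (Polynomial K) (K := F)
  let den (v : F) : Polynomial K := IsFractionRing.den (Polynomial K) v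
  have hden (v : F) : den v ≠ 0 := nonZeroDivisors.coe_ne_zero _
  have hden' (v : F) : algebraMap (Polynomial K) F (den v) ≠ 0 := by simpa using hden v
  have hcop (v : F) : IsCoprime (num v) (den v) :=
    (IsFractionRing.num_den_reduced (Polynomial K) v).isCoprime
  have hfrac (v : F) : algebraMap _ F (num v) / algebraMap _ F (den v) = v :=
    IsFractionRing.mk'_num_den' (Polynomial K) v
  have hnum : num u ≠ 0 := fun h => h0 (by rw [← hfrac u, h, map_zero, zero_div])
  obtain ⟨n, ⟨w, rfl⟩, hn⟩ :=
    (hu.and_eventually (eventually_gt_atTop ((num u).natDegree + (den u).natDegree))).exists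
  have hcross : num w ^ n * den (w ^ n) = num (w ^ n) * den w ^ n := by
    apply IsFractionRing.injective (Polynomial K) F
    simp only [map_mul, map_pow]
    rw [← div_eq_div_iff (pow_ne_zero _ (hden' w)) (hden' _), ← div_pow, hfrac, hfrac]
  have hnumC := Polynomial.eq_C_of_natDegree_eq_zero (natDegree_eq_zero_of_pow_dvd hnum
    ((hcop w).pow.dvd_of_dvd_mul_right (Dvd.intro _ hcross)) (by omega))
  have hdenC := Polynomial.eq_C_of_natDegree_eq_zero (natDegree_eq_zero_of_pow_dvd (hden _)
    ((hcop w).symm.pow.dvd_of_dvd_mul_left (Dvd.intro_left _ hcross.symm)) (by omega))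
  refine ⟨((num w).coeff 0 / (den w).coeff 0) ^ n, ?_⟩
  rw [map_pow, map_div₀, IsScalarTower.algebraMap_apply K (Polynomial K) F,
    IsScalarTower.algebraMap_apply K (Polynomial K) F, Polynomial.algebraMap_eq, ← hnumC, ← hdenC,
    hfrac]

theorem mem_range_algebraMap_of_frequently_pow_char_pow_eq {K F L : Type*} [Field K]
    [IsAlgClosed K] [Field F] [Algebra (Polynomial K) F] [IsFractionRing (Polynomial K) F]
    [Algebra K F] [IsScalarTower K (Polynomial K) F] [Field L] [Algebra F L] [Algebra K L]
    [IsScalarTower K F L] [Algebra.IsSeparable F L] (p : ℕ) [Fact p.Prime] [CharP L p] {u : L}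
    (hu : ∃ᶠ s in atTop, ∃ w : L, w ^ p ^ s = u) : u ∈ Set.range (algebraMap K L) := by
  have : CharP F p := (algebraMap F L).charP (algebraMap F L).injective p
  have hint : IsIntegral F u := Algebra.IsSeparable.isIntegral F u
  have hcoeff (i : ℕ) : (minpoly F u).coeff i ∈ Set.range (algebraMap K F) := by
    apply mem_range_algebraMap_of_frequently_pow_eq
    refine (tendsto_pow_atTop_atTop_of_one_lt (Fact.out : p.Prime).one_lt).frequently
      (hu.mono ?_)
    rintro s ⟨w, rfl⟩
    refine ⟨(minpoly F w).coeff i, ?_⟩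
    rw [← iterateFrobenius_def p s w,
      minpoly.iterateFrobenius_of_isSeparable p s (Algebra.IsSeparable.isSeparable F w),
      Polynomial.coeff_map, iterateFrobenius_def]
  obtain ⟨P, hP, -, hmonic⟩ := Polynomial.lifts_and_natDegree_eq_and_monic
    ((Polynomial.lifts_iff_coeff_lifts _).2 hcoeff) (minpoly.monic hint)
  have hu : IsIntegral K u := ⟨P, hmonic, by
    rw [IsScalarTower.algebraMap_eq K F L, ← Polynomial.eval₂_map, hP]
    exact minpoly.aeval F u⟩
  exact minpoly.mem_range_of_degree_eq_one K u
    (IsAlgClosed.degree_eq_one_of_irreducible K (minpoly.irreducible hu))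

end Constants

section FunctionField

open Filter

theorem isSeparable_adjoinRoot {F : Type*} [Field F] {f : Polynomial F} [Fact (Irreducible f)]
    (hf : f.Separable) : Algebra.IsSeparable F (AdjoinRoot f) := by
  have hroot : IsSeparable F (AdjoinRoot.root f) :=
    hf.of_dvd (minpoly.dvd F _ (by rw [AdjoinRoot.aeval_eq, AdjoinRoot.mk_self]))
  have hadjoin := (IntermediateField.isSeparable_adjoin_simple_iff_isSeparable F _).2 hroot
  rw [IntermediateField.adjoin_eq_top_of_algebra _ _ AdjoinRoot.adjoinRoot_eq_top] at hadjoin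
  exact Algebra.IsSeparable.of_algHom F _ IntermediateField.topEquiv.symm.toAlgHom

theorem linearIndependent_pow_mul_root_pow {K F : Type*} [Field K] [Field F]
    [Algebra (Polynomial K) F] [IsFractionRing (Polynomial K) F] [Algebra K F]
    [IsScalarTower K (Polynomial K) F] {f : Polynomial F} (hf : f.Monic) (b : ℕ) :
    LinearIndependent K fun i : Fin b × Fin f.natDegree =>
      AdjoinRoot.of f (algebraMap (Polynomial K) F Polynomial.X) ^ (i.1 : ℕ) *
        AdjoinRoot.root f ^ (i.2 : ℕ) := by
  have hX : LinearIndependent K fun i : Fin b =>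
      algebraMap (Polynomial K) F Polynomial.X ^ (i : ℕ) := by
    have hmonomial := ((Polynomial.basisMonomials K).linearIndependent.comp _
      (Fin.val_injective (n := b))).map' (IsScalarTower.toAlgHom K (Polynomial K) F).toLinearMap
      (LinearMap.ker_eq_bot.2 (IsFractionRing.injective _ _))
    simpa [Function.comp_def, ← Polynomial.X_pow_eq_monomial] using hmonomial
  have hroot : LinearIndependent F fun i : Fin f.natDegree => AdjoinRoot.root f ^ (i : ℕ) := by
    simpa only [PowerBasis.coe_basis] using! (AdjoinRoot.powerBasis' hf).basis.linearIndependent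
  simpa only [Algebra.smul_def, map_pow, AdjoinRoot.algebraMap_eq] using
    linearIndependent_smul hX hroot

theorem exists_linearIndependent_iterateFrobenius_fieldRange {K F : Type*} [Field K]
    [IsAlgClosed K] (p : ℕ) [Fact p.Prime] [Field F] [Algebra (Polynomial K) F]
    [IsFractionRing (Polynomial K) F] [Algebra K F] [IsScalarTower K (Polynomial K) F]
    {f : Polynomial F} [Fact (Irreducible f)] [CharP (AdjoinRoot f) p] (hf : f.Monic)
    (hsep : f.Separable) (b : ℕ) :
    ∃ s₀, ∀ s ≥ s₀, LinearIndependent (iterateFrobenius (AdjoinRoot f) p s).fieldRange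
      fun i : Fin b × Fin f.natDegree =>
        AdjoinRoot.of f (algebraMap (Polynomial K) F Polynomial.X) ^ (i.1 : ℕ) *
          AdjoinRoot.root f ^ (i.2 : ℕ) := by
  have := isSeparable_adjoinRoot hsep
  let E (s : ℕ) := (iterateFrobenius (AdjoinRoot f) p s).fieldRange
  have hE : Antitone E := by
    rintro s t hst _ ⟨w, rfl⟩
    exact ⟨w ^ p ^ (t - s), by
      simp only [iterateFrobenius_def, ← pow_mul, ← pow_add, Nat.sub_add_cancel hst]⟩
  have hconst : ((⨅ s, E s : Subfield (AdjoinRoot f)) : Set (AdjoinRoot f)) ⊆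
      Set.range (algebraMap K (AdjoinRoot f)) := fun u hu =>
    mem_range_algebraMap_of_frequently_pow_char_pow_eq (F := F) p
      (Frequently.of_forall fun s => (Subfield.mem_iInf.1 hu s :))
  obtain ⟨s₀, hs₀⟩ := exists_linearIndependent_of_iInf_subfield hE.directed_ge
    (linearIndependent_subfield_of_subset_range hconst (linearIndependent_pow_mul_root_pow hf b))
  exact ⟨s₀, fun s hs => linearIndependent_subfield_of_subset_range (K := E s₀)
    (fun a ha => ⟨⟨a, hE hs ha⟩, rfl⟩) hs₀⟩

end FunctionField

section Stepanov

open Polynomial (aevalAeval)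

theorem aevalAeval_eq_eval_map {R A : Type*} [CommSemiring R] [CommSemiring A] [Algebra R A]
    (x y : A) (f : Polynomial (Polynomial R)) :
    aevalAeval x y f = (f.map (Polynomial.aeval x : Polynomial R →ₐ[R] A).toRingHom).eval y := by
  rw [Polynomial.aevalAevalEquiv_apply_apply]
  induction f using Polynomial.induction_on' with
  | add p q hp hq => simp [hp, hq]
  | monomial n a => simp

theorem map_aevalAeval {R A B : Type*} [CommSemiring R] [CommSemiring A] [Algebra R A]
    [CommSemiring B] [Algebra R B] (φ : A →ₐ[R] B) (x y : A) (f : Polynomial (Polynomial R)) :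
    φ (aevalAeval x y f) = aevalAeval (φ x) (φ y) f := by
  rw [← AlgHom.comp_apply]
  congr 1
  ext <;> simp

variable {k : Type*} [Field k]

/-- Stepanov's auxiliary polynomial `∑ c x ^ (i + Q j) y ^ (u + Q v) ∈ k[x][y]`, where `c` is
indexed by `((i, u), (j, v))` with `i < b`, `j < J` and `u, v < d`. -/
noncomputable def stepanovPoly {b d J : ℕ} (Q : ℕ) (c : (Fin b × Fin d) × (Fin J × Fin d) → k) :
    Polynomial (Polynomial k) :=
  ∑ i, Polynomial.monomial (i.1.2 + Q * i.2.2 : ℕ)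
    (Polynomial.monomial (i.1.1 + Q * i.2.1 : ℕ) (c i))

theorem aevalAeval_stepanovPoly {A : Type*} [CommRing A] [Algebra k A] (x y : A) {b d J : ℕ} (Q : ℕ)
    (c : (Fin b × Fin d) × (Fin J × Fin d) → k) :
    aevalAeval x y (stepanovPoly Q c) =
      ∑ i, c i • (x ^ (i.1.1 + Q * i.2.1 : ℕ) * y ^ (i.1.2 + Q * i.2.2 : ℕ)) := by
  simp [stepanovPoly, Algebra.smul_def, mul_assoc]

variable [Fintype k]

theorem frobeniusAlgHom_pow_apply {A : Type*} [CommRing A] [Algebra k A] (s : ℕ) (a : A) :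
    (FiniteField.frobeniusAlgHom k A ^ s) a = a ^ Fintype.card k ^ s := by
  rw [AlgHom.coe_pow, FiniteField.coe_frobeniusAlgHom, pow_iterate]

theorem aevalAeval_stepanovPoly_card_pow {A : Type*} [CommRing A] [Algebra k A] (x y : A)
    {b d J : ℕ} (s : ℕ) (c : (Fin b × Fin d) × (Fin J × Fin d) → k) :
    aevalAeval x y (stepanovPoly (Fintype.card k ^ s) c) =
      ∑ i : Fin b × Fin d, (∑ j : Fin J × Fin d, c (i, j) • (x ^ (j.1 : ℕ) * y ^ (j.2 : ℕ))) ^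
        Fintype.card k ^ s * (x ^ (i.1 : ℕ) * y ^ (i.2 : ℕ)) := by
  rw [aevalAeval_stepanovPoly, Fintype.sum_prod_type]
  refine Finset.sum_congr rfl fun i _ => ?_
  simp only [← frobeniusAlgHom_pow_apply, map_sum, map_smul, Finset.sum_mul]
  simp only [frobeniusAlgHom_pow_apply, smul_mul_assoc]
  refine Finset.sum_congr rfl fun j _ => ?_
  ring_nf

theorem eq_zero_of_aevalAeval_stepanovPoly_eq_zero {L : Type*} [Field L] [Algebra k L] {x y : L}
    {b d J s : ℕ}
    (hb : LinearIndependent ((FiniteField.frobeniusAlgHom k L ^ s : L →ₐ[k] L) : L →+* L).fieldRange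
      fun i : Fin b × Fin d => x ^ (i.1 : ℕ) * y ^ (i.2 : ℕ))
    (hJ : LinearIndependent k fun j : Fin J × Fin d => x ^ (j.1 : ℕ) * y ^ (j.2 : ℕ))
    {c : (Fin b × Fin d) × (Fin J × Fin d) → k}
    (hc : aevalAeval x y (stepanovPoly (Fintype.card k ^ s) c) = 0) : c = 0 := by
  rw [aevalAeval_stepanovPoly_card_pow] at hc
  ext ⟨i, j⟩
  let w (i : Fin b × Fin d) : L :=
    ∑ j : Fin J × Fin d, c (i, j) • (x ^ (j.1 : ℕ) * y ^ (j.2 : ℕ))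
  have hw : w i ^ Fintype.card k ^ s = 0 :=
    congrArg Subtype.val (Fintype.linearIndependent_iff.1 hb
      (fun i => ⟨w i ^ Fintype.card k ^ s, w i, frobeniusAlgHom_pow_apply s (w i)⟩) hc i)
  exact Fintype.linearIndependent_iff.1 hJ (fun j => c (i, j)) (eq_zero_of_pow_eq_zero hw) j

theorem exists_linearIndependent_frobeniusAlgHom_fieldRange {K F : Type*} [Field K]
    [IsAlgClosed K] [Field F] [Algebra (Polynomial K) F] [IsFractionRing (Polynomial K) F]
    [Algebra K F] [IsScalarTower K (Polynomial K) F] [Algebra k F] {f : Polynomial F}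
    [Fact (Irreducible f)] (hf : f.Monic) (hsep : f.Separable) (b : ℕ) :
    ∃ s, LinearIndependent ((FiniteField.frobeniusAlgHom k (AdjoinRoot f) ^ s :
        AdjoinRoot f →ₐ[k] AdjoinRoot f) : AdjoinRoot f →+* AdjoinRoot f).fieldRange
      fun i : Fin b × Fin f.natDegree =>
        AdjoinRoot.of f (algebraMap (Polynomial K) F Polynomial.X) ^ (i.1 : ℕ) *
          AdjoinRoot.root f ^ (i.2 : ℕ) := by
  obtain ⟨p, _, r, hp, hcard⟩ := FiniteField.card' k
  have : Fact p.Prime := ⟨hp⟩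
  have : CharP (AdjoinRoot f) p := charP_of_injective_algebraMap' k p
  obtain ⟨s, hs⟩ := exists_linearIndependent_iterateFrobenius_fieldRange (K := K) p hf hsep b
  have hfrob : ((FiniteField.frobeniusAlgHom k (AdjoinRoot f) ^ s :
      AdjoinRoot f →ₐ[k] AdjoinRoot f) : AdjoinRoot f →+* AdjoinRoot f) =
        iterateFrobenius (AdjoinRoot f) p (r * s) := RingHom.ext fun w => by
    rw [RingHom.coe_coe, frobeniusAlgHom_pow_apply, iterateFrobenius_def, pow_mul, hcard]
  exact ⟨s, hfrob ▸ hs (r * s) (Nat.le_mul_of_pos_left s r.pos)⟩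

theorem exists_eq_zero_of_dvd_stepanovPoly (K : Type*) [Field K] [IsAlgClosed K] [Algebra k K]
    {f : Polynomial (Polynomial k)} (hf : f.Monic)
    (hirr : Irreducible (f.map (Polynomial.mapRingHom (algebraMap k K))))
    (hder : Polynomial.derivative f ≠ 0) (b : ℕ) :
    ∃ s, ∀ (J : ℕ) (c : (Fin b × Fin f.natDegree) × (Fin J × Fin f.natDegree) → k),
      f ∣ stepanovPoly (Fintype.card k ^ s) c → c = 0 := by
  let F := FractionRing (Polynomial K)
  let φ : Polynomial k →+* F := (algebraMap (Polynomial K) F).comp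
    (Polynomial.mapRingHom (algebraMap k K))
  have hφ : Function.Injective φ := (IsFractionRing.injective _ _).comp
    (Polynomial.map_injective _ (algebraMap k K).injective)
  let fF := f.map φ
  have hirrF : Irreducible fF := by
    simpa only [fF, φ, ← Polynomial.map_map] using
      ((hf.map _).irreducible_iff_irreducible_map_fraction_map (K := F)).1 hirr
  have hsep : fF.Separable := by
    rw [Polynomial.separable_iff_derivative_ne_zero hirrF, Polynomial.derivative_map]
    exact (Polynomial.map_ne_zero_iff hφ).2 hder
  have : Fact (Irreducible fF) := ⟨hirrF⟩
  let x : AdjoinRoot fF := AdjoinRoot.of fF (algebraMap _ F (Polynomial.X : Polynomial K))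
  have hroot : aevalAeval x (AdjoinRoot.root fF) f = 0 := by
    rw [aevalAeval_eq_eval_map, ← AdjoinRoot.eval₂_root fF, Polynomial.eval_map,
      Polynomial.eval₂_map]
    congr 1
    ext a
    · simpa [φ] using! IsScalarTower.algebraMap_apply k (Polynomial K) (AdjoinRoot fF) a
    · simp [φ, x]
  obtain ⟨s, hs⟩ := exists_linearIndependent_frobeniusAlgHom_fieldRange (k := k) (K := K)
    (hf.map φ) hsep b
  rw [← hf.natDegree_map φ]
  refine ⟨s, fun J c hdvd => eq_zero_of_aevalAeval_stepanovPoly_eq_zero hs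
    ((linearIndependent_pow_mul_root_pow (K := K) (hf.map φ) J).restrict_scalars' k) ?_⟩
  obtain ⟨h, hh⟩ := hdvd
  rw [hh, map_mul, hroot, zero_mul]

end Stepanov

section Relation

open Polynomial (aevalAeval)

theorem degreeLE_pow_mul_degreeLE_le {R : Type*} [CommSemiring R] (n e M : ℕ) :
    Polynomial.degreeLE R e ^ n * Polynomial.degreeLE R M ≤
      Polynomial.degreeLE R (e * n + M : ℕ) := by
  induction n generalizing M with
  | zero => simp
  | succ n ih =>
    rw [pow_succ, mul_assoc]
    refine (mul_le_mul_right (Submodule.mul_le.2 fun a ha b hb => ?_) _).trans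
      ((ih (e + M)).trans_eq (congrArg (fun m : ℕ => Polynomial.degreeLE R m) (by ring)))
    rw [Polynomial.mem_degreeLE] at *
    exact (Polynomial.degree_mul_le a b).trans ((add_le_add ha hb).trans_eq (by norm_cast))

theorem natDegree_coeff_modByMonic_le {R : Type*} [CommRing R]
    {p f : Polynomial (Polynomial R)} {M e : ℕ} (hp : ∀ i, (p.coeff i).natDegree ≤ M)
    (hf : ∀ i, (f.coeff i).natDegree ≤ e) (i : ℕ) :
    ((p %ₘ f).coeff i).natDegree ≤ e * p.natDegree + M := by
  have one_mem (n : ℕ) : 1 ∈ Polynomial.degreeLE R n :=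
    Polynomial.mem_degreeLE.2 (Polynomial.degree_one_le.trans (by simp))
  have hmem := degreeLE_pow_mul_degreeLE_le _ _ _
    (Polynomial.coeff_modByMonic_mem_pow_natDegree_mul p f
      (Polynomial.degreeLE R M)
      (fun i => Polynomial.mem_degreeLE.2 (Polynomial.natDegree_le_iff_degree_le.1 (hp i)))
      (one_mem M) (Polynomial.degreeLE R e)
      (fun i => Polynomial.mem_degreeLE.2 (Polynomial.natDegree_le_iff_degree_le.1 (hf i)))
      (one_mem e) i)
  exact Polynomial.natDegree_le_iff_degree_le.2 (Polynomial.mem_degreeLE.1 hmem)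

theorem sum_coeff_mul_geom_sum₂_eq_zero {A : Type*} [CommRing A] {f : Polynomial A} {y z : A}
    (hy : f.eval y = 0) (hz : f.eval z = 0) (hzy : IsUnit (z - y)) {n : ℕ} (hn : f.natDegree < n) :
    ∑ i ∈ Finset.range n, f.coeff i * ∑ v ∈ Finset.range i, z ^ v * y ^ (i - 1 - v) = 0 := by
  refine hzy.mul_left_eq_zero.1 ?_
  simp_rw [Finset.sum_mul _ _ (z - y), mul_assoc (f.coeff _), geom_sum₂_mul, mul_sub,
    Finset.sum_sub_distrib, ← Polynomial.eval_eq_sum_range' hn, hy, hz, sub_zero]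

section monomialSpan

variable (k : Type*) [Field k] {R : Type*} [CommRing R] [Algebra k R] (x y z : R)

/-- The `k`-span of the monomials `x ^ a * y ^ u * z ^ v` with `a ≤ M`, `u < d` and `v < d'`. -/
def monomialSpan (M d d' : ℕ) : Submodule k R :=
  Submodule.span k (Set.range fun i : (Fin (M + 1) × Fin d) × Fin d' =>
    x ^ (i.1.1 : ℕ) * y ^ (i.1.2 : ℕ) * z ^ (i.2 : ℕ))

variable {k}

theorem aevalAeval_mul_pow_mem_monomialSpan_of_degree_lt {p : Polynomial (Polynomial k)}
    {M d d' v : ℕ} (hd : p.degree < d) (hM : ∀ i, (p.coeff i).natDegree ≤ M) (hv : v < d') :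
    aevalAeval x y p * z ^ v ∈ monomialSpan k x y z M d d' := by
  rw [aevalAeval_eq_eval_map, Polynomial.eval_map, Polynomial.eval₂_eq_sum, Polynomial.sum,
    Finset.sum_mul]
  refine Submodule.sum_mem _ fun u hu => ?_
  have hu : u < d := by exact_mod_cast (Polynomial.le_degree_of_mem_supp u hu).trans_lt hd
  rw [AlgHom.toRingHom_eq_coe, RingHom.coe_coe, Polynomial.aeval_eq_sum_range, Finset.sum_mul,
    Finset.sum_mul]
  refine Submodule.sum_mem _ fun a ha => ?_
  have ha : a < M + 1 := (Finset.mem_range.1 ha).trans_le (Nat.succ_le_succ (hM u))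
  rw [smul_mul_assoc, smul_mul_assoc]
  exact Submodule.smul_mem _ _ (Submodule.subset_span ⟨((⟨a, ha⟩, ⟨u, hu⟩), ⟨v, hv⟩), rfl⟩)

variable {x y z} {f : Polynomial (Polynomial k)} {e : ℕ}

theorem aevalAeval_mul_pow_mem_monomialSpan (hf : f.Monic) (he : ∀ i, (f.coeff i).natDegree ≤ e)
    (hy : aevalAeval x y f = 0) {p : Polynomial (Polynomial k)} {D M d' v : ℕ}
    (hD : p.natDegree ≤ D) (hM : ∀ i, (p.coeff i).natDegree ≤ M) (hv : v < d') :
    aevalAeval x y p * z ^ v ∈ monomialSpan k x y z (e * D + M) f.natDegree d' := by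
  have hmod : aevalAeval x y p = aevalAeval x y (p %ₘ f) := by
    conv_lhs => rw [← Polynomial.modByMonic_add_div p f, map_add, map_mul, hy, zero_mul, add_zero]
  rw [hmod]
  exact aevalAeval_mul_pow_mem_monomialSpan_of_degree_lt x y z
    ((Polynomial.degree_modByMonic_lt p hf).trans_le Polynomial.degree_le_natDegree)
    (fun i => (natDegree_coeff_modByMonic_le hM he i).trans (by gcongr)) hv

theorem natDegree_coeff_mul_C_mul_X_pow_le {R : Type*} [Semiring R]
    {p : Polynomial (Polynomial R)} {a : Polynomial R} {M e : ℕ}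
    (hp : ∀ i, (p.coeff i).natDegree ≤ M) (ha : a.natDegree ≤ e) (u i : ℕ) :
    ((p * (Polynomial.C a * Polynomial.X ^ u)).coeff i).natDegree ≤ M + e := by
  rw [← mul_assoc, Polynomial.coeff_mul_X_pow']
  split_ifs
  · rw [Polynomial.coeff_mul_C]
    exact Polynomial.natDegree_mul_le.trans (add_le_add (hp _) ha)
  · simp

theorem aevalAeval_mul_pow_pred_mem_monomialSpan (hf : f.Monic)
    (he : ∀ i, (f.coeff i).natDegree ≤ e) (hy : aevalAeval x y f = 0) (hz : aevalAeval x z f = 0)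
    (hzy : IsUnit (z - y)) {d : ℕ} (hd : f.natDegree = d + 1) {p : Polynomial (Polynomial k)}
    {D M : ℕ} (hD : p.natDegree ≤ D) (hM : ∀ i, (p.coeff i).natDegree ≤ M) :
    aevalAeval x y p * z ^ d ∈ monomialSpan k x y z (e * (D + (d + 1)) + (M + e)) (d + 1) d := by
  have hterm {i v u : ℕ} (hv : v < d) (hu : u ≤ d) :
      aevalAeval x y p * (Polynomial.aeval x (f.coeff i) * (z ^ v * y ^ u)) ∈
        monomialSpan k x y z (e * (D + (d + 1)) + (M + e)) (d + 1) d := by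
    have hdeg : (p * (Polynomial.C (f.coeff i) * Polynomial.X ^ u)).natDegree ≤ D + (d + 1) :=
      Polynomial.natDegree_mul_le.trans
        (add_le_add hD ((Polynomial.natDegree_C_mul_X_pow_le _ _).trans (hu.trans d.le_succ)))
    have hmem := aevalAeval_mul_pow_mem_monomialSpan (z := z) hf he hy hdeg
      (natDegree_coeff_mul_C_mul_X_pow_le hM (he i) u) hv
    rw [hd] at hmem
    convert hmem using 1
    simp only [map_mul, map_pow, Polynomial.aevalAeval_C, Polynomial.aevalAeval_Y]
    ring
  -- As `f` is monic, `(f(x, z) - f(x, y)) / (z - y) = 0` eliminates `z ^ d`.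
  have hrel := sum_coeff_mul_geom_sum₂_eq_zero (f := f.map (Polynomial.aeval x).toRingHom)
    (by rwa [← aevalAeval_eq_eval_map]) (by rwa [← aevalAeval_eq_eval_map]) hzy
    (Polynomial.natDegree_map_le.trans_lt (hd.trans_lt (Nat.lt_succ_self _)))
  have hlead : f.coeff (d + 1) = 1 := by rw [← hd, hf.coeff_natDegree]
  have hpow : z ^ d = -(∑ i ∈ Finset.range (d + 1), Polynomial.aeval x (f.coeff i) *
      ∑ v ∈ Finset.range i, z ^ v * y ^ (i - 1 - v) +
      ∑ v ∈ Finset.range d, Polynomial.aeval x (f.coeff (d + 1)) * (z ^ v * y ^ (d - v))) := by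
    have hgeom : ∑ v ∈ Finset.range (d + 1), z ^ v * y ^ (d - v) =
        ∑ v ∈ Finset.range d, z ^ v * y ^ (d - v) + z ^ d := by simp [Finset.sum_range_succ]
    rw [Finset.sum_range_succ, Nat.add_sub_cancel, hgeom] at hrel
    simp only [Polynomial.coeff_map, AlgHom.toRingHom_eq_coe, RingHom.coe_coe, hlead, map_one,
      one_mul] at hrel ⊢
    linear_combination hrel
  rw [hpow, mul_neg, mul_add (aevalAeval x y p), Finset.mul_sum, Finset.mul_sum]
  refine Submodule.neg_mem _ (Submodule.add_mem _ (Submodule.sum_mem _ fun i hi => ?_)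
    (Submodule.sum_mem _ fun v hv => hterm (Finset.mem_range.1 hv) (Nat.sub_le d v)))
  rw [Finset.mul_sum, Finset.mul_sum]
  refine Submodule.sum_mem _ fun v hv => ?_
  rw [Finset.mem_range] at hi hv
  exact hterm (by omega) (by omega)

theorem pow_mul_pow_mul_pow_mem_monomialSpan (hf : f.Monic)
    (he : ∀ i, (f.coeff i).natDegree ≤ e) (hy : aevalAeval x y f = 0) (hz : aevalAeval x z f = 0)
    (hzy : IsUnit (z - y)) {d : ℕ} (hd : f.natDegree = d + 1) {a u v M D : ℕ} (ha : a ≤ M)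
    (hu : u ≤ D) (hv : v ≤ d) :
    x ^ a * y ^ u * z ^ v ∈ monomialSpan k x y z (e * (D + (d + 1)) + (M + e)) (d + 1) d := by
  let p : Polynomial (Polynomial k) := Polynomial.monomial u (Polynomial.monomial a 1)
  have hp : aevalAeval x y p = x ^ a * y ^ u := by simp [p]
  have hpdeg : p.natDegree ≤ D := (Polynomial.natDegree_monomial_le _).trans hu
  have hpcoeff (r : ℕ) : (p.coeff r).natDegree ≤ M := by
    rw [Polynomial.coeff_monomial]
    split_ifs
    · exact (Polynomial.natDegree_monomial_le _).trans ha
    · simp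
  rw [← hp]
  rcases hv.lt_or_eq with hv | rfl
  · have hmem := aevalAeval_mul_pow_mem_monomialSpan (z := z) hf he hy
      (hpdeg.trans (Nat.le_add_right _ (d + 1)))
      (fun r => (hpcoeff r).trans (Nat.le_add_right _ e)) hv
    rwa [hd] at hmem
  · exact aevalAeval_mul_pow_pred_mem_monomialSpan hf he hy hz hzy hd hpdeg hpcoeff

end monomialSpan

theorem exists_sum_smul_eq_zero_of_card_lt {k V ι κ : Type*} [Field k] [AddCommGroup V]
    [Module k V] [Fintype ι] [Fintype κ] {v : ι → V} {w : κ → V}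
    (hv : ∀ i, v i ∈ Submodule.span k (Set.range w)) (hcard : Fintype.card κ < Fintype.card ι) :
    ∃ c : ι → k, c ≠ 0 ∧ ∑ i, c i • v i = 0 := by
  classical
  have hdep : ¬LinearIndependent k v := fun hv' => hcard.not_ge <|
    (linearIndependent_le_span_aux' v hv' (Set.range w)
      (Set.range_subset_iff.2 hv)).trans (Fintype.card_range_le w)
  obtain ⟨c, hc, i, hi⟩ := Fintype.not_linearIndependent_iff.1 hdep
  exact ⟨c, fun h => hi (congrFun h i), hc⟩

variable {k R : Type*} [Field k] [Fintype k] [CommRing R] [Algebra k R]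

theorem aevalAeval_pow_card_pow (x y : R) (n : ℕ) (f : Polynomial (Polynomial k)) :
    aevalAeval x y f ^ Fintype.card k ^ n =
      aevalAeval (x ^ Fintype.card k ^ n) (y ^ Fintype.card k ^ n) f := by
  simpa only [frobeniusAlgHom_pow_apply] using
    map_aevalAeval (FiniteField.frobeniusAlgHom k R ^ n) x y f

theorem exists_aevalAeval_stepanovPoly_eq_zero [IsReduced R] {f : Polynomial (Polynomial k)}
    (hf : f.Monic) {e : ℕ} (he : ∀ i, (f.coeff i).natDegree ≤ e) {x y : R} {P Q m s : ℕ}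
    (hP : P = Fintype.card k ^ m) (hQ : Q = Fintype.card k ^ s) (hx : x ^ (P * Q) = x)
    (hxy : aevalAeval x y f = 0) (hy : IsUnit (y ^ (P * Q) - y)) {b J : ℕ}
    (hcard : (e * (P * f.natDegree + f.natDegree) + (P * b + J + e) + 1) *
      (f.natDegree * (f.natDegree - 1)) < b * f.natDegree * (J * f.natDegree)) :
    ∃ c : (Fin b × Fin f.natDegree) × (Fin J × Fin f.natDegree) → k,
      c ≠ 0 ∧ aevalAeval x y (stepanovPoly Q c) = 0 := by
  obtain ⟨d, hd⟩ : ∃ d, f.natDegree = d + 1 :=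
    Nat.exists_eq_succ_of_ne_zero fun h => by simp [h] at hcard
  rw [hd] at hcard ⊢
  let z := y ^ (P * Q)
  have hxz : aevalAeval x z f = 0 := by
    have hpow := aevalAeval_pow_card_pow x y (m + s) f
    rwa [hxy, pow_add, ← hP, ← hQ, hx, zero_pow (by simp [hP, hQ]), eq_comm] at hpow
  have hmem (i : (Fin b × Fin (d + 1)) × (Fin J × Fin (d + 1))) :
      x ^ (P * i.1.1 + i.2.1 : ℕ) * y ^ (P * i.1.2 : ℕ) * z ^ (i.2.2 : ℕ) ∈
        monomialSpan k x y z (e * (P * (d + 1) + (d + 1)) + (P * b + J + e)) (d + 1) d :=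
    pow_mul_pow_mul_pow_mem_monomialSpan hf he hxy hxz hy hd
      (add_le_add (Nat.mul_le_mul_left P i.1.1.2.le) i.2.1.2.le)
      (Nat.mul_le_mul_left P i.1.2.2.le) (Nat.lt_succ_iff.1 i.2.2.2)
  obtain ⟨c, hc0, hc⟩ := exists_sum_smul_eq_zero_of_card_lt hmem
    (by simpa only [Fintype.card_prod, Fintype.card_fin, Nat.add_sub_cancel, mul_assoc] using hcard)
  refine ⟨c, hc0, eq_zero_of_pow_eq_zero (n := P) ?_⟩
  rw [hP, aevalAeval_pow_card_pow, ← hP, aevalAeval_stepanovPoly, ← hc]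
  have hxpow (a j : ℕ) : (x ^ P) ^ (a + Q * j) = x ^ (P * a + j) := by
    rw [← pow_mul, mul_add, pow_add, ← mul_assoc, pow_mul x (P * Q), hx, pow_add]
  have hypow (u v : ℕ) : (y ^ P) ^ (u + Q * v) = y ^ (P * u) * z ^ v := by
    rw [← pow_mul, mul_add, pow_add, ← mul_assoc, pow_mul y (P * Q)]
  simp only [hxpow, hypow, mul_assoc]

end Relation

section Points

open Polynomial (aevalAeval)

-- The first inequality makes the linear system for the coefficients of `stepanovPoly`
-- underdetermined, the second makes the polynomial vanish at more points than its degree.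
theorem exists_stepanov_parameters {d : ℕ} (hd : 0 < d) (e D : ℕ) :
    ∃ b P₀ : ℕ, ∀ P ≥ P₀, ∃ J : ℕ,
      (e * (P * d + d) + (P * b + J + e) + 1) * (d * (d - 1)) < b * d * (J * d) ∧
        ∀ Q > 0, e * (d + Q * d) + (b + Q * J) + D < P * Q := by
  obtain ⟨d, rfl⟩ := Nat.exists_eq_add_one_of_ne_zero hd.ne'
  let b := (d + 1) * (e * (d + 1) + 1)
  let C := D + b + 2 * e * (d + 1) + 1
  refine ⟨b, C + (b * (d + 1) * C + (e * (d + 1) + e + 1) * d + 1), fun P hP => ?_⟩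
  obtain ⟨J, rfl⟩ := Nat.exists_eq_add_of_le ((Nat.le_add_right C _).trans hP)
  refine ⟨J, ?_, fun Q hQ => ?_⟩
  · rw [Nat.add_sub_cancel]
    suffices (e * ((C + J) * (d + 1) + (d + 1)) + ((C + J) * b + J + e) + 1) * d <
        b * (d + 1) * J by nlinarith
    have hb : b * (d + 1) = (b + 1 + e * (d + 1)) * d + (e * (d + 1) + 1) := by
      simp only [b]; ring
    have hC : (e * (d + 1) + b) * d * C ≤ b * (d + 1) * C :=
      Nat.mul_le_mul_right C (by rw [hb]; nlinarith)
    have hJ' : J ≤ (e * (d + 1) + 1) * J := Nat.le_mul_of_pos_left J (Nat.succ_pos _)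
    have hbJ : b * (d + 1) * J = ((b + 1 + e * (d + 1)) * d + (e * (d + 1) + 1)) * J :=
      congrArg (· * J) hb
    linarith
  · have hQ' : D + b + e * (d + 1) ≤ (D + b + e * (d + 1)) * Q := Nat.le_mul_of_pos_right _ hQ
    have hC : C * Q = (D + b + 2 * e * (d + 1) + 1) * Q := rfl
    linarith

theorem exists_ne_zero_forall_separable_map {A F : Type*} [CommRing A] [IsDomain A] [Field F]
    [Algebra A F] [IsFractionRing A F] {f : Polynomial A}
    (hdeg : f.natDegree ≠ 0) (hsep : (f.map (algebraMap A F)).Separable) :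
    ∃ Δ : A, Δ ≠ 0 ∧ ∀ {K : Type*} [Field K] (η : A →+* K), η Δ ≠ 0 → (f.map η).Separable := by
  have hinj := IsFractionRing.injective A F
  let Δ := f.resultant (Polynomial.derivative f)
  refine ⟨Δ, fun hΔ => ?_, fun η hη => ?_⟩
  · refine Polynomial.resultant_ne_zero _ _ hsep ?_
    rw [Polynomial.derivative_map, Polynomial.natDegree_map_eq_of_injective hinj,
      Polynomial.natDegree_map_eq_of_injective hinj, Polynomial.resultant_map_map]
    exact (congrArg _ hΔ).trans (map_zero _)
  · obtain ⟨u, v, -, -, huv⟩ := Polynomial.exists_mul_add_mul_eq_C_resultant f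
      (Polynomial.derivative f) le_rfl le_rfl (Or.inl hdeg)
    refine (Polynomial.separable_def' _).2 ⟨Polynomial.C (η Δ)⁻¹ * u.map η,
      Polynomial.C (η Δ)⁻¹ * v.map η, ?_⟩
    have huvη := congrArg (Polynomial.map η) huv
    rw [Polynomial.map_add, Polynomial.map_mul, Polynomial.map_mul, Polynomial.map_C] at huvη
    have hinv : Polynomial.C (η Δ)⁻¹ * Polynomial.C (η Δ) = 1 := by
      rw [← Polynomial.C_mul, inv_mul_cancel₀ hη, Polynomial.C_1]
    rw [Polynomial.derivative_map]
    linear_combination Polynomial.C (η Δ)⁻¹ * huvη + hinv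

theorem dvd_of_separable_of_forall_isRoot {K : Type*} [Field K] [IsAlgClosed K]
    {f p : Polynomial K} (hf : f.Separable) (h : ∀ y, f.IsRoot y → p.IsRoot y) : f ∣ p := by
  rcases eq_or_ne p 0 with rfl | hp
  · exact dvd_zero f
  · refine (IsAlgClosed.splits f).dvd_of_roots_le_roots hf.ne_zero
      ((Multiset.le_iff_subset (Polynomial.nodup_roots hf)).2 fun y hy => ?_)
    exact (Polynomial.mem_roots hp).2 (h y (Polynomial.isRoot_of_mem_roots hy))

theorem dvd_of_forall_aevalAeval_eq_zero {k K : Type*} [Field k] [Field K] [IsAlgClosed K]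
    [Algebra k K] {f p : Polynomial (Polynomial k)} (hf : f.Monic) (S : Finset K)
    (hsep : ∀ x ∈ S, (f.map (Polynomial.aeval x : Polynomial k →ₐ[k] K).toRingHom).Separable)
    (hS : ∀ x ∈ S, ∀ y, aevalAeval x y f = 0 → aevalAeval x y p = 0)
    (hcard : ∀ i, ((p %ₘ f).coeff i).natDegree < S.card) : f ∣ p := by
  rw [← Polynomial.modByMonic_eq_zero_iff_dvd hf]
  ext1 i
  refine (Polynomial.map_eq_zero (algebraMap k K)).1
    (Polynomial.eq_zero_of_natDegree_lt_card_of_eval_eq_zero' _ S (fun x hx => ?_)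
      (Polynomial.natDegree_map_le.trans_lt (hcard i)))
  have hdvd : f.map (Polynomial.aeval x : Polynomial k →ₐ[k] K).toRingHom ∣
      p.map (Polynomial.aeval x : Polynomial k →ₐ[k] K).toRingHom :=
    dvd_of_separable_of_forall_isRoot (hsep x hx) fun y hy => by
      rw [Polynomial.IsRoot, ← aevalAeval_eq_eval_map] at *
      exact hS x hx y hy
  rw [← Polynomial.modByMonic_eq_zero_iff_dvd (hf.map _), ← Polynomial.map_modByMonic _ hf] at hdvd
  simpa using congrArg (Polynomial.coeff · i) hdvd

theorem mem_range_algebraMap_of_pow_card_eq {l K : Type*} [Field l] [Fintype l] [Field K]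
    [Algebra l K] {y : K} (hy : y ^ Fintype.card l = y) : y ∈ Set.range (algebraMap l K) := by
  have hsplits : (Polynomial.X ^ Fintype.card l - Polynomial.X : Polynomial l).Splits := by
    rw [Polynomial.splits_iff_card_roots, FiniteField.roots_X_pow_card_sub_X,
      FiniteField.X_pow_card_sub_X_natDegree_eq l Fintype.one_lt_card, Finset.card_val,
      Finset.card_univ]
  refine hsplits.mem_range_of_isRoot (FiniteField.X_pow_card_sub_X_ne_zero l Fintype.one_lt_card) ?_
  simp [hy]

end Points

section Curves

open Polynomial (aevalAeval)

theorem natDegree_stepanovPoly_le {k : Type*} [Field k] {b d J : ℕ} (Q : ℕ)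
    (c : (Fin b × Fin d) × (Fin J × Fin d) → k) : (stepanovPoly Q c).natDegree ≤ d + Q * d :=
  Polynomial.natDegree_sum_le_of_forall_le _ _ fun i _ =>
    (Polynomial.natDegree_monomial_le _).trans
      (add_le_add i.1.2.2.le (Nat.mul_le_mul_left Q i.2.2.2.le))

theorem natDegree_coeff_stepanovPoly_le {k : Type*} [Field k] {b d J : ℕ} (Q : ℕ)
    (c : (Fin b × Fin d) × (Fin J × Fin d) → k) (r : ℕ) :
    ((stepanovPoly Q c).coeff r).natDegree ≤ b + Q * J := by
  rw [stepanovPoly, Polynomial.finsetSum_coeff]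
  refine Polynomial.natDegree_sum_le_of_forall_le _ _ fun i _ => ?_
  rw [Polynomial.coeff_monomial]
  split_ifs
  · exact (Polynomial.natDegree_monomial_le _).trans
      (add_le_add i.1.1.2.le (Nat.mul_le_mul_left Q i.2.1.2.le))
  · simp

variable {k : Type*} [Field k]

theorem card_le_card_filter_aeval_ne_zero_add {l : Type*} [Field l] [Fintype l] [DecidableEq l]
    [Algebra k l] {G : Polynomial k} (hG : G ≠ 0) :
    Fintype.card l ≤
      (Finset.univ.filter fun x : l => Polynomial.aeval x G ≠ 0).card + G.natDegree := by
  have hsub : (Finset.univ.filter fun x : l => ¬ Polynomial.aeval x G ≠ 0) ⊆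
      (G.map (algebraMap k l)).roots.toFinset := fun x hx => by
    simpa [hG, Polynomial.aeval_def, Polynomial.eval_map] using hx
  have hle := (Finset.card_le_card hsub).trans ((Multiset.toFinset_card_le _).trans
    ((Polynomial.card_roots' _).trans Polynomial.natDegree_map_le))
  rw [← Finset.card_univ, ← Finset.card_filter_add_card_filter_not
    (s := Finset.univ) fun x : l => Polynomial.aeval x G ≠ 0]
  exact Nat.add_le_add_left hle _

-- The relation is found in the ring of functions on the set of all points over `S`.
theorem exists_forall_aevalAeval_stepanovPoly_eq_zero [Fintype k] {l Ω : Type*} [Field l]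
    [Algebra k l] [FiniteDimensional k l] [Field Ω] [Algebra k Ω] [Algebra l Ω]
    [IsScalarTower k l Ω] {f : Polynomial (Polynomial k)} (hf : f.Monic) {e : ℕ}
    (he : ∀ i, (f.coeff i).natDegree ≤ e) {S : Set l} (hS : ∀ x ∈ S, ∀ y, aevalAeval x y f ≠ 0)
    {P m s : ℕ} (hP : P = Fintype.card k ^ m) (hms : m + s = Module.finrank k l) {b J : ℕ}
    (hcard : (e * (P * f.natDegree + f.natDegree) + (P * b + J + e) + 1) *
      (f.natDegree * (f.natDegree - 1)) < b * f.natDegree * (J * f.natDegree)) :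
    ∃ c : (Fin b × Fin f.natDegree) × (Fin J × Fin f.natDegree) → k, c ≠ 0 ∧
      ∀ x ∈ S, ∀ y : Ω, aevalAeval (algebraMap l Ω x) y f = 0 →
        aevalAeval (algebraMap l Ω x) y (stepanovPoly (Fintype.card k ^ s) c) = 0 := by
  have : Finite l := Module.finite_of_finite k
  let _ := Fintype.ofFinite l
  have hl : Fintype.card l = P * Fintype.card k ^ s := by
    rw [Module.card_eq_pow_finrank (K := k), ← hms, pow_add, hP]
  let T := {pt : S × Ω // aevalAeval (algebraMap l Ω pt.1) pt.2 f = 0}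
  let x : T → Ω := fun pt => algebraMap l Ω pt.1.1
  let y : T → Ω := fun pt => pt.1.2
  have eval_apply (p : Polynomial (Polynomial k)) (pt : T) :
      aevalAeval x y p pt = aevalAeval (x pt) (y pt) p :=
    map_aevalAeval (Pi.evalAlgHom k (fun _ : T => Ω) pt) x y p
  have hx : x ^ (P * Fintype.card k ^ s) = x := funext fun pt => by
    rw [← hl, Pi.pow_apply, ← map_pow, FiniteField.pow_card]
  have hxy : aevalAeval x y f = 0 := funext fun pt => (eval_apply f pt).trans pt.2
  have hy : IsUnit (y ^ (P * Fintype.card k ^ s) - y) := Pi.isUnit_iff.2 fun pt => by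
    rw [isUnit_iff_ne_zero, Pi.sub_apply, Pi.pow_apply, ← hl, sub_ne_zero]
    intro hfix
    obtain ⟨y₀, hy₀⟩ := mem_range_algebraMap_of_pow_card_eq hfix
    refine hS pt.1.1 pt.1.1.2 y₀ ((algebraMap l Ω).injective ?_)
    rw [map_zero]
    exact (map_aevalAeval (IsScalarTower.toAlgHom k l Ω) _ _ f).trans
      ((congrArg (aevalAeval _ · f) hy₀).trans pt.2)
  obtain ⟨c, hc, hzero⟩ := exists_aevalAeval_stepanovPoly_eq_zero hf he hP rfl hx hxy hy hcard
  refine ⟨c, hc, fun a ha w hw => ?_⟩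
  rw [← eval_apply _ ⟨(⟨a, ha⟩, w), hw⟩, hzero, Pi.zero_apply]

theorem exists_forall_natDegree_coeff_le (f : Polynomial (Polynomial k)) :
    ∃ e, ∀ i, (f.coeff i).natDegree ≤ e := by
  refine ⟨f.support.sup fun i => (f.coeff i).natDegree, fun i => ?_⟩
  by_cases hi : i ∈ f.support
  · exact Finset.le_sup (f := fun i => (f.coeff i).natDegree) hi
  · simp [Polynomial.notMem_support_iff.1 hi]

theorem separable_map_fractionRing {K : Type*} [Field K] [Algebra k K]
    {f : Polynomial (Polynomial k)} (hf : f.Monic)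
    (hirr : Irreducible (f.map (Polynomial.mapRingHom (algebraMap k K))))
    (hder : Polynomial.derivative f ≠ 0) :
    (f.map (algebraMap (Polynomial k) (FractionRing (Polynomial k)))).Separable := by
  have hirrk := (hf.irreducible_iff_irreducible_map_fraction_map
    (K := FractionRing (Polynomial k))).1 (hf.irreducible_of_irreducible_map _ _ hirr)
  rw [Polynomial.separable_iff_derivative_ne_zero hirrk, Polynomial.derivative_map]
  exact (Polynomial.map_ne_zero_iff (IsFractionRing.injective _ _)).2 hder

variable [Finite k]

theorem exists_aevalAeval_eq_zero_of_derivative_ne_zero {K : Type*} [Field K] [IsAlgClosed K]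
    [Algebra k K] {f : Polynomial (Polynomial k)} (hf : f.Monic)
    (hirr : Irreducible (f.map (Polynomial.mapRingHom (algebraMap k K))))
    (hder : Polynomial.derivative f ≠ 0) {B : Polynomial k} (hB : B ≠ 0) :
    ∃ N, ∀ (l : Type*) [Field l] [Algebra k l] [FiniteDimensional k l],
      N ≤ Module.finrank k l →
        ∃ x y : l, Polynomial.aeval x B ≠ 0 ∧ aevalAeval x y f = 0 := by
  classical
  let _ := Fintype.ofFinite k
  have hdeg : f.natDegree ≠ 0 := fun h => hder (Polynomial.derivative_of_natDegree_zero h)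
  obtain ⟨Δ, hΔ, hsepΔ⟩ :=
    exists_ne_zero_forall_separable_map hdeg (separable_map_fractionRing hf hirr hder)
  obtain ⟨e, he⟩ := exists_forall_natDegree_coeff_le f
  obtain ⟨b, P₀, hparam⟩ :=
    exists_stepanov_parameters (Nat.pos_of_ne_zero hdeg) e (Δ * B).natDegree
  obtain ⟨s, hs⟩ := exists_eq_zero_of_dvd_stepanovPoly K hf hirr hder b
  refine ⟨P₀ + s, fun l _ _ _ hN => ?_⟩
  by_contra! hnone
  obtain ⟨m, hm⟩ := Nat.exists_eq_add_of_le' ((Nat.le_add_left s P₀).trans hN)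
  have hP : P₀ ≤ Fintype.card k ^ m :=
    (show P₀ ≤ m by omega).trans (Nat.lt_pow_self Fintype.one_lt_card).le
  obtain ⟨J, hcard, hlt⟩ := hparam _ hP
  obtain ⟨c, hc, hzero⟩ := exists_forall_aevalAeval_stepanovPoly_eq_zero
    (Ω := AlgebraicClosure l) (S := {x : l | Polynomial.aeval x (Δ * B) ≠ 0}) hf he
    (fun x hx y => hnone x y (right_ne_zero_of_mul (by simpa using hx))) rfl hm.symm hcard
  have : Finite l := Module.finite_of_finite k
  let _ := Fintype.ofFinite l
  let S := Finset.univ.filter fun x : l => Polynomial.aeval x (Δ * B) ≠ 0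
  refine hc (hs J c (dvd_of_forall_aevalAeval_eq_zero hf
    (S.map ⟨_, (algebraMap l (AlgebraicClosure l)).injective⟩) ?_ ?_ fun i => ?_))
  · refine (Finset.forall_mem_map).2 fun x hx => hsepΔ _ ?_
    have hΔx := left_ne_zero_of_mul (map_mul (Polynomial.aeval x) Δ B ▸ (Finset.mem_filter.1 hx).2)
    simpa [Polynomial.aeval_algebraMap_apply] using hΔx
  · exact (Finset.forall_mem_map).2 fun x hx => hzero x (Finset.mem_filter.1 hx).2
  · have hdegψ := natDegree_coeff_modByMonic_le
      (natDegree_coeff_stepanovPoly_le (Fintype.card k ^ s) c) he i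
    have hSD : Fintype.card l ≤ S.card + (Δ * B).natDegree :=
      card_le_card_filter_aeval_ne_zero_add (mul_ne_zero hΔ hB)
    rw [Module.card_eq_pow_finrank (K := k), hm, pow_add] at hSD
    have hltQ := hlt _ (pow_pos (Fintype.card_pos (α := k)) s)
    have hnat := Nat.mul_le_mul_left e (natDegree_stepanovPoly_le (Fintype.card k ^ s) c)
    rw [Finset.card_map]
    omega

theorem exists_expand_eq_of_derivative_eq_zero {R S : Type*} [CommRing R] [IsDomain R] [CommRing S]
    [IsDomain S] (φ : R →+* S) {p : ℕ} [CharP R p] (hp : p.Prime) {f : Polynomial R} (hf : f.Monic)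
    (hirr : Irreducible (f.map φ)) (hder : Polynomial.derivative f = 0) :
    ∃ g : Polynomial R, g.Monic ∧ Irreducible (g.map φ) ∧ g.natDegree < f.natDegree ∧
      Polynomial.expand R p g = f := by
  let g := Polynomial.contract p f
  have hexp : Polynomial.expand R p g = f := Polynomial.expand_contract p hder hp.ne_zero
  have hg : g.Monic := by rwa [← hexp, Polynomial.monic_expand_iff hp.pos] at hf
  have hgirr : Irreducible (g.map φ) := by
    rw [← hexp, Polynomial.map_expand] at hirr
    exact Polynomial.of_irreducible_expand hp.ne_zero hirr
  have hpos : 0 < g.natDegree :=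
    hg.natDegree_map φ ▸ (hg.map _).natDegree_pos_of_not_isUnit hgirr.not_isUnit
  refine ⟨g, hg, hgirr, ?_, hexp⟩
  rw [← hexp, Polynomial.natDegree_expand]
  exact lt_mul_of_one_lt_right hpos hp.one_lt

theorem exists_aevalAeval_eq_zero {K : Type*} [Field K] [IsAlgClosed K]
    [Algebra k K] {f : Polynomial (Polynomial k)} (hf : f.Monic)
    (hirr : Irreducible (f.map (Polynomial.mapRingHom (algebraMap k K))))
    {B : Polynomial k} (hB : B ≠ 0) :
    ∃ N, ∀ (l : Type*) [Field l] [Algebra k l] [FiniteDimensional k l],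
      N ≤ Module.finrank k l →
        ∃ x y : l, Polynomial.aeval x B ≠ 0 ∧ aevalAeval x y f = 0 := by
  obtain ⟨p, _⟩ := CharP.exists k
  have hp : p.Prime := CharP.char_is_prime k p
  have : Fact p.Prime := ⟨hp⟩
  induction hn : f.natDegree using Nat.strong_induction_on generalizing f with | _ n ih
  by_cases hder : Polynomial.derivative f = 0
  · -- Then `f = g(x, y ^ p)`, and `p`-th roots exist in finite fields.
    obtain ⟨g, hg, hgirr, hlt, hexp⟩ :=
      exists_expand_eq_of_derivative_eq_zero _ hp hf hirr hder
    obtain ⟨N, hN⟩ := ih _ (hn ▸ hlt) hg hgirr rfl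
    refine ⟨N, fun l _ _ _ hl => ?_⟩
    obtain ⟨x, y, hx, hxy⟩ := hN l hl
    have : Finite l := Module.finite_of_finite k
    have : CharP l p := charP_of_injective_algebraMap' k p
    obtain ⟨z, rfl⟩ := (bijective_frobenius l p).2 y
    refine ⟨x, z, hx, ?_⟩
    rw [← hxy, ← hexp]
    simp [frobenius_def]
  · exact exists_aevalAeval_eq_zero_of_derivative_ne_zero hf hirr hder hB

end Curves

section Homogeneous

theorem aeval_smul_of_isHomogeneous {σ R A : Type*} [CommSemiring R] [CommSemiring A]
    [Algebra R A] {p : MvPolynomial σ R} {m : ℕ} (hp : p.IsHomogeneous m) (c : A) (a : σ → A) :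
    aeval (c • a) p = c ^ m * aeval a p := by
  simp only [aeval_def, eval₂_eq, Pi.smul_apply, smul_eq_mul, mul_pow, Finset.prod_mul_distrib,
    Finset.prod_pow_eq_pow_sum, Finset.mul_sum]
  refine Finset.sum_congr rfl fun d hd => ?_
  rw [show ∑ i ∈ d.support, d i = m from hp.degree_eq_sum_deg_support hd |>.symm]
  ring

theorem coeff_aeval_X_mul_C_X {σ R : Type*} [CommSemiring R] (p : MvPolynomial σ R) (n : ℕ) :
    (aeval (fun i => Polynomial.X * Polynomial.C (X i)) p :
      Polynomial (MvPolynomial σ R)).coeff n = homogeneousComponent n p := by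
  have hC (q : MvPolynomial σ R) :
      aeval (fun i => Polynomial.C (X i)) q = (Polynomial.C q : Polynomial (MvPolynomial σ R)) := by
    simpa using! aeval_algebraMap_apply (Polynomial (MvPolynomial σ R))
      (X : σ → MvPolynomial σ R) q
  have hmonomial (i : ℕ) : aeval (fun i => Polynomial.X * Polynomial.C (X i))
      (homogeneousComponent i p) = Polynomial.monomial i (homogeneousComponent i p) := by
    rw [← Polynomial.C_mul_X_pow_eq_monomial, ← hC, mul_comm]
    exact aeval_smul_of_isHomogeneous (homogeneousComponent_isHomogeneous i p) _ _
  nth_rw 1 [← sum_homogeneousComponent p]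
  simp only [map_sum, hmonomial, Polynomial.finsetSum_coeff, Polynomial.coeff_monomial,
    Finset.sum_ite_eq', Finset.mem_range, Nat.lt_succ_iff, ite_eq_left_iff, not_le]
  exact fun hn => (homogeneousComponent_eq_zero n p hn).symm

theorem exists_isHomogeneous_of_dvd {σ R : Type*} [CommRing R] [IsDomain R]
    {p q : MvPolynomial σ R} {n : ℕ} (hq : q.IsHomogeneous n) (hq0 : q ≠ 0) (h : p ∣ q) :
    ∃ m, p.IsHomogeneous m := by
  let Φ : MvPolynomial σ R →ₐ[R] Polynomial (MvPolynomial σ R) :=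
    aeval fun i => Polynomial.X * Polynomial.C (X i)
  have hΦq : Φ q = Polynomial.monomial n q := by
    ext1 i
    rw [coeff_aeval_X_mul_C_X, homogeneousComponent_of_mem hq, Polynomial.coeff_monomial]
    simp only [eq_comm]
  obtain ⟨r, rfl⟩ := h
  have hne : Φ p * Φ r ≠ 0 := by rwa [← map_mul, hΦq, Ne, Polynomial.monomial_eq_zero_iff]
  have hdeg := Polynomial.natDegree_mul (left_ne_zero_of_mul hne) (right_ne_zero_of_mul hne)
  have htrailing :=
    Polynomial.natTrailingDegree_mul (left_ne_zero_of_mul hne) (right_ne_zero_of_mul hne)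
  rw [← map_mul, hΦq, Polynomial.natDegree_monomial_eq _ hq0] at hdeg
  rw [← map_mul, hΦq, Polynomial.natTrailingDegree_monomial hq0] at htrailing
  have hler := (Φ r).natTrailingDegree_le_natDegree
  refine ⟨(Φ p).natDegree, fun d hd => ?_⟩
  have hcoeff : (Φ p).coeff d.degree ≠ 0 := fun h => hd <| by
    rw [coeff_aeval_X_mul_C_X] at h
    simpa [coeff_homogeneousComponent] using congrArg (coeff d) h
  have hle := Polynomial.le_natDegree_of_ne_zero hcoeff
  have hge := Polynomial.natTrailingDegree_le_of_ne_zero hcoeff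
  have hweight : Finsupp.weight 1 d = d.degree :=
    (DFunLike.congr_fun Finsupp.degree_eq_weight_one d).symm
  omega

/-- The dehomogenisation `f(x, y) = p(y, x, 1)` of a ternary form, as a polynomial in `y` over
`R[x]`. The first variable is the one that becomes the outer one. -/
noncomputable def dehomogenize (R : Type*) [CommSemiring R] :
    MvPolynomial (Fin 3) R →ₐ[R] Polynomial (Polynomial R) :=
  aeval ![Polynomial.X, Polynomial.C Polynomial.X, 1]

theorem aevalAeval_dehomogenize {R A : Type*} [CommSemiring R] [CommSemiring A] [Algebra R A]
    (x y : A) (p : MvPolynomial (Fin 3) R) :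
    Polynomial.aevalAeval x y (dehomogenize R p) = aeval ![y, x, 1] p := by
  rw [← AlgHom.comp_apply]
  congr 1
  ext i
  fin_cases i <;> simp [dehomogenize]

theorem map_dehomogenize {R S : Type*} [CommSemiring R] [CommSemiring S] (φ : R →+* S)
    (p : MvPolynomial (Fin 3) R) :
    (dehomogenize R p).map (Polynomial.mapRingHom φ) = dehomogenize S (map φ p) := by
  induction p using MvPolynomial.induction_on with
  | C a => simp [dehomogenize]
  | add p q hp hq => simp [hp, hq]
  | mul_X p i hp =>
    simp only [map_mul, Polynomial.map_mul, hp, map_X]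
    congr 1
    fin_cases i <;> simp [dehomogenize]

theorem finSuccEquiv_map {R S : Type*} [CommSemiring R] [CommSemiring S] (φ : R →+* S) (n : ℕ)
    (p : MvPolynomial (Fin (n + 1)) R) :
    finSuccEquiv S n (map φ p) = (finSuccEquiv R n p).map (map φ) := by
  ext i m
  simp [finSuccEquiv_coeff_coeff, coeff_map]

theorem finSuccEquiv_X_one (R : Type*) [CommSemiring R] (n : ℕ) :
    finSuccEquiv R (n + 1) (X 1) = Polynomial.C (X 0) :=
  finSuccEquiv_X_succ (j := 0)

theorem finSuccEquiv_X_two (R : Type*) [CommSemiring R] (n : ℕ) :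
    finSuccEquiv R (n + 2) (X 2) = Polynomial.C (X 1) :=
  finSuccEquiv_X_succ (j := 1)

theorem dehomogenize_eq_map_finSuccEquiv {R : Type*} [CommSemiring R]
    (p : MvPolynomial (Fin 3) R) :
    dehomogenize R p = (finSuccEquiv R 2 p).map
      (aeval ![Polynomial.X, 1] : MvPolynomial (Fin 2) R →ₐ[R] Polynomial R).toRingHom := by
  induction p using MvPolynomial.induction_on with
  | C a => simp [dehomogenize, finSuccEquiv_apply]
  | add p q hp hq => simp [hp, hq]
  | mul_X p i hp =>
    simp only [map_mul, Polynomial.map_mul, hp]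
    congr 1
    fin_cases i <;>
      simp [dehomogenize, finSuccEquiv_X_zero, finSuccEquiv_X_one, finSuccEquiv_X_two]

theorem monic_dehomogenize {R : Type*} [CommSemiring R] {p : MvPolynomial (Fin 3) R}
    (hp : (finSuccEquiv R 2 p).Monic) : (dehomogenize R p).Monic := by
  rw [dehomogenize_eq_map_finSuccEquiv]
  exact hp.map _

theorem irreducible_dehomogenize {K : Type*} [Field K] {p : MvPolynomial (Fin 3) K} {m : ℕ}
    (hp : p.IsHomogeneous m) (hmonic : (finSuccEquiv K 2 p).Monic) (hirr : Irreducible p) :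
    Irreducible (dehomogenize K p) := by
  let F := FractionRing (MvPolynomial (Fin 2) K)
  let x : F := algebraMap _ F (X 0 : MvPolynomial (Fin 2) K)
  let z : F := algebraMap _ F (X 1 : MvPolynomial (Fin 2) K)
  have hz : z ≠ 0 := (map_ne_zero_iff _ (IsFractionRing.injective _ F)).2 (X_ne_zero 1)
  let _ : Invertible z := invertibleOfNonzero hz
  let ψ : Polynomial K →ₐ[K] F := Polynomial.aeval (x / z)
  let σ : Polynomial F ≃ₐ[F] Polynomial F := Polynomial.algEquivCMulXAddC z 0
  have hψ : (dehomogenize K p).map ψ.toRingHom =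
      aeval (![Polynomial.X, Polynomial.C (x / z), 1] : Fin 3 → Polynomial F) p := by
    have hcomp : (Polynomial.mapAlgHom ψ).comp (dehomogenize K) =
        aeval (![Polynomial.X, Polynomial.C (x / z), 1] : Fin 3 → Polynomial F) := by
      ext1 i
      fin_cases i <;> simp [dehomogenize, ψ]
    exact DFunLike.congr_fun hcomp p
  have hσ : σ ((finSuccEquiv K 2 p).map (algebraMap _ F)) =
      aeval (Polynomial.C z • ![Polynomial.X, Polynomial.C (x / z), 1]) p := by
    have hcomp : ((σ.toAlgHom.restrictScalars K).comp
        (Polynomial.mapAlgHom (IsScalarTower.toAlgHom K _ F))).comp (finSuccEquiv K 2).toAlgHom =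
          aeval (Polynomial.C z • ![Polynomial.X, Polynomial.C (x / z), 1]) := by
      ext1 i
      fin_cases i
      · simp [finSuccEquiv_X_zero, σ]
      · simp [finSuccEquiv_X_one, σ, ← Polynomial.C_mul, mul_div_cancel₀ _ hz, x]
      · simp [finSuccEquiv_X_two, σ, z]
    exact DFunLike.congr_fun hcomp p
  have hirrσ := (MulEquiv.irreducible_iff σ).2
    ((hmonic.irreducible_iff_irreducible_map_fraction_map (K := F)).1
      ((MulEquiv.irreducible_iff (finSuccEquiv K 2)).2 hirr))
  rw [hσ, aeval_smul_of_isHomogeneous hp, ← hψ,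
    irreducible_isUnit_mul ((Polynomial.isUnit_C.2 hz.isUnit).pow m)] at hirrσ
  exact (monic_dehomogenize hmonic).irreducible_of_irreducible_map ψ.toRingHom _ hirrσ

theorem exists_monic_finSuccEquiv_C_mul {K : Type*} [Field K] {n : ℕ}
    {p q : MvPolynomial (Fin (n + 1)) K} (hq : (finSuccEquiv K n q).Monic) (hpq : p ∣ q) :
    ∃ r : K, r ≠ 0 ∧ (finSuccEquiv K n (C r * p)).Monic := by
  obtain ⟨h, rfl⟩ := hpq
  have hlead : (finSuccEquiv K n p).leadingCoeff * (finSuccEquiv K n h).leadingCoeff = 1 := by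
    rwa [← Polynomial.leadingCoeff_mul, ← map_mul]
  obtain ⟨r, hr, hlead_eq⟩ := isUnit_iff_eq_C_of_isReduced.1 (IsUnit.of_mul_eq_one _ hlead)
  refine ⟨r⁻¹, inv_ne_zero hr.ne_zero, ?_⟩
  rw [Polynomial.Monic, map_mul, Polynomial.leadingCoeff_mul, hlead_eq]
  simp [finSuccEquiv_apply, ← C_mul, hr.ne_zero]

theorem exists_aeval_eq_zero_of_isHomogeneous {k K : Type*} [Field k] [Finite k] [Field K]
    [IsAlgClosed K] [Algebra k K] {p : MvPolynomial (Fin 3) k} {m : ℕ} (hp : p.IsHomogeneous m)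
    (hmonic : (finSuccEquiv k 2 p).Monic) (hirr : Irreducible (map (algebraMap k K) p))
    {B : Polynomial k} (hB : B ≠ 0) :
    ∃ N, ∀ (l : Type*) [Field l] [Algebra k l] [FiniteDimensional k l],
      N ≤ Module.finrank k l → ∃ x y : l, Polynomial.aeval x B ≠ 0 ∧ aeval ![y, x, 1] p = 0 := by
  have hirr_dehomogenize : Irreducible
      ((dehomogenize k p).map (Polynomial.mapRingHom (algebraMap k K))) := by
    rw [map_dehomogenize]
    refine irreducible_dehomogenize (hp.map _) ?_ hirr
    rw [finSuccEquiv_map]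
    exact hmonic.map _
  simpa only [aevalAeval_dehomogenize] using
    exists_aevalAeval_eq_zero (monic_dehomogenize hmonic) hirr_dehomogenize hB

end Homogeneous

section PowerSums

theorem natCast_eq_one_of_odd {R : Type*} [CommRing R] [CharP R 2] {t : ℕ} (ht : Odd t) :
    (t : R) = 1 :=
  (CharTwo.natCast_eq_ite t).trans (if_neg (Nat.not_even_iff_odd.2 ht))

theorem leadingCoeff_X_pow_add_X_add_C_pow {R : Type*} [CommRing R] [CharP R 2] {t : ℕ}
    (ht : 1 < t) (htodd : Odd t) (c : R) {w : R} (hw : w ≠ 0) :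
    (Polynomial.X ^ t + Polynomial.C c + (Polynomial.X + Polynomial.C w) ^ t).leadingCoeff = w := by
  have hcoeff {i : ℕ} (hi : 0 < i) :
      (Polynomial.X ^ t + Polynomial.C c + (Polynomial.X + Polynomial.C w) ^ t).coeff i =
        (if i = t then 1 else 0) + w ^ (t - i) * t.choose i := by
    simp [Polynomial.coeff_X_add_C_pow, Polynomial.coeff_X_pow,
      Polynomial.coeff_C_of_ne_zero hi.ne']
  have hcoeff_pred : (Polynomial.X ^ t + Polynomial.C c +
      (Polynomial.X + Polynomial.C w) ^ t).coeff (t - 1) = w := by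
    rw [hcoeff (by omega), if_neg (by omega), Nat.choose_symm (by omega : 1 ≤ t),
      Nat.choose_one_right, natCast_eq_one_of_odd htodd, Nat.sub_sub_self ht.le]
    ring
  have hdegree : (Polynomial.X ^ t + Polynomial.C c +
      (Polynomial.X + Polynomial.C w) ^ t).natDegree = t - 1 := by
    refine Polynomial.natDegree_eq_of_le_of_coeff_ne_zero
      (Polynomial.natDegree_le_iff_coeff_eq_zero.2 fun i hi => ?_) (by rwa [hcoeff_pred])
    rw [hcoeff (by omega)]
    obtain rfl | hti : i = t ∨ t < i := by omega
    · simp [CharTwo.add_self_eq_zero]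
    · simp [hti.ne', Nat.choose_eq_zero_of_lt hti]
  rw [Polynomial.leadingCoeff, hdegree, hcoeff_pred]

theorem X_add_X_ne_zero {σ R : Type*} [CommSemiring R] [Nontrivial R] {i j : σ} (hij : i ≠ j) :
    (X i + X j : MvPolynomial σ R) ≠ 0 := fun h => by
  classical
  simpa [hij.symm] using congrArg (eval (Pi.single i 1)) h

theorem monic_finSuccEquiv_of_mul_eq {R : Type*} [CommRing R] [IsDomain R] [CharP R 2] {t : ℕ}
    (ht : 1 < t) (htodd : Odd t) {g : MvPolynomial (Fin 3) R}
    (hg : (X 0 + X 1) * (X 0 + X 2) * (X 1 + X 2) * g =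
      X 0 ^ t + X 1 ^ t + X 2 ^ t + (X 0 + X 1 + X 2) ^ t) :
    (finSuccEquiv R 2 g).Monic := by
  have hw : (X 0 + X 1 : MvPolynomial (Fin 2) R) ≠ 0 := X_add_X_ne_zero Fin.zero_ne_one
  have hlead := leadingCoeff_X_pow_add_X_add_C_pow ht htodd (X 0 ^ t + X 1 ^ t) hw
  have hrhs : Polynomial.X ^ t + Polynomial.C (X 0 ^ t + X 1 ^ t) +
      (Polynomial.X + Polynomial.C (X 0 + X 1)) ^ t =
        finSuccEquiv R 2 (X 0 ^ t + X 1 ^ t + X 2 ^ t + (X 0 + X 1 + X 2) ^ t) := by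
    simp [finSuccEquiv_X_zero, finSuccEquiv_X_one, finSuccEquiv_X_two, add_assoc]
  rw [hrhs, ← hg] at hlead
  rw [map_mul, map_mul, map_mul, map_add, map_add, map_add, finSuccEquiv_X_zero,
    finSuccEquiv_X_one, finSuccEquiv_X_two, ← Polynomial.C_add] at hlead
  simp only [Polynomial.leadingCoeff_mul, Polynomial.leadingCoeff_X_add_C,
    Polynomial.leadingCoeff_C, one_mul] at hlead
  exact mul_left_cancel₀ hw (hlead.trans (mul_one _).symm)

theorem isHomogeneous_powerSum (R : Type*) [CommSemiring R] (t : ℕ) :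
    (X 0 ^ t + X 1 ^ t + X 2 ^ t + (X 0 + X 1 + X 2) ^ t :
      MvPolynomial (Fin 3) R).IsHomogeneous t := by
  have hX (i : Fin 3) : (X i : MvPolynomial (Fin 3) R).IsHomogeneous 1 := isHomogeneous_X R i
  simpa using ((((hX 0).pow t).add ((hX 1).pow t)).add ((hX 2).pow t)).add
    ((((hX 0).add (hX 1)).add (hX 2)).pow t)

theorem isHomogeneous_of_dvd_of_mul_eq {R : Type*} [CommRing R] [IsDomain R] [CharP R 2] {t : ℕ}
    {g p : MvPolynomial (Fin 3) R} (hg0 : g ≠ 0)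
    (hg : (X 0 + X 1) * (X 0 + X 2) * (X 1 + X 2) * g =
      X 0 ^ t + X 1 ^ t + X 2 ^ t + (X 0 + X 1 + X 2) ^ t) (hpg : p ∣ g) :
    ∃ m, p.IsHomogeneous m := by
  refine exists_isHomogeneous_of_dvd (isHomogeneous_powerSum R t) ?_ (hg ▸ hpg.mul_left _)
  rw [← hg]
  exact mul_ne_zero (mul_ne_zero (mul_ne_zero (X_add_X_ne_zero (by decide))
    (X_add_X_ne_zero (by decide))) (X_add_X_ne_zero (by decide))) hg0

theorem pairwise_ne_of_aeval_eq_zero {k S : Type*} [CommRing k] [CommRing S] [Algebra k S]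
    [CharP S 2] {t : ℕ} (htodd : Odd t) {g : MvPolynomial (Fin 3) k}
    (hg : (X 0 + X 1) * (X 0 + X 2) * (X 1 + X 2) * g =
      X 0 ^ t + X 1 ^ t + X 2 ^ t + (X 0 + X 1 + X 2) ^ t)
    {α β γ : S} (hzero : aeval ![α, β, γ] g = 0) (hpow : β ^ (t - 1) ≠ γ ^ (t - 1)) :
    α ≠ β ∧ α ≠ γ ∧ β ≠ γ := by
  -- Since `g` vanishes at the point, only the term with `∂g` survives in the Leibniz rule.
  have hderiv : (α + β) * (α + γ) * (β + γ) * aeval ![α, β, γ] (pderiv 0 g) =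
      α ^ (t - 1) + (α + β + γ) ^ (t - 1) := by
    have h := congrArg (fun q => aeval ![α, β, γ] (pderiv 0 q)) hg
    simpa [Derivation.leibniz, Derivation.leibniz_pow, pderiv_X, hzero,
      natCast_eq_one_of_odd htodd] using h
  refine ⟨?_, ?_, fun h => hpow (h ▸ rfl)⟩
  · rintro rfl
    rw [CharTwo.add_self_eq_zero, zero_mul, zero_mul, zero_mul, zero_add] at hderiv
    exact hpow (CharTwo.add_eq_zero.1 hderiv.symm)
  · rintro rfl
    rw [CharTwo.add_self_eq_zero, mul_zero, zero_mul, zero_mul, add_right_comm,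
      CharTwo.add_self_eq_zero, zero_add] at hderiv
    exact hpow (CharTwo.add_eq_zero.1 hderiv.symm).symm

end PowerSums

theorem stmt_2_general {k K : Type*} [Field k] [Finite k] [CharP k 2] [Field K] [IsAlgClosed K]
    [Algebra k K] {t : ℕ} (ht : 3 ≤ t) (htodd : Odd t) {g : MvPolynomial (Fin 3) k}
    (hg : (X 0 + X 1) * (X 0 + X 2) * (X 1 + X 2) * g =
      X 0 ^ t + X 1 ^ t + X 2 ^ t + (X 0 + X 1 + X 2) ^ t)
    (hfac : ∃ p : MvPolynomial (Fin 3) k, p ∣ g ∧ Irreducible (map (algebraMap k K) p)) :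
    ∃ N : ℕ, ∀ (l : Type*) [Field l] [Algebra k l] [FiniteDimensional k l],
      N ≤ Module.finrank k l →
        ∃ α β γ : l, α ≠ β ∧ α ≠ γ ∧ β ≠ γ ∧ aeval ![α, β, γ] g = 0 := by
  obtain ⟨p, hpg, hirr⟩ := hfac
  have hmonic := monic_finSuccEquiv_of_mul_eq (by omega) htodd hg
  obtain ⟨r, hr, hmonic_p⟩ := exists_monic_finSuccEquiv_C_mul hmonic hpg
  have hunit : IsUnit (C r : MvPolynomial (Fin 3) k) := (isUnit_iff_ne_zero.2 hr).map C
  obtain ⟨m, hp⟩ := isHomogeneous_of_dvd_of_mul_eq (by rintro rfl; simp at hmonic) hg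
    (hunit.mul_left_dvd.2 hpg)
  have hirr' : Irreducible (map (algebraMap k K) (C r * p)) := by
    rw [map_mul]
    exact (irreducible_isUnit_mul (hunit.map _)).2 hirr
  obtain ⟨N, hN⟩ := exists_aeval_eq_zero_of_isHomogeneous hp hmonic_p hirr'
    (Polynomial.X_pow_sub_C_ne_zero (show 0 < t - 1 by omega) 1)
  refine ⟨N, fun l _ _ _ hl => ?_⟩
  obtain ⟨x, y, hx, hzero⟩ := hN l hl
  have : CharP l 2 := charP_of_injective_algebraMap (algebraMap k l).injective 2
  have hgzero := zero_dvd_iff.1 (hzero ▸ map_dvd (aeval ![y, x, 1]) (hunit.mul_left_dvd.2 hpg))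
  have hpow : x ^ (t - 1) ≠ 1 ^ (t - 1) := by simpa [sub_eq_zero] using hx
  obtain ⟨hαβ, hαγ, hβγ⟩ := pairwise_ne_of_aeval_eq_zero htodd hg hgzero hpow
  exact ⟨y, x, 1, hαβ, hαγ, hβγ, hgzero⟩

/-- If `g_t(x,y,z) = (x^t + y^t + z^t + (x+y+z)^t)/((x+y)(x+z)(y+z))` has an absolutely
irreducible factor defined over `𝔽₂`, then for all sufficiently large `n` it has a rational
point over `𝔽_{2^n}` with pairwise distinct coordinates. -/
theorem stmt_2 (t : ℕ) (ht : 3 ≤ t) (htodd : Odd t)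
    (g : MvPolynomial (Fin 3) (ZMod 2))
    (hg : (X 0 + X 1) * (X 0 + X 2) * (X 1 + X 2) * g =
      X 0 ^ t + X 1 ^ t + X 2 ^ t + (X 0 + X 1 + X 2) ^ t)
    (hfac : ∃ p : MvPolynomial (Fin 3) (ZMod 2), p ∣ g ∧
      Irreducible (MvPolynomial.map (algebraMap (ZMod 2) (AlgebraicClosure (ZMod 2))) p)) :
    ∃ N : ℕ, ∀ n ≥ N, ∃ α β γ : GaloisField 2 n,
      α ≠ β ∧ α ≠ γ ∧ β ≠ γ ∧ (MvPolynomial.aeval ![α, β, γ]) g = 0 := by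
  obtain ⟨N, hN⟩ := stmt_2_general ht htodd hg hfac
  refine ⟨N + 1, fun n hn => hN _ ?_⟩
  rw [GaloisField.finrank 2 (by omega)]
  omega
end

section
/- Let t ≥ 3 be an odd integer and let h_t(x,y) = ((x+1)^t + x^t + (y+1)^t + y^t)/((x+y)(x+y+1)) ∈ F_2[x,y]. If h_t(x,y) has an absolutely irreducible factor defined over F_2, then for all sufficiently large n there exists a point (α, β) ∈ (F_{2^n})^2 with α ≠ β and α ≠ β + 1 such that h_t(α, β) = 0. -/
open MvPolynomial

/-!
Put `D = (X + 1) ^ t + X ^ t`, so that `(x + y) (x + y + 1) h = D(x) - D(y)`. At a common zero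
`(α, β)` of `(x + y) (x + y + 1)` and `h` the partial derivatives of the product vanish, so
`D'(α) = 0`. Hence it is enough to find points of the absolutely irreducible factor `f` of `h`,
over all large finite fields, at which `D'(x)` does not vanish. As `D' ≠ 0`, the polynomial
`D(y) - D(x)` is separable over `K(x)`, and so is `f`.

The points come from the method of Stepanov and Bombieri. Let `L` be the splitting field of `f`
over `F = K(x)`, with group `G`, let `B` be the integral closure of `K[x]` in `L`, and let `q` be
the number of elements of the finite field. A geometric point `P` of `B` above a rational value of
`x` satisfies `P ∘ g = P ^ q` for some `g ∈ G`, and counting with multiplicity there are `|G|`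
such pairs `(P, g)` above each value. An auxiliary function `∑ s_j t_j ^ (p ^ a)`, with `p` the
characteristic, nonzero because the `s_j` are independent over the `p ^ a`-th powers, shows that
each `g` occurs in at most about `|G| q / ν` pairs, where `ν = [L : E]` for the extension `E` of
`F` by the constants of `L`. Only the `ν` elements of `G` which act on constants as the `q`-th
power can occur, and they form one coset of `Gal(L/E)`. The other `ν - 1` account for only about
`|G| q (ν - 1) / ν` of the `|G| q` pairs, so each of these `ν` elements does occur, even at points
with `D' ≠ 0`. Since `f` stays irreducible over `E`, one of these elements fixes a chosen root `y`
of `f`, and a point `P` belonging to it has `P(y) ^ q = P(y)`, hence is rational.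
-/

section Points

open scoped Polynomial

variable {A B : Type*} [CommRing A] [CommRing B] [Algebra A B]

theorem exists_algHom_forall_algebraMap_eq {R : Type*} [CommRing R] [Algebra R A] [Algebra R B]
    [IsScalarTower R A B] [FaithfulSMul A B] [Algebra.IsIntegral A B]
    {k : Type*} [Field k] [IsAlgClosed k] [Algebra R k] (φ : A →ₐ[R] k) :
    ∃ P : B →ₐ[R] k, ∀ a, P (algebraMap A B a) = φ a := by
  let ψ : A →+* k := φ
  have := RingHom.ker_isPrime ψ
  obtain ⟨Q, -, _, hQ⟩ := Ideal.exists_ideal_over_prime_of_isIntegral (S := B) (RingHom.ker ψ) ⊥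
    fun a ha ↦ by
      rw [Ideal.mem_comap, Ideal.mem_bot, FaithfulSMul.algebraMap_eq_zero_iff] at ha
      simp only [ha, zero_mem]
  have : Q.LiesOver (RingHom.ker ψ) := ⟨hQ.symm⟩
  let : Algebra (A ⧸ RingHom.ker ψ) k := (RingHom.kerLift ψ).toAlgebra
  have : FaithfulSMul (A ⧸ RingHom.ker ψ) k :=
    (faithfulSMul_iff_algebraMap_injective _ _).2 (RingHom.kerLift_injective ψ)
  have : Module.IsTorsionFree (A ⧸ RingHom.ker ψ) (B ⧸ Q) := FaithfulSMul.to_isTorsionFree _ _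
  let f : B ⧸ Q →ₐ[A ⧸ RingHom.ker ψ] k := IsAlgClosed.lift
  let P : B →+* k := f.toRingHom.comp (Ideal.Quotient.mk Q)
  have hP (a : A) : P (algebraMap A B a) = φ a := f.commutes (Ideal.Quotient.mk _ a)
  refine ⟨{ P with commutes' := fun r ↦ ?_ }, hP⟩
  rw [IsScalarTower.algebraMap_apply R A B, ← φ.commutes]
  exact hP _

variable {G k : Type*} [Group G] [MulSemiringAction G B] [CommRing k]

theorem exists_smul_forall_eq_of_forall_algebraMap_eq [Finite G] [Algebra.IsInvariant A B G]
    [IsDomain k] {P P' : B →+* k} (h : ∀ a, P (algebraMap A B a) = P' (algebraMap A B a)) :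
    ∃ g : G, ∀ b, P (g • b) = P' b := by
  classical
  by_contra! hne
  choose b hb using hne
  cases nonempty_fintype G
  let e := Fintype.equivFin G
  -- Pack the witnesses `b g` into one polynomial, whose image under `P'` then differs from the
  -- images under `P` of all its conjugates.
  let f : B[X] := ∑ g, Polynomial.monomial (e g) (b g)
  have coeff_f (g : G) : f.coeff (e g) = b g := by
    simp [f, Polynomial.finsetSum_coeff, Polynomial.coeff_monomial, Fin.val_inj]
  have map_charpoly_eq : (MulSemiringAction.charpoly G f).map (Polynomial.mapRingHom P) =
      (MulSemiringAction.charpoly G f).map (Polynomial.mapRingHom P') := by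
    ext i j
    obtain ⟨a, ha⟩ := Algebra.IsInvariant.isInvariant (A := A) (G := G)
      (((MulSemiringAction.charpoly G f).coeff i).coeff j) fun g ↦ by
        rw [← Polynomial.coeff_smul, MulSemiringAction.smul_coeff_charpoly]
    simpa only [Polynomial.coeff_map, Polynomial.coe_mapRingHom, ← ha] using h a
  have prod_eq_zero : ∏ g : G, (f.map P' - (g • f).map P) = 0 := by
    have := congr(Polynomial.eval (f.map P') $map_charpoly_eq)
    rw [← Polynomial.coe_mapRingHom P', Polynomial.eval_map_apply,
      MulSemiringAction.eval_charpoly, map_zero] at this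
    simpa [MulSemiringAction.charpoly_eq, Polynomial.map_prod, Polynomial.eval_prod] using this
  obtain ⟨g, -, hg⟩ := Finset.prod_eq_zero_iff.1 prod_eq_zero
  apply hb g
  simpa [coeff_f] using congr(Polynomial.coeff $(sub_eq_zero.1 hg) (e g)).symm

theorem exists_smul_forall_eq_pow_natCard [Finite G] [Algebra.IsInvariant A B G] [IsDomain k]
    {K : Type*} [Field K] [Finite K] (ι : K →+* k) {φ : A →+* K} {P : B →+* k}
    (h : ∀ a, P (algebraMap A B a) = ι (φ a)) :
    ∃ g : G, ∀ b, P (g • b) = P b ^ Nat.card K := by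
  cases nonempty_fintype K
  obtain ⟨p, _⟩ := CharP.exists K
  obtain ⟨n, hp, hn⟩ := FiniteField.card K p
  have : CharP k p := charP_of_injective_ringHom ι.injective p
  have : ExpChar k p := .prime hp
  obtain ⟨g, hg⟩ := exists_smul_forall_eq_of_forall_algebraMap_eq (A := A) (G := G)
    (P := P) (P' := (iterateFrobenius k p n).comp P) fun a ↦ by
      rw [RingHom.comp_apply, h, iterateFrobenius_def, ← map_pow, ← hn, FiniteField.pow_card]
  refine ⟨g, fun b ↦ ?_⟩
  rw [hg, RingHom.comp_apply, iterateFrobenius_def, ← hn, Nat.card_eq_fintype_card]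

variable [SMulCommClass G A B] [Algebra.IsInvariant A B G] [FaithfulSMul A B] {R K k : Type*}
  [CommRing R] [Algebra R A] [Algebra R B] [IsScalarTower R A B] [Field K] [Finite K] [Algebra R K]
  [Field k] [IsAlgClosed k] [Algebra R k]

-- Burnside's lemma twisted by Frobenius: every `P` over `φ` is `P₀ ∘ r` and `P ^ q` is `P ∘ t` with
-- `r`, `t` depending only on `P`. Sending `g` to `P = P₀ ∘ g` paired with `r⁻¹ * g * t` is then
-- injective, even when several `g` give the same `P`.
variable (G) in
theorem exists_injective_forall_map_smul_eq_pow [Finite G] (ι : K →ₐ[R] k) (φ : A →ₐ[R] K) :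
    ∃ pair : G → (B →ₐ[R] k) × G, Function.Injective pair ∧ ∀ g,
      (∀ a, (pair g).1 (algebraMap A B a) = ι (φ a)) ∧
      ∀ b, (pair g).1 ((pair g).2 • b) = (pair g).1 b ^ Nat.card K := by
  have := Algebra.IsInvariant.isIntegral A B G
  obtain ⟨P₀, hP₀⟩ := exists_algHom_forall_algebraMap_eq (B := B) (ι.comp φ)
  let pt (g : G) : B →ₐ[R] k := P₀.comp ((MulSemiringAction.toAlgHom A B g).restrictScalars R)
  have pt_algebraMap (g a) : pt g (algebraMap A B a) = ι (φ a) := by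
    simpa [pt, smul_algebraMap] using hP₀ a
  have pt_smul (g g' : G) (b) : pt g (g' • b) = pt (g * g') b :=
    congrArg P₀ (mul_smul g g' b).symm
  choose t ht using fun g ↦ exists_smul_forall_eq_pow_natCard (A := A) (G := G)
    (ι : K →+* k) (φ := (φ : A →+* K)) (P := (pt g : B →+* k)) (pt_algebraMap g)
  let r (P : B →ₐ[R] k) : G := Function.invFun pt P
  have pt_r (g) : pt (r (pt g)) = pt g := Function.invFun_eq ⟨g, rfl⟩
  refine ⟨fun g ↦ (pt g, (r (pt g))⁻¹ * g * t (r (pt g))), fun g g' h ↦ ?_, fun g ↦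
    ⟨pt_algebraMap g, fun b ↦ ?_⟩⟩
  · obtain ⟨pt_eq, h⟩ := Prod.mk.inj h
    simpa [pt_eq] using h
  · calc pt g (((r (pt g))⁻¹ * g * t (r (pt g))) • b)
      _ = pt (r (pt g)) (((r (pt g))⁻¹ * g * t (r (pt g))) • b) := by rw [pt_r]
      _ = pt g (t (r (pt g)) • b) := by rw [pt_smul, pt_smul, mul_assoc, mul_inv_cancel_left]
      _ = pt (r (pt g)) (t (r (pt g)) • b) := by rw [pt_r]
      _ = pt (r (pt g)) b ^ Nat.card K := ht _ b
      _ = pt g b ^ Nat.card K := by rw [pt_r]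

theorem card_mul_card_le_sum_of_forall_map_smul_eq_pow [Fintype G]
    (ι : K →ₐ[R] k) (W : Finset (A →ₐ[R] K)) (bound : G → ℕ)
    (card_le : ∀ (g : G) (S : Finset (B →ₐ[R] k)), (∀ P ∈ S,
      (∃ φ ∈ W, ∀ a, P (algebraMap A B a) = ι (φ a)) ∧ ∀ b, P (g • b) = P b ^ Nat.card K) →
      S.card ≤ bound g) :
    W.card * Fintype.card G ≤ ∑ g, bound g := by
  classical
  choose pair injective spec using
    fun φ : A →ₐ[R] K ↦ exists_injective_forall_map_smul_eq_pow (B := B) G ι φ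
  have injective_uncurry : Function.Injective fun z : (A →ₐ[R] K) × G ↦ pair z.1 z.2 := by
    rintro ⟨φ, g⟩ ⟨φ', g'⟩ (h : pair φ g = pair φ' g')
    obtain rfl : φ = φ' := AlgHom.ext fun a ↦ (ι : K →+* k).injective <|
      ((spec φ g).1 a).symm.trans (h ▸ (spec φ' g').1 a)
    rw [injective φ h]
  rw [← Finset.card_univ (α := G), ← Finset.card_product,
    Finset.card_eq_sum_card_fiberwise (f := fun z ↦ (pair z.1 z.2).2) (t := Finset.univ)
      fun z _ ↦ Finset.mem_coe.2 (Finset.mem_univ _)]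
  refine Finset.sum_le_sum fun g _ ↦ ?_
  rw [← Finset.card_image_of_injOn (f := fun z ↦ (pair z.1 z.2).1) fun z hz z' hz' h ↦
    injective_uncurry <| Prod.ext h <|
      (Finset.mem_filter.1 hz).2.trans (Finset.mem_filter.1 hz').2.symm]
  refine card_le g _ fun P hP ↦ ?_
  obtain ⟨z, hz, rfl⟩ := Finset.mem_image.1 hP
  obtain ⟨hzW, rfl⟩ := Finset.mem_filter.1 hz
  exact ⟨⟨z.1, (Finset.mem_product.1 hzW).1, (spec _ _).1⟩, (spec _ _).2⟩

end Points

section Stepanov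

open Module
open scoped Polynomial

theorem exists_ne_zero_sum_mul_eq_zero_of_finrank_lt {K B J : Type*} [Field K] [CommRing B]
    [Algebra K B] [Fintype J] {V W : Submodule K B} [FiniteDimensional K V] [FiniteDimensional K W]
    {x : J → B} (hx : ∀ j, ∀ v ∈ V, x j * v ∈ W)
    (hlt : finrank K W < Fintype.card J * finrank K V) :
    ∃ u : J → B, u ≠ 0 ∧ (∀ j, u j ∈ V) ∧ ∑ j, x j * u j = 0 := by
  let Φ : (J → V) →ₗ[K] W := ∑ j, ((LinearMap.mulLeft K (x j)).restrict (hx j)) ∘ₗ LinearMap.proj j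
  have coe_Φ (u : J → V) : (Φ u : B) = ∑ j, x j * u j := by
    simp only [Φ, LinearMap.sum_apply, Submodule.coe_sum]
    rfl
  have ker_ne_bot : LinearMap.ker Φ ≠ ⊥ := LinearMap.ker_ne_bot_of_finrank_lt <| by
    rwa [finrank_pi_fintype, Finset.sum_const, Finset.card_univ, smul_eq_mul]
  obtain ⟨u, hu, hu0⟩ := (Submodule.ne_bot_iff _).1 ker_ne_bot
  refine ⟨fun j ↦ u j, fun h ↦ hu0 ?_, fun j ↦ (u j).2, ?_⟩
  · exact funext fun j ↦ Subtype.ext (congrFun h j)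
  · rw [← coe_Φ, LinearMap.mem_ker.1 hu, Submodule.coe_zero]

variable {K B ι : Type*} [Field K] [CommRing B] [Algebra K B] [Algebra K[X] B]
  [IsScalarTower K K[X] B]

theorem card_le_natDegree_norm_of_forall_apply_eq_zero [IsDomain B] [Finite ι] (b : Basis ι K[X] B)
    {k : Type*} [Field k] [Algebra K k] {g : B} (hg : g ≠ 0) {S : Finset (B →ₐ[K] k)}
    (hS : ∀ P ∈ S, P g = 0) : S.card ≤ (Algebra.norm K[X] g).natDegree := by
  cases nonempty_fintype ι
  have : FiniteDimensional K (B ⧸ Ideal.span {g}) := Module.Finite.equiv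
    (Ideal.quotientEquivDirectSum K b (Ideal.span_singleton_eq_bot.not.2 hg)).symm
  have vanish (P : S) (x) (hx : x ∈ Ideal.span {g}) : P.1 x = 0 := by
    obtain ⟨y, rfl⟩ := Ideal.mem_span_singleton'.1 hx
    rw [map_mul, hS P.1 P.2, mul_zero]
  let descend (P : S) : (B ⧸ Ideal.span {g}) →ₐ[K] k := Ideal.Quotient.liftₐ _ P.1 (vanish P)
  have descend_injective : Function.Injective descend := fun P P' h ↦
    Subtype.ext <| AlgHom.ext fun x ↦ DFunLike.congr_fun h (Ideal.Quotient.mk _ x)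
  calc S.card = Nat.card S := (Nat.card_eq_finsetCard S).symm
    _ ≤ Nat.card ((B ⧸ Ideal.span {g}) →ₐ[K] k) :=
      Nat.card_le_card_of_injective descend descend_injective
    _ ≤ finrank K (B ⧸ Ideal.span {g}) := card_algHom_le_finrank _ _ _
    _ = (Algebra.norm K[X] g).natDegree := finrank_quotient_span_eq_natDegree_norm b hg

theorem mul_mem_degreeLT {M M' : ℕ} {f g : K[X]} (hf : f ∈ Polynomial.degreeLT K M)
    (hg : g ∈ Polynomial.degreeLT K M') : f * g ∈ Polynomial.degreeLT K (M + M') := by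
  rw [Polynomial.mem_degreeLT] at *
  obtain rfl | hf0 := eq_or_ne f 0
  · simp
  rw [Polynomial.degree_mul, Polynomial.degree_eq_natDegree hf0] at *
  rw [Nat.cast_add]
  exact WithBot.add_lt_add_of_le_of_lt (by simp) hf.le hg

theorem natDegree_det_le_of_forall_natDegree_le {R n : Type*} [CommRing R] [Fintype n]
    [DecidableEq n] {A : Matrix n n R[X]} (M : ℕ) (h : ∀ i j, (A i j).natDegree ≤ M) :
    A.det.natDegree ≤ Fintype.card n * M := by
  rw [Matrix.det_apply]
  refine Polynomial.natDegree_sum_le_of_forall_le _ _ fun σ _ ↦ ?_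
  calc (Equiv.Perm.sign σ • ∏ i, A (σ i) i).natDegree
    _ ≤ (∏ i, A (σ i) i).natDegree := Polynomial.natDegree_smul_le _ _
    _ ≤ ∑ i, (A (σ i) i).natDegree := Polynomial.natDegree_prod_le _ _
    _ ≤ Fintype.card n * M := by
      simpa using Finset.sum_le_card_nsmul Finset.univ _ M fun i _ ↦ h (σ i) i

/-- The functions whose coordinates in the `K[X]`-basis `b` have degree less than `M`. For functions
on a curve, this plays the role of a Riemann–Roch space of a multiple of the divisor at infinity. -/
noncomputable def coordDegreeLT [Fintype ι] (b : Basis ι K[X] B) (M : ℕ) : Submodule K B :=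
  (Submodule.pi Set.univ fun _ ↦ Polynomial.degreeLT K M).comap
    (b.equivFun.toLinearMap.restrictScalars K)

namespace coordDegreeLT

variable [Fintype ι] {b : Basis ι K[X] B} {M M' : ℕ}

theorem mem_iff {v : B} :
    v ∈ coordDegreeLT b M ↔ ∀ i, b.repr v i ∈ Polynomial.degreeLT K M := by
  simp [coordDegreeLT, Submodule.mem_pi]

theorem mono (h : M ≤ M') : coordDegreeLT b M ≤ coordDegreeLT b M' :=
  fun _ hv ↦ mem_iff.2 fun i ↦ Polynomial.degreeLT_mono h (mem_iff.1 hv i)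

/-- Coordinates identify `coordDegreeLT b M` with families of polynomials of degree `< M`. -/
noncomputable def equivPi (b : Basis ι K[X] B) (M : ℕ) :
    coordDegreeLT b M ≃ₗ[K] (ι → Polynomial.degreeLT K M) where
  toFun v i := ⟨b.repr v i, mem_iff.1 v.2 i⟩
  map_add' _ _ := by ext; simp
  map_smul' r v := funext fun i ↦ Subtype.ext <|
    congrFun ((b.equivFun.toLinearMap.restrictScalars K).map_smul r v.1) i
  invFun f := ⟨b.equivFun.symm fun i ↦ f i, mem_iff.2 fun i ↦ by
    rw [← b.equivFun_apply, LinearEquiv.apply_symm_apply]; exact (f i).2⟩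
  left_inv v := Subtype.ext (b.equivFun.symm_apply_apply v.1)
  right_inv f := funext fun i ↦ Subtype.ext (congrFun (b.equivFun.apply_symm_apply _) i)

instance : FiniteDimensional K (Polynomial.degreeLT K M) :=
  Module.Finite.equiv (Polynomial.degreeLTEquiv K M).symm

instance : FiniteDimensional K (coordDegreeLT b M) :=
  Module.Finite.equiv (equivPi b M).symm

variable (b M) in
theorem finrank_eq : finrank K (coordDegreeLT b M) = Fintype.card ι * M := by
  rw [(equivPi b M).finrank_eq, finrank_pi_fintype, Finset.sum_const,
    (Polynomial.degreeLTEquiv K M).finrank_eq, finrank_fin_fun, smul_eq_mul, Finset.card_univ]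

variable (b) in
theorem exists_forall_mem {J : Type*} [Finite J] (v : J → B) :
    ∃ M, ∀ j, v j ∈ coordDegreeLT b M := by
  obtain ⟨M, hM⟩ := (Set.finite_range
    fun z : J × ι ↦ (b.repr (v z.1) z.2).natDegree).bddAbove
  refine ⟨M + 1, fun j ↦ mem_iff.2 fun i ↦ Polynomial.mem_degreeLT.2 ?_⟩
  exact Polynomial.degree_lt_iff_coeff_zero _ _ |>.2 fun n hn ↦
    Polynomial.coeff_eq_zero_of_natDegree_lt ((hM ⟨(j, i), rfl⟩).trans_lt hn)

theorem smul_mem {f : K[X]} {v : B} (hf : f ∈ Polynomial.degreeLT K M)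
    (hv : v ∈ coordDegreeLT b M') : f • v ∈ coordDegreeLT b (M + M') := by
  refine mem_iff.2 fun i ↦ ?_
  rw [map_smul, Finsupp.smul_apply]
  exact mul_mem_degreeLT hf (mem_iff.1 hv i)

variable (b) in
theorem exists_mul_mem :
    ∃ c, ∀ {M M' v w}, v ∈ coordDegreeLT b M → w ∈ coordDegreeLT b M' →
      v * w ∈ coordDegreeLT b (M + M' + c) := by
  obtain ⟨c, hc⟩ := exists_forall_mem b fun z : ι × ι ↦ b z.1 * b z.2
  refine ⟨c, fun {M M' v w} hv hw ↦ ?_⟩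
  rw [← b.sum_repr v, ← b.sum_repr w, Finset.sum_mul_sum]
  refine sum_mem fun i _ ↦ sum_mem fun j _ ↦ ?_
  rw [smul_mul_smul_comm]
  exact smul_mem (mul_mem_degreeLT (mem_iff.1 hv i) (mem_iff.1 hw j)) (hc (i, j))

variable (b) in
theorem exists_group_smul_mem (G : Type*) [Group G] [Finite G] [MulSemiringAction G B]
    [SMulCommClass G K[X] B] :
    ∃ c, ∀ {M v}, v ∈ coordDegreeLT b M → ∀ g : G, g • v ∈ coordDegreeLT b (M + c) := by
  obtain ⟨c, hc⟩ := exists_forall_mem b fun z : G × ι ↦ z.1 • b z.2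
  refine ⟨c, fun {M v} hv g ↦ ?_⟩
  rw [← b.sum_repr v, Finset.smul_sum]
  refine sum_mem fun i _ ↦ ?_
  rw [smul_comm]
  exact smul_mem (mem_iff.1 hv i) (hc (g, i))

variable (b) in
theorem exists_natDegree_norm_le :
    ∃ c, ∀ {M v}, v ∈ coordDegreeLT b M →
      (Algebra.norm K[X] v).natDegree ≤ Fintype.card ι * (M + c) := by
  classical
  obtain ⟨c, hc⟩ := exists_mul_mem b
  obtain ⟨d, hd⟩ := exists_forall_mem b b
  refine ⟨d + c, fun {M v} hv ↦ ?_⟩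
  rw [Algebra.norm_eq_matrix_det b]
  refine natDegree_det_le_of_forall_natDegree_le _ fun i j ↦ ?_
  rw [Algebra.leftMulMatrix_eq_repr_mul, Polynomial.natDegree_le_iff_degree_le, ← add_assoc]
  exact (Polynomial.mem_degreeLT.1 (mem_iff.1 (hc hv (hd j)) i)).le

end coordDegreeLT

/-- `c` bounds how far the filtration `coordDegreeLT b` of `B` is from being compatible with
multiplication, with the action of `G`, and with the degree of the norm. -/
structure IsCoordDegreeSlack [Fintype ι] (b : Basis ι K[X] B) (G : Type*) [Group G]
    [MulSemiringAction G B] (c : ℕ) : Prop where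
  mul_mem {M M' : ℕ} {v w : B} (hv : v ∈ coordDegreeLT b M) (hw : w ∈ coordDegreeLT b M') :
    v * w ∈ coordDegreeLT b (M + M' + c)
  smul_mem {M : ℕ} {v : B} (hv : v ∈ coordDegreeLT b M) (g : G) :
    g • v ∈ coordDegreeLT b (M + c)
  natDegree_norm_le {M : ℕ} {v : B} (hv : v ∈ coordDegreeLT b M) :
    (Algebra.norm K[X] v).natDegree ≤ Fintype.card ι * (M + c)

variable [Fintype ι] {b : Basis ι K[X] B} {G : Type*} [Group G] [MulSemiringAction G B]

variable (b G) in
theorem exists_isCoordDegreeSlack [Finite G] [SMulCommClass G K[X] B] :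
    ∃ c, IsCoordDegreeSlack b G c := by
  obtain ⟨c₁, h₁⟩ := coordDegreeLT.exists_mul_mem b
  obtain ⟨c₂, h₂⟩ := coordDegreeLT.exists_group_smul_mem b G
  obtain ⟨c₃, h₃⟩ := coordDegreeLT.exists_natDegree_norm_le b
  exact ⟨c₁ + c₂ + c₃, fun hv hw ↦ coordDegreeLT.mono (by lia) (h₁ hv hw),
    fun hv g ↦ coordDegreeLT.mono (by lia) (h₂ hv g),
    fun hv ↦ (h₃ hv).trans (Nat.mul_le_mul_left _ (by lia))⟩

namespace IsCoordDegreeSlack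

variable {c : ℕ}

theorem pow_mul_mem (hc : IsCoordDegreeSlack b G c) {M M' : ℕ} {v w : B}
    (hv : v ∈ coordDegreeLT b M) (hw : w ∈ coordDegreeLT b M') (n : ℕ) :
    v ^ n * w ∈ coordDegreeLT b (n * (M + c) + M') := by
  induction n with
  | zero => simpa using hw
  | succ n ih =>
    rw [pow_succ', mul_assoc]
    exact coordDegreeLT.mono (by lia) (hc.mul_mem hv ih)

-- Choose `u` with `∑ s ^ p ^ e * u = 0` by linear algebra. At a point where
-- `P ∘ g = P ^ p ^ (a + e)`, this relation is the `p ^ e`-th power of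
-- `P (∑ s * (g⁻¹ • u) ^ p ^ a) = 0`, which involves a function of much smaller degree.
theorem card_le_of_forall_map_smul_eq_pow [IsDomain B] {k : Type*} [Field k] [Algebra K k]
    {p : ℕ} [ExpChar k p] (hc : IsCoordDegreeSlack b G c) {J : Type*} [Fintype J] {a e l m : ℕ}
    {s : J → B} (hs : ∀ j, s j ∈ coordDegreeLT b l)
    (hind : ∀ t : J → B, ∑ j, s j * t j ^ p ^ a = 0 → t = 0)
    (hlt : Fintype.card ι * (p ^ e * (l + c) + m) < Fintype.card J * (Fintype.card ι * m))
    (g : G) {S : Finset (B →ₐ[K] k)} (hS : ∀ P ∈ S, ∀ x, P (g • x) = P x ^ p ^ (a + e)) :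
    S.card ≤ Fintype.card ι * (p ^ a * (m + 2 * c) + l + c) := by
  obtain ⟨u, hu0, hu, relation⟩ := exists_ne_zero_sum_mul_eq_zero_of_finrank_lt
    (V := coordDegreeLT b m) (fun j v hv ↦ hc.pow_mul_mem (hs j) hv (p ^ e))
    (by simpa only [coordDegreeLT.finrank_eq] using hlt)
  let f : B := ∑ j, (g⁻¹ • u j) ^ p ^ a * s j
  have f_ne_zero : f ≠ 0 := fun hf ↦ hu0 <| funext fun j ↦ smul_left_cancel g⁻¹ <| by
    simpa using congrFun (hind (fun j ↦ g⁻¹ • u j) (by simpa only [f, mul_comm] using hf)) j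
  have f_mem : f ∈ coordDegreeLT b (p ^ a * (m + c + c) + l) :=
    sum_mem fun j _ ↦ hc.pow_mul_mem (hc.smul_mem (hu j) g⁻¹) (hs j) _
  refine (card_le_natDegree_norm_of_forall_apply_eq_zero b f_ne_zero fun P hP ↦ ?_).trans
    ((hc.natDegree_norm_le f_mem).trans_eq (by ring))
  have map_u (j) : P (u j) = P (g⁻¹ • u j) ^ p ^ (a + e) := by
    rw [← hS P hP, smul_inv_smul]
  refine eq_zero_of_pow_eq_zero (n := p ^ e) ?_
  calc P f ^ p ^ e
    _ = ∑ j, P ((g⁻¹ • u j) ^ p ^ a * s j) ^ p ^ e := by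
      rw [map_sum, ← iterateFrobenius_def, map_sum]
      rfl
    _ = ∑ j, P (s j ^ p ^ e * u j) := Finset.sum_congr rfl fun j _ ↦ by
      rw [map_mul, map_mul, map_u, map_pow, map_pow, mul_pow, ← pow_mul, ← pow_add, mul_comm]
    _ = 0 := by rw [← map_sum, relation, map_zero]

end IsCoordDegreeSlack

end Stepanov

section Independence

open scoped Polynomial

section Subfield

variable {L V J : Type*} [Field L] [AddCommGroup V] [Module L V] {v : J → V}

theorem linearIndependent_subfield_iff [Fintype J] (κ : Subfield L) :
    LinearIndependent κ v ↔ ∀ c : J → L, (∀ j, c j ∈ κ) → ∑ j, c j • v j = 0 → c = 0 := by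
  rw [Fintype.linearIndependent_iff]
  refine ⟨fun h c hc hsum ↦ funext fun j ↦ ?_, fun h c hsum j ↦ ?_⟩
  · exact congrArg Subtype.val (h (fun j ↦ ⟨c j, hc j⟩) hsum j)
  · exact Subtype.ext (congrFun (h (fun j ↦ c j) (fun j ↦ (c j).2) hsum) j)

theorem mem_span_subfield_range_iff [Fintype J] (κ : Subfield L) {x : V} :
    x ∈ Submodule.span κ (Set.range v) ↔ ∃ c : J → L, (∀ j, c j ∈ κ) ∧ ∑ j, c j • v j = x := by
  rw [Submodule.mem_span_range_iff_exists_fun]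
  exact ⟨fun ⟨c, hc⟩ ↦ ⟨fun j ↦ c j, fun j ↦ (c j).2, hc⟩,
    fun ⟨c, hc, h⟩ ↦ ⟨fun j ↦ ⟨c j, hc j⟩, h⟩⟩

theorem linearIndependent_subfield_of_le {κ κ' : Subfield L} (hκ : κ ≤ κ')
    (h : LinearIndependent κ' v) : LinearIndependent κ v := by
  let : Algebra κ κ' := (Subfield.inclusion hκ).toAlgebra
  have : IsScalarTower κ κ' V := ⟨fun c c' x ↦ mul_smul (c : L) c' x⟩
  exact h.restrict_scalars' κ

theorem exists_linearIndependent_fin_of_iInf {κ : ℕ → Subfield L} (hκ : Antitone κ) {r : ℕ}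
    {v : Fin r → V} (hv : LinearIndependent (⨅ a, κ a : Subfield L) v) :
    ∃ a, LinearIndependent (κ a) v := by
  induction r with
  | zero => exact ⟨0, linearIndependent_empty_type⟩
  | succ r ih =>
    rw [linearIndependent_finSucc] at hv
    obtain ⟨a₀, h₀⟩ := ih hv.1
    by_contra! dependent
    have mem_span (a) : v 0 ∈ Submodule.span (κ (a₀ + a)) (Set.range (Fin.tail v)) := by
      by_contra h
      exact dependent _ <| linearIndependent_finSucc.2
        ⟨linearIndependent_subfield_of_le (hκ (Nat.le_add_right _ _)) h₀, h⟩
    choose c c_mem sum_c using fun a ↦ (mem_span_subfield_range_iff _).1 (mem_span a)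
    have c_eq (a) : c a = c 0 := sub_eq_zero.1 <| (linearIndependent_subfield_iff _).1 h₀ _
      (fun j ↦ sub_mem (hκ (Nat.le_add_right _ _) (c_mem a j)) (c_mem 0 j)) <| by
        simp only [Pi.sub_apply, sub_smul, Finset.sum_sub_distrib, sum_c, sub_self]
    refine hv.2 <| (mem_span_subfield_range_iff _).2 ⟨c 0, fun j ↦ Subfield.mem_iInf.2 fun a ↦ ?_,
      sum_c 0⟩
    exact hκ (Nat.le_add_left a a₀) (c_eq a ▸ c_mem a j)

theorem exists_linearIndependent_of_iInf [Finite J] {κ : ℕ → Subfield L} (hκ : Antitone κ)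
    (hv : LinearIndependent (⨅ a, κ a : Subfield L) v) : ∃ a, LinearIndependent (κ a) v := by
  let e := (Finite.equivFin J).symm
  obtain ⟨a, ha⟩ := exists_linearIndependent_fin_of_iInf hκ ((linearIndependent_equiv e).2 hv)
  exact ⟨a, (linearIndependent_equiv e).1 ha⟩

end Subfield

variable {K : Type*} [Field K]

theorem exists_eq_C_of_pow_dvd {f g : K[X]} (hf : f ≠ 0) {n : ℕ} (hn : f.natDegree < n)
    (h : g ^ n ∣ f) : ∃ r, g = Polynomial.C r := by
  have degree_le : n * g.natDegree ≤ f.natDegree := by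
    simpa using Polynomial.natDegree_le_of_dvd h hf
  refine ⟨g.coeff 0, Polynomial.eq_C_of_natDegree_eq_zero ?_⟩
  by_contra h0
  exact (degree_le.trans_lt hn).not_ge (Nat.le_mul_of_pos_right n (Nat.pos_of_ne_zero h0))

theorem exists_algebraMap_eq_of_forall_exists_pow_eq {F : Type*} [Field F] [Algebra K[X] F]
    [IsFractionRing K[X] F] [Algebra K F] [IsScalarTower K K[X] F] {c : F}
    (hc : ∀ N, ∃ n ≥ N, ∃ d, d ^ n = c) : ∃ r : K, algebraMap K F r = c := by
  obtain ⟨u, v, hv, rfl⟩ := IsFractionRing.div_surjective (A := K[X]) c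
  obtain rfl | hu := eq_or_ne u 0
  · exact ⟨0, by simp⟩
  have hv := nonZeroDivisors.ne_zero hv
  obtain ⟨n, hn, d, hd⟩ := hc (u.natDegree + v.natDegree + 1)
  obtain ⟨u', v', reduced, rfl⟩ := IsFractionRing.exists_reduced_fraction (A := K[X]) d
  have coprime : IsCoprime (u' ^ n) ((v' : K[X]) ^ n) := reduced.isCoprime.pow
  have cross_eq : u' ^ n * v = u * (v' : K[X]) ^ n := by
    rw [IsFractionRing.mk'_eq_div, div_pow] at hd
    rw [div_eq_div_iff (by simp) (by simpa)] at hd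
    apply IsFractionRing.injective K[X] F
    simpa using hd
  obtain ⟨r, hr⟩ := exists_eq_C_of_pow_dvd hu (by lia) <|
    coprime.dvd_of_dvd_mul_right (cross_eq ▸ dvd_mul_right _ _)
  obtain ⟨s, hs⟩ := exists_eq_C_of_pow_dvd hv (by lia) <|
    coprime.symm.dvd_of_dvd_mul_left (cross_eq ▸ dvd_mul_left _ _)
  refine ⟨(r / s) ^ n, ?_⟩
  rw [← hd, IsFractionRing.mk'_eq_div, hr, hs, ← Polynomial.algebraMap_eq,
    ← IsScalarTower.algebraMap_apply, ← IsScalarTower.algebraMap_apply, map_pow, map_div₀]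

theorem isAlgebraic_of_forall_mem_fieldRange_iterateFrobenius (F : Type*) [Field F] [Algebra K[X] F]
    [IsFractionRing K[X] F] [Algebra K F] [IsScalarTower K K[X] F] {L : Type*} [Field L]
    [Algebra F L] [Algebra K L] [IsScalarTower K F L] [Algebra.IsSeparable F L] {p : ℕ}
    [ExpChar L p] (hp : 1 < p) {x : L}
    (hx : ∀ a, x ∈ (iterateFrobenius L p a).fieldRange) : IsAlgebraic K x := by
  have : ExpChar F p := (algebraMap F L).expChar (algebraMap F L).injective p
  have coeff_mem (i) : ∃ r, algebraMap K F r = (minpoly F x).coeff i := by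
    refine exists_algebraMap_eq_of_forall_exists_pow_eq fun N ↦
      ⟨p ^ N, (Nat.lt_pow_self hp).le, ?_⟩
    obtain ⟨y, rfl⟩ := hx N
    rw [minpoly.iterateFrobenius_of_isSeparable p N (Algebra.IsSeparable.isSeparable F y)]
    exact ⟨(minpoly F y).coeff i, by rw [Polynomial.coeff_map, iterateFrobenius_def]⟩
  obtain ⟨f, hf⟩ := (Polynomial.lifts_iff_coeff_lifts _).2 coeff_mem
  have hx := Algebra.IsIntegral.isIntegral (R := F) x
  refine ⟨f, fun h ↦ minpoly.ne_zero hx (by rw [← hf, h]; simp), ?_⟩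
  rw [← Polynomial.aeval_map_algebraMap F, ← Polynomial.coe_mapRingHom, hf, minpoly.aeval]

theorem exists_eq_zero_of_sum_mul_pow_eq_zero (F : Type*) [Field F] [Algebra K[X] F]
    [IsFractionRing K[X] F] [Algebra K F] [IsScalarTower K K[X] F] {L : Type*} [Field L]
    [Algebra F L] [Algebra K L] [IsScalarTower K F L] [Algebra.IsSeparable F L] {p : ℕ}
    [ExpChar L p] (hp : 1 < p)
    {J : Type*} [Fintype J] {s : J → L}
    (hs : LinearIndependent (algebraicClosure K L) s) :
    ∃ a, ∀ t : J → L, ∑ j, s j * t j ^ p ^ a = 0 → t = 0 := by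
  let κ (a : ℕ) : Subfield L := (iterateFrobenius L p a).fieldRange
  have hκ : Antitone κ := antitone_nat_of_succ_le fun a ↦ by
    rintro _ ⟨y, rfl⟩
    exact ⟨y ^ p, by simp only [iterateFrobenius_def, ← pow_mul, pow_succ']⟩
  have iInf_le : ⨅ a, κ a ≤ (algebraicClosure K L).toSubfield := fun x hx ↦
    mem_algebraicClosure_iff.2 <|
      isAlgebraic_of_forall_mem_fieldRange_iterateFrobenius F hp (Subfield.mem_iInf.1 hx)
  have hs : LinearIndependent (algebraicClosure K L).toSubfield s := hs
  obtain ⟨a, ha⟩ := exists_linearIndependent_of_iInf hκ <|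
    linearIndependent_subfield_of_le iInf_le hs
  refine ⟨a, fun t ht ↦ funext fun j ↦ eq_zero_of_pow_eq_zero (n := p ^ a) ?_⟩
  refine congrFun ((linearIndependent_subfield_iff _).1 ha (fun j ↦ t j ^ p ^ a)
    (fun j ↦ ⟨t j, iterateFrobenius_def ..⟩) ?_) j
  simpa only [smul_eq_mul, mul_comm] using ht

end Independence

section Constants

open Module
open scoped Polynomial

theorem linearIndependent_pow_of_transcendental {R A : Type*} [CommRing R] [CommRing A]
    [Algebra R A] {x : A} (hx : Transcendental R x) :
    LinearIndependent R fun i : ℕ ↦ x ^ i := by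
  have := (Polynomial.basisMonomials R).linearIndependent.map'
    (Polynomial.aeval x).toLinearMap (LinearMap.ker_eq_bot.2 (transcendental_iff_injective.1 hx))
  simpa [Function.comp_def] using this

theorem exists_linearIndependent_algebraMap (R : Type*) {F L B : Type*} [CommRing R] [IsDomain R]
    [Field F] [Field L] [Algebra R F] [IsFractionRing R F] [Algebra F L] [FiniteDimensional F L]
    [Algebra R L] [IsScalarTower R F L] [CommRing B] [Algebra B L] [IsIntegralClosure B R L]
    (E : IntermediateField F L) :
    ∃ v : Fin (finrank E L) → B, LinearIndependent E fun j ↦ algebraMap B L (v j) := by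
  classical
  let β := finBasis E L
  obtain ⟨f, hf, integral⟩ := exists_integral_multiples R F (Finset.univ.image β)
  have hf : algebraMap R E f ≠ 0 := by
    rw [IsScalarTower.algebraMap_apply R F E]
    simpa only [ne_eq, map_eq_zero_iff _ (IsFractionRing.injective R F),
      map_eq_zero_iff _ (algebraMap F E).injective] using hf
  choose v hv using fun j ↦ IsIntegralClosure.isIntegral_iff (A := B).1 <|
    integral (β j) (Finset.mem_image_of_mem β (Finset.mem_univ j))
  refine ⟨v, ?_⟩
  convert β.linearIndependent.units_smul fun _ ↦ Units.mk0 _ hf with j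
  simp only [hv, Pi.smul_apply', Units.smul_mk0]
  exact Algebra.smul_def ..

variable {K L : Type*} [Field K] [Field L] [Algebra K L] [Algebra K[X] L] [IsScalarTower K K[X] L]

theorem transcendental_algebraicClosure_algebraMap_X [FaithfulSMul K[X] L] :
    Transcendental (algebraicClosure K L) (algebraMap K[X] L Polynomial.X) := fun h ↦
  (transcendental_algebraMap_iff (FaithfulSMul.algebraMap_injective K[X] L)).2
    (Polynomial.transcendental_X K) (h.restrictScalars K)

/-- The subfield of `L` generated over `F` by the constants of `L`, i.e. by the elements of `L` that
are algebraic over `K`. -/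
noncomputable abbrev constantExtension (K F L : Type*) [Field K] [Field F] [Field L] [Algebra K L]
    [Algebra F L] : IntermediateField F L :=
  IntermediateField.adjoin F (algebraicClosure K L : Set L)

variable (F : Type*) [Field F] [Algebra K[X] F] [Algebra F L] [IsScalarTower K[X] F L]
  {B : Type*} [CommRing B] [Algebra K[X] B] [Algebra B L] [IsScalarTower K[X] B L]
  [IsIntegralClosure B K[X] L]

theorem exists_linearIndependent_mem_coordDegreeLT [IsFractionRing K[X] F] [FiniteDimensional F L]
    [Algebra K B] [IsScalarTower K K[X] B] {ι : Type*} [Fintype ι] (b : Basis ι K[X] B) :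
    ∃ c, ∀ l, ∃ s : Fin l × Fin (finrank (constantExtension K F L) L) → B,
      (∀ j, s j ∈ coordDegreeLT b (l + c)) ∧
      LinearIndependent (algebraicClosure K L) fun j ↦ algebraMap B L (s j) := by
  let E := constantExtension K F L
  obtain ⟨v, hv⟩ := exists_linearIndependent_algebraMap K[X] (B := B) E
  obtain ⟨c, hc⟩ := coordDegreeLT.exists_forall_mem b v
  refine ⟨c, fun l ↦ ⟨fun j ↦ (Polynomial.X ^ (j.1 : ℕ) : K[X]) • v j.2,
    fun j ↦ coordDegreeLT.smul_mem ?_ (hc j.2), ?_⟩⟩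
  · exact Polynomial.mem_degreeLT.2 (by simp)
  have κ_le : (algebraicClosure K L).toSubring ≤ E.toSubring :=
    IntermediateField.subset_adjoin F _
  let : Algebra (algebraicClosure K L) E := (Subring.inclusion κ_le).toAlgebra
  have : IsScalarTower (algebraicClosure K L) E L := .of_algebraMap_eq fun _ ↦ rfl
  have : FaithfulSMul K[X] L := .trans K[X] F L
  have powers : LinearIndependent (algebraicClosure K L) fun i : Fin l ↦
      algebraMap K[X] E Polynomial.X ^ (i : ℕ) :=
    (linearIndependent_pow_of_transcendental <|
      (transcendental_algebraMap_iff (algebraMap E L).injective).1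
        transcendental_algebraicClosure_algebraMap_X).comp _ Fin.val_injective
  convert linearIndependent_smul powers hv with j
  simp only [Algebra.smul_def, map_mul, ← map_pow, ← IsScalarTower.algebraMap_apply]
  rfl

end Constants

section Frobenius

open Module
open scoped Polynomial

theorem eq_zero_of_isAlgebraic_of_map_eq_zero {K B k : Type*} [Field K] [CommRing B] [IsDomain B]
    [Algebra K B] [Semiring k] [Nontrivial k] (P : B →+* k) {x : B} (hx : IsAlgebraic K x)
    (h : P x = 0) : x = 0 := by
  by_contra hx₀
  obtain ⟨r, hr, x_dvd⟩ := hx.exists_nonzero_dvd (mem_nonZeroDivisors_of_ne_zero hx₀)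
  have : IsUnit x := isUnit_of_dvd_unit x_dvd (hr.isUnit.map (algebraMap K B))
  exact (this.map P).ne_zero h

theorem smul_eq_pow_of_mem_algebraicClosure {K A B L G k : Type*} [Field K] [CommRing A]
    [CommRing B] [IsDomain B] [Field L] [Algebra K A] [Algebra K B] [Algebra K L] [Algebra A L]
    [Algebra B L] [IsScalarTower K A L] [IsScalarTower K B L] [IsIntegralClosure B A L] [Group G]
    [MulSemiringAction G B] [MulSemiringAction G L] [SMulDistribClass G B L] [SMulCommClass G K B]
    [CommRing k] [Nontrivial k] {P : B →+* k} {g : G} {q : ℕ} (h : ∀ b, P (g • b) = P b ^ q) {c : L}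
    (hc : c ∈ algebraicClosure K L) : g • c = c ^ q := by
  have hc : IsIntegral K c := (mem_algebraicClosure_iff.1 hc).isIntegral
  obtain ⟨b, rfl⟩ := IsIntegralClosure.isIntegral_iff (A := B).1 (hc.tower_top (A := A))
  have hb : IsIntegral K b :=
    (isIntegral_algebraMap_iff (IsIntegralClosure.algebraMap_injective B A L)).1 hc
  have hgb : IsIntegral K (g • b) := hb.map (MulSemiringAction.toAlgHom K B g)
  have : g • b - b ^ q = 0 := eq_zero_of_isAlgebraic_of_map_eq_zero P
    (hgb.sub (hb.pow q)).isAlgebraic (by rw [map_sub, map_pow, h, sub_self])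
  rw [← algebraMap.smul', sub_eq_zero.1 this, map_pow]

section Galois

variable {F L : Type*} [Field F] [Field L] [Algebra F L]

theorem card_le_finrank_adjoin_of_forall_eqOn [FiniteDimensional F L] [IsGalois F L] {S : Set L}
    {T : Finset Gal(L/F)} (h : ∀ σ ∈ T, ∀ τ ∈ T, Set.EqOn σ τ S) :
    T.card ≤ finrank (IntermediateField.adjoin F S) L := by
  obtain rfl | ⟨σ, hσ⟩ := T.eq_empty_or_nonempty
  · exact Nat.zero_le _
  have eq_on_adjoin (τ : T) : ∀ z ∈ IntermediateField.adjoin F S, τ.1 z = σ z := fun z hz ↦ by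
    have : (τ : L →ₐ[F] L).comp (IntermediateField.adjoin F S).val = (σ : L →ₐ[F] L).comp _ :=
      IntermediateField.adjoin_algHom_ext F fun x hx ↦ h τ τ.2 σ hσ hx
    exact DFunLike.congr_fun this ⟨z, hz⟩
  rw [← IsGalois.card_fixingSubgroup_eq_finrank, ← Nat.card_eq_finsetCard]
  refine Nat.card_le_card_of_injective (fun τ : T ↦ ⟨σ⁻¹ * τ, ?_⟩) fun τ τ' hτ ↦
    Subtype.ext (mul_left_cancel (congrArg Subtype.val hτ))
  refine (IntermediateField.mem_fixingSubgroup_iff _ _).2 fun z hz ↦ ?_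
  exact (congrArg σ.symm (eq_on_adjoin τ z hz)).trans (σ.symm_apply_apply z)

theorem exists_algEquiv_apply_eq_of_minpoly_eq_map [Normal F L] (E : IntermediateField F L) {y : L}
    (hy : minpoly E y = (minpoly F y).map (algebraMap F E)) (τ : Gal(L/F)) :
    ∃ σ : Gal(L/F), (∀ c ∈ E, σ c = τ c) ∧ σ y = y := by
  have root : Polynomial.aeval (τ⁻¹ y) (minpoly E y) = 0 := by
    rw [hy, Polynomial.aeval_map_algebraMap, Polynomial.aeval_algHom_apply, minpoly.aeval, map_zero]
  have hy : IsIntegral E y := (Normal.isIntegral (F := F) inferInstance y).tower_top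
  obtain ⟨ρ, hρ : ρ y = τ⁻¹ y⟩ := (Normal.minpoly_eq_iff_mem_orbit L).1
    (minpoly.eq_of_irreducible_of_monic (minpoly.irreducible hy) root (minpoly.monic hy)).symm
  refine ⟨τ * ρ.restrictScalars F, fun c hc ↦ congrArg τ (ρ.commutes ⟨c, hc⟩), ?_⟩
  exact (congrArg τ hρ).trans (τ.apply_symm_apply y)

end Galois

section FiniteField

theorem exists_map_eq_of_pow_natCard_eq {K k : Type*} [Field K] [Finite K] [Field k] (ι : K →+* k)
    {z : k} (hz : z ^ Nat.card K = z) : ∃ x, ι x = z := by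
  cases nonempty_fintype K
  have ne_zero : (Polynomial.X ^ Fintype.card K - Polynomial.X : k[X]) ≠ 0 :=
    FiniteField.X_pow_card_sub_X_ne_zero k Fintype.one_lt_card
  have splits : (Polynomial.X ^ Fintype.card K - Polynomial.X : K[X]).Splits := by
    rw [Polynomial.splits_iff_card_roots, FiniteField.roots_X_pow_card_sub_X,
      FiniteField.X_pow_card_sub_X_natDegree_eq K Fintype.one_lt_card, Finset.card_val,
      Finset.card_univ]
  have roots_map := splits.roots_map ι
  rw [FiniteField.roots_X_pow_card_sub_X, Polynomial.map_sub, Polynomial.map_pow,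
    Polynomial.map_X] at roots_map
  have : z ∈ Finset.univ.val.map ι := by
    rw [← roots_map, Polynomial.mem_roots ne_zero, Polynomial.IsRoot.def, Polynomial.eval_sub]
    simp [← Nat.card_eq_fintype_card, hz]
  simpa using this

theorem exists_finset_forall_algHom_ne_zero {K : Type*} [Field K] {w : K[X]} (hw : w ≠ 0)
    (K' : Type*) [Field K'] [Finite K'] [Algebra K K'] :
    ∃ W : Finset (K[X] →ₐ[K] K'),
      (∀ φ ∈ W, φ w ≠ 0) ∧ Nat.card K' ≤ W.card + w.natDegree := by
  classical
  cases nonempty_fintype K'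
  refine ⟨(w.rootSet K').toFinsetᶜ.map ⟨Polynomial.aeval, fun x y h ↦ ?_⟩, ?_, ?_⟩
  · simpa using DFunLike.congr_fun h Polynomial.X
  · intro φ hφ
    obtain ⟨x, hx, rfl⟩ := Finset.mem_map.1 hφ
    change Polynomial.aeval x w ≠ 0
    simpa [Polynomial.mem_rootSet, hw] using hx
  · have := w.ncard_rootSet_le K'
    rw [Set.ncard_eq_toFinset_card'] at this
    rw [Finset.card_map, Finset.card_compl, Nat.card_eq_fintype_card]
    lia

end FiniteField

end Frobenius

theorem exists_forall_exists_mul_lt_mul {ν : ℕ} (hν : ν ≠ 0) (c c' d : ℕ) :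
    ∃ l, ∀ Q > 0, ∃ N₀, ∀ N ≥ N₀, ∃ m,
      N * (l + c) + m < l * ν * m ∧ (ν - 1) * (Q * (m + c') + l + c) + d < Q * N := by
  obtain ⟨μ, rfl⟩ := Nat.exists_eq_succ_of_ne_zero hν
  refine ⟨μ * c + 2, fun Q hQ ↦ ?_⟩
  set l := μ * c + 2
  let R := μ * (l + c) + 1
  have hR : l * (μ + 1) = R + 1 := by simp only [l, R]; ring
  let C := R * (μ * (Q * (c' + 1) + l + c) + d)
  refine ⟨C + 1, fun N hN ↦ ⟨N * (l + c) / R + 1, ?_, ?_⟩⟩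
  all_goals set m := N * (l + c) / R + 1
  · have : N * (l + c) < R * m := Nat.lt_mul_div_succ _ (by simp [R])
    rw [Nat.succ_eq_add_one, hR]
    linarith
  have hm : R * m ≤ N * (l + c) + R := by
    simpa [m, mul_add] using Nat.mul_div_le _ _
  refine lt_of_mul_lt_mul_left (a := R) ?_ R.zero_le
  calc R * (μ * (Q * (m + c') + l + c) + d) = μ * Q * (R * m) + R * (μ * (Q * c' + l + c) + d) := by
        ring
    _ ≤ μ * Q * (N * (l + c) + R) + R * (μ * (Q * c' + l + c) + d) := by gcongr
    _ = Q * N * (μ * (l + c)) + C := by simp only [C]; ring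
    _ < Q * N * (μ * (l + c)) + Q * N := by
        gcongr
        nlinarith
    _ = R * (Q * N) := by simp only [R]; ring

section AbsolutelyIrreducible

open scoped Polynomial

variable {K F L k : Type*} [Field K] [Field F] [Field L] [Algebra K F] [Algebra K[X] F]
  [IsScalarTower K K[X] F] [IsFractionRing K[X] F] [Algebra F L] [Algebra K L]
  [IsScalarTower K F L] [Field k] [IsAlgClosed k] [Algebra K k]

variable (K F L k) in
theorem exists_ringHom_constantExtension_comp_algebraMap_eq :
    ∃ φ : constantExtension K F L →+* FractionRing k[X],
      (φ.comp (algebraMap F (constantExtension K F L))).comp (algebraMap K[X] F) =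
        (algebraMap k[X] (FractionRing k[X])).comp (Polynomial.mapRingHom (algebraMap K k)) := by
  have injective : Function.Injective (Polynomial.mapRingHom (algebraMap K k)) :=
    Polynomial.map_injective _ (algebraMap K k).injective
  let ψ : F →+* FractionRing k[X] := IsFractionRing.map injective
  have hψ : ψ.comp (algebraMap K[X] F) =
      (algebraMap k[X] (FractionRing k[X])).comp (Polynomial.mapRingHom (algebraMap K k)) :=
    IsLocalization.map_comp _
  let : Algebra F (FractionRing k[X]) := ψ.toAlgebra
  have hKF : algebraMap K F = (algebraMap K[X] F).comp Polynomial.C :=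
    IsScalarTower.algebraMap_eq ..
  have constants : ψ.comp (algebraMap K F) =
      (algebraMap k (FractionRing k[X])).comp (algebraMap K k) := by
    rw [hKF, ← RingHom.comp_assoc, hψ]
    ext x
    simp [IsScalarTower.algebraMap_apply k k[X] (FractionRing k[X])]
  obtain ⟨φ⟩ := IntermediateField.nonempty_algHom_adjoin_of_splits (F := F)
    (S := (algebraicClosure K L : Set L)) (K := FractionRing k[X]) fun c hc ↦ by
      have hc : IsIntegral K c := (mem_algebraicClosure_iff.1 hc).isIntegral
      refine ⟨hc.tower_top, ?_⟩
      refine Polynomial.Splits.of_dvd (g := ((minpoly K c).map (algebraMap K F)).map ψ) ?_ ?_ ?_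
      · rw [Polynomial.map_map, constants, ← Polynomial.map_map]
        exact (IsAlgClosed.splits _).map _
      · exact (((minpoly.monic hc).map _).map _).ne_zero
      · exact Polynomial.map_dvd _ (minpoly.dvd_map_of_isScalarTower K F c)
  refine ⟨φ, ?_⟩
  rw [← hψ]
  exact congrArg (RingHom.comp · _) φ.comp_algebraMap

theorem minpoly_constantExtension_eq_map {p : K[X][X]} (hp : p.Monic)
    (hirr : Irreducible (p.map (Polynomial.mapRingHom (algebraMap K k)))) {y : L}
    (hy : Polynomial.aeval y (p.map (algebraMap K[X] F)) = 0) :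
    minpoly (constantExtension K F L) y =
      (minpoly F y).map (algebraMap F (constantExtension K F L)) := by
  obtain ⟨φ, hφ⟩ := exists_ringHom_constantExtension_comp_algebraMap_eq K F L k
  have irreducible : Irreducible
      ((p.map (algebraMap K[X] F)).map (algebraMap F (constantExtension K F L))) := by
    refine ((hp.map _).map _).irreducible_of_irreducible_map φ _ ?_
    rw [Polynomial.map_map, Polynomial.map_map, hφ, ← Polynomial.map_map]
    exact (hp.map _).irreducible_iff_irreducible_map_fraction_map.1 hirr
  have minpoly_eq : p.map (algebraMap K[X] F) = minpoly F y :=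
    minpoly.eq_of_irreducible_of_monic
      ((hp.map _).irreducible_of_irreducible_map _ _ irreducible) hy (hp.map _)
  rw [← minpoly_eq]
  exact (minpoly.eq_of_irreducible_of_monic irreducible
    (by rwa [Polynomial.aeval_map_algebraMap]) ((hp.map _).map _)).symm

end AbsolutelyIrreducible

section FunctionField

open Module
open scoped Polynomial

variable {K L B k : Type*} [Field K] [Field L] [Algebra K L] [Algebra K[X] L]
  [IsScalarTower K K[X] L] [CommRing B] [IsDomain B] [Algebra K B] [Algebra K[X] B]
  [IsScalarTower K K[X] B] [Algebra B L] [IsScalarTower K[X] B L] [IsIntegralClosure B K[X] L]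
  [Field k] [Algebra K k]

variable (k) in
theorem exists_forall_card_le_of_forall_map_smul_eq_pow (F : Type*) [Field F] [Algebra K F]
    [Algebra K[X] F] [IsScalarTower K K[X] F] [IsFractionRing K[X] F] [Algebra F L]
    [IsScalarTower K F L] [IsScalarTower K[X] F L] [FiniteDimensional F L] [Algebra.IsSeparable F L]
    {ι : Type*} [Fintype ι] (b : Basis ι K[X] B) (G : Type*) [Group G] [Finite G]
    [MulSemiringAction G B] [SMulCommClass G K[X] B] {p : ℕ} (hp : 1 < p) [ExpChar K p] (d : ℕ) :
    ∃ N, ∀ n, N ≤ p ^ n → ∃ M, (finrank (constantExtension K F L) L - 1) * M + d < p ^ n ∧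
      ∀ (g : G) (S : Finset (B →ₐ[K] k)), (∀ P ∈ S, ∀ x, P (g • x) = P x ^ p ^ n) →
        S.card ≤ Fintype.card ι * M := by
  have : ExpChar L p := expChar_of_injective_algebraMap (algebraMap K L).injective p
  have : ExpChar k p := expChar_of_injective_algebraMap (algebraMap K k).injective p
  obtain ⟨c, hc⟩ := exists_isCoordDegreeSlack b G
  obtain ⟨c₁, family⟩ := exists_linearIndependent_mem_coordDegreeLT F (L := L) b
  obtain ⟨l, numeric⟩ := exists_forall_exists_mul_lt_mul
    (finrank_pos (R := constantExtension K F L) (M := L)).ne' (c₁ + c) (2 * c) d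
  obtain ⟨s, hs, independent⟩ := family l
  obtain ⟨a, ha⟩ := exists_eq_zero_of_sum_mul_pow_eq_zero F hp independent
  obtain ⟨N₀, hN₀⟩ := numeric (p ^ a) (by positivity)
  refine ⟨p ^ a * max N₀ 1, fun n hn ↦ ?_⟩
  obtain ⟨e, rfl⟩ : ∃ e, n = a + e := Nat.exists_eq_add_of_le <|
    (Nat.pow_le_pow_iff_right hp).1 ((Nat.le_mul_of_pos_right _ (by simp)).trans hn)
  rw [pow_add] at hn
  obtain ⟨m, hlt, hm⟩ := hN₀ (p ^ e) <|
    le_of_max_le_left (Nat.le_of_mul_le_mul_left hn (by positivity))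
  refine ⟨p ^ a * (m + 2 * c) + (l + c₁) + c, ?_, fun g S hS ↦
    hc.card_le_of_forall_map_smul_eq_pow hs (fun t ht ↦ ?_) ?_ g hS⟩
  · rw [pow_add, add_assoc _ _ c, add_assoc l]
    rwa [add_assoc _ l] at hm
  · refine funext fun j ↦ IsIntegralClosure.algebraMap_injective B K[X] L ?_
    refine (congrFun (ha (fun j ↦ algebraMap B L (t j)) ?_) j).trans (map_zero _).symm
    simpa using congrArg (algebraMap B L) ht
  · have : Nonempty ι := b.index_nonempty
    rw [Fintype.card_prod, Fintype.card_fin, Fintype.card_fin, mul_left_comm, add_assoc l]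
    exact Nat.mul_lt_mul_of_pos_left hlt Fintype.card_pos

theorem exists_algHom_apply_eq_of_forall_card_le [IsAlgClosed k] [FaithfulSMul K[X] B]
    {F : Type*} [Field F] [Algebra F L] [FiniteDimensional F L] [IsGalois F L]
    [MulSemiringAction Gal(L/F) B] [SMulDistribClass Gal(L/F) B L] [SMulCommClass Gal(L/F) K[X] B]
    [Algebra.IsInvariant K[X] B Gal(L/F)] {y : B}
    (hy : minpoly (constantExtension K F L) (algebraMap B L y) =
      (minpoly F (algebraMap B L y)).map (algebraMap F (constantExtension K F L)))
    {K' : Type*} [Field K'] [Finite K'] [Algebra K K'] (ι : K' →ₐ[K] k)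
    {W : Finset (K[X] →ₐ[K] K')} {M : ℕ}
    (hW : (finrank (constantExtension K F L) L - 1) * M < W.card)
    (hM : ∀ (g : Gal(L/F)) (S : Finset (B →ₐ[K] k)),
      (∀ P ∈ S, ∀ x, P (g • x) = P x ^ Nat.card K') → S.card ≤ Nat.card Gal(L/F) * M) :
    ∃ φ ∈ W, ∃ P : B →ₐ[K] k, ∃ β, (∀ a, P (algebraMap K[X] B a) = ι (φ a)) ∧ P y = ι β := by
  classical
  cases nonempty_fintype Gal(L/F)
  by_contra! no_point
  have : IsScalarTower K B L := .to₁₃₄ K K[X] B L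
  have : SMulCommClass Gal(L/F) K B := ⟨fun g a x ↦ by
    rw [← algebraMap_smul K[X] a x, smul_comm, algebraMap_smul]⟩
  let H : Finset Gal(L/F) := {τ | ∀ c ∈ algebraicClosure K L, τ c = c ^ Nat.card K'}
  have mem_H {τ : Gal(L/F)} {P : B →ₐ[K] k} (hP : ∀ x, P (τ • x) = P x ^ Nat.card K') : τ ∈ H :=
    Finset.mem_filter.2 ⟨Finset.mem_univ τ, fun c hc ↦
      smul_eq_pow_of_mem_algebraicClosure (A := K[X]) (P := (P : B →+* k)) hP hc⟩
  have card_H : H.card ≤ finrank (constantExtension K F L) L :=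
    card_le_finrank_adjoin_of_forall_eqOn fun σ hσ τ hτ c hc ↦
      ((Finset.mem_filter.1 hσ).2 c hc).trans ((Finset.mem_filter.1 hτ).2 c hc).symm
  obtain ⟨φ₀, -⟩ := Finset.card_pos.1 (pos_of_gt hW)
  obtain ⟨pair, -, hpair⟩ := exists_injective_forall_map_smul_eq_pow (B := B) Gal(L/F) ι φ₀
  obtain ⟨σ, hσ, hσy⟩ := exists_algEquiv_apply_eq_of_minpoly_eq_map _ hy (pair 1).2
  have σ_mem : σ ∈ H := Finset.mem_filter.2 ⟨Finset.mem_univ σ, fun c hc ↦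
    (hσ c (IntermediateField.subset_adjoin F _ hc)).trans
      ((Finset.mem_filter.1 (mem_H (hpair 1).2)).2 c hc)⟩
  have σ_smul : σ • y = y := IsIntegralClosure.algebraMap_injective B K[X] L <|
    (algebraMap.smul' ..).trans hσy
  have count := card_mul_card_le_sum_of_forall_map_smul_eq_pow ι W
    (fun g : Gal(L/F) ↦ if g ∈ H.erase σ then Nat.card Gal(L/F) * M else 0) fun g S hS ↦ by
      split_ifs with hg
      · exact hM g S fun P hP ↦ (hS P hP).2
      refine (Finset.card_eq_zero.2 <| Finset.eq_empty_of_forall_notMem fun P hP ↦ ?_).le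
      obtain ⟨⟨φ, hφ, hPφ⟩, hPg⟩ := hS P hP
      obtain rfl : g = σ := by_contra fun hne ↦ hg (Finset.mem_erase.2 ⟨hne, mem_H hPg⟩)
      obtain ⟨β, hβ⟩ := exists_map_eq_of_pow_natCard_eq (ι : K' →+* k)
        ((hPg y).symm.trans (congrArg P σ_smul))
      exact no_point φ hφ P β hPφ hβ.symm
  rw [Finset.sum_ite_mem, Finset.univ_inter, Finset.sum_const, Finset.card_erase_of_mem σ_mem,
    smul_eq_mul, mul_left_comm, ← Nat.card_eq_fintype_card, mul_comm] at count
  have := Nat.le_of_mul_le_mul_left count Nat.card_pos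
  exact absurd (this.trans (Nat.mul_le_mul_right M (Nat.sub_le_sub_right card_H 1))) hW.not_ge

end FunctionField

section AffineCurve

open Module
open scoped Polynomial

variable {K : Type*} [Field K] [Finite K]

section GaloisExtension

variable {F L : Type*} [Field F] [Field L] [Algebra K F] [Algebra K[X] F] [IsScalarTower K K[X] F]
  [IsFractionRing K[X] F] [Algebra K L] [Algebra K[X] L] [IsScalarTower K K[X] L] [Algebra F L]
  [IsScalarTower K F L] [IsScalarTower K[X] F L] [FiniteDimensional F L] [IsGalois F L]

theorem exists_forall_exists_algHom_integralClosure_apply_eq {y : integralClosure K[X] L}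
    (hy : minpoly (constantExtension K F L) (y : L) =
      (minpoly F (y : L)).map (algebraMap F (constantExtension K F L))) {w : K[X]} (hw : w ≠ 0)
    (k : Type*) [Field k] [IsAlgClosed k] [Algebra K k] :
    ∃ N, ∀ (K' : Type*) [Field K'] [Finite K'] [Algebra K K'] (ι : K' →ₐ[K] k), N ≤ Nat.card K' →
      ∃ (P : integralClosure K[X] L →ₐ[K] k) (φ : K[X] →ₐ[K] K') (β : K'),
        φ w ≠ 0 ∧ (∀ a, P (algebraMap K[X] _ a) = ι (φ a)) ∧ P y = ι β := by
  let B := integralClosure K[X] L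
  have : FaithfulSMul K[X] L := .trans K[X] F L
  have : Module.Finite K[X] B := IsIntegralClosure.finite K[X] F L B
  have : Module.Free K[X] B := IsIntegralClosure.module_free K[X] F L B
  have : IsFractionRing B L := IsIntegralClosure.isFractionRing_of_finite_extension K[X] F L B
  have : IsGaloisGroup Gal(L/F) K[X] B := .of_isFractionRing Gal(L/F) K[X] B F L
  have card_index : Fintype.card (Free.ChooseBasisIndex K[X] B) = Nat.card Gal(L/F) := by
    rw [← finrank_eq_card_chooseBasisIndex, IsIntegralClosure.rank K[X] F L B,
      IsGalois.card_aut_eq_finrank]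
  obtain ⟨p, _⟩ := CharP.exists K
  have hp : p.Prime := CharP.char_is_prime K p
  have : Fact p.Prime := ⟨hp⟩
  obtain ⟨N, hN⟩ := exists_forall_card_le_of_forall_map_smul_eq_pow (L := L) k F
    (Free.chooseBasis K[X] B) Gal(L/F) hp.one_lt w.natDegree
  refine ⟨N, fun K' _ _ _ ι hK' ↦ ?_⟩
  have : CharP K' p := charP_of_injective_algebraMap (algebraMap K K').injective p
  cases nonempty_fintype K'
  obtain ⟨n, -, hn⟩ := FiniteField.card K' p
  rw [← Nat.card_eq_fintype_card] at hn
  obtain ⟨M, hM, card_le⟩ := hN n (hn ▸ hK')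
  rw [card_index, ← hn] at card_le
  obtain ⟨W, hW, card_W⟩ := exists_finset_forall_algHom_ne_zero hw K'
  obtain ⟨φ, hφ, P, β, hPφ, hPβ⟩ :=
    exists_algHom_apply_eq_of_forall_card_le hy ι (W := W) (by lia) card_le
  exact ⟨P, φ, β, hW φ hφ, hPφ, hPβ⟩

theorem exists_forall_forall_aevalAeval_eq_zero {y : L} (hyint : IsIntegral K[X] y)
    (hy : minpoly (constantExtension K F L) y =
      (minpoly F y).map (algebraMap F (constantExtension K F L))) {w : K[X]} (hw : w ≠ 0) :
    ∃ N, ∀ (K' : Type*) [Field K'] [Finite K'] [Algebra K K'], N ≤ Nat.card K' →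
      ∃ α β : K', Polynomial.aeval α w ≠ 0 ∧
        ∀ f : K[X][X], Polynomial.aeval y f = 0 → Polynomial.aevalAeval α β f = 0 := by
  let y' : integralClosure K[X] L := ⟨y, hyint⟩
  obtain ⟨N, hN⟩ := exists_forall_exists_algHom_integralClosure_apply_eq (y := y') hy hw
    (AlgebraicClosure K)
  refine ⟨N, fun K' _ _ _ hK' ↦ ?_⟩
  obtain ⟨P, φ, β, hw, hPφ, hPβ⟩ := hN K' IsAlgClosed.lift hK'
  set ι : K' →ₐ[K] AlgebraicClosure K := IsAlgClosed.lift
  have hφ : Polynomial.aeval (φ Polynomial.X) = φ := by ext; simp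
  have comp_eq : ι.comp (Polynomial.aevalAeval (φ Polynomial.X) β) =
      P.comp ((Polynomial.aeval y').restrictScalars K) := by
    refine Polynomial.algHom_ext' ?_ ?_
    · ext
      simp [hPφ]
    · simp [hPβ]
  refine ⟨φ Polynomial.X, β, by rwa [hφ], fun f hf ↦ (map_eq_zero ι).1 ?_⟩
  have hf : Polynomial.aeval y' f = 0 :=
    Subtype.ext ((Polynomial.aeval_subalgebra_coe f _ y').trans hf)
  calc ι (Polynomial.aevalAeval (φ Polynomial.X) β f)
    _ = P (Polynomial.aeval y' f) := DFunLike.congr_fun comp_eq f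
    _ = 0 := by rw [hf, map_zero]

end GaloisExtension

theorem exists_forall_aevalAeval_eq_zero_of_irreducible_map {p : K[X][X]} (hp : p.Monic)
    (hsep : (p.map (algebraMap K[X] (FractionRing K[X]))).Separable) {k : Type*} [Field k]
    [IsAlgClosed k] [Algebra K k]
    (hirr : Irreducible (p.map (Polynomial.mapRingHom (algebraMap K k)))) {w : K[X]} (hw : w ≠ 0) :
    ∃ N, ∀ (K' : Type*) [Field K'] [Finite K'] [Algebra K K'], N ≤ Nat.card K' →
      ∃ α β : K', Polynomial.aeval α w ≠ 0 ∧ Polynomial.aevalAeval α β p = 0 := by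
  let F := FractionRing K[X]
  let L := (p.map (algebraMap K[X] F)).SplittingField
  have : IsGalois F L := .of_separable_splitting_field hsep
  have degree_ne_zero : p.degree ≠ 0 := fun h ↦ hirr.ne_one <| by
    rw [hp.degree_le_zero_iff_eq_one.1 h.le, Polynomial.map_one]
  have : IsScalarTower K K[X] L := .to₁₂₄ K K[X] F L
  obtain ⟨y, hy⟩ := (Polynomial.SplittingField.splits (p.map
    (algebraMap K[X] F))).exists_eval_eq_zero (by rwa [Polynomial.degree_map, hp.degree_map])
  rw [Polynomial.eval_map_algebraMap] at hy
  have hpy : Polynomial.aeval y p = 0 := by rwa [Polynomial.aeval_map_algebraMap] at hy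
  obtain ⟨N, hN⟩ := exists_forall_forall_aevalAeval_eq_zero (F := F) ⟨p, hp, hpy⟩
    (minpoly_constantExtension_eq_map hp hirr hy) hw
  refine ⟨N, fun K' _ _ _ hK' ↦ ?_⟩
  obtain ⟨α, β, hα, hαβ⟩ := hN K' hK'
  exact ⟨α, β, hα, hαβ p hpy⟩

end AffineCurve

section SeparatedVariables

open scoped Polynomial

theorem separable_map_sub_C_of_transcendental {K F : Type*} [Field K] [Field F] [Algebra K F]
    {D : K[X]} (hD : D.derivative ≠ 0) {s : F} (hs : Transcendental K s) :
    (D.map (algebraMap K F) - Polynomial.C s).Separable := by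
  let Ω := AlgebraicClosure F
  rw [Polynomial.separable_def, Polynomial.derivative_sub, Polynomial.derivative_C, sub_zero,
    Polynomial.derivative_map]
  refine (Polynomial.isCoprime_iff_aeval_ne_zero_of_isAlgClosed F Ω _ _).2 fun a ↦
    or_iff_not_imp_right.2 fun ha h ↦ ?_
  have ha : IsAlgebraic K a :=
    ⟨D.derivative, hD, by rwa [not_not, Polynomial.aeval_map_algebraMap] at ha⟩
  rw [map_sub, Polynomial.aeval_map_algebraMap, Polynomial.aeval_C, sub_eq_zero] at h
  have transcendental : Transcendental K (Polynomial.aeval a D) :=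
    h ▸ (transcendental_algebraMap_iff (algebraMap F Ω).injective).2 hs
  exact (transcendental_aeval_iff.1 transcendental).1 ha

variable {K : Type*} [Field K] {D : K[X]}

theorem isUnit_leadingCoeff_of_dvd_map_C_sub_C (hD : D.derivative ≠ 0) {p : K[X][X]}
    (hdvd : p ∣ D.map Polynomial.C - Polynomial.C D) : IsUnit p.leadingCoeff := by
  have D_ne_zero : D ≠ 0 := by
    rintro rfl
    simp at hD
  have degree_lt : (Polynomial.C D).degree < (D.map Polynomial.C).degree := by
    rw [Polynomial.degree_map_eq_of_injective Polynomial.C_injective]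
    refine Polynomial.degree_C_le.trans_lt (Polynomial.natDegree_pos_iff_degree_pos.1 ?_)
    exact Nat.pos_of_ne_zero fun h ↦ hD (Polynomial.derivative_of_natDegree_zero h)
  refine isUnit_of_dvd_unit (Polynomial.leadingCoeff_dvd_leadingCoeff hdvd) ?_
  rw [Polynomial.leadingCoeff_sub_of_degree_lt degree_lt,
    Polynomial.leadingCoeff_map_of_injective Polynomial.C_injective]
  exact (Polynomial.leadingCoeff_ne_zero.2 D_ne_zero).isUnit.map Polynomial.C

theorem separable_map_fractionRing_of_dvd_map_C_sub_C (hD : D.derivative ≠ 0) {p : K[X][X]}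
    (hdvd : p ∣ D.map Polynomial.C - Polynomial.C D) :
    (p.map (algebraMap K[X] (FractionRing K[X]))).Separable := by
  have natDegree_ne_zero : D.natDegree ≠ 0 := fun h ↦
    hD (Polynomial.derivative_of_natDegree_zero h)
  refine (separable_map_sub_C_of_transcendental hD <|
    (transcendental_algebraMap_iff (IsFractionRing.injective K[X] (FractionRing K[X]))).2
      (Polynomial.transcendental D natDegree_ne_zero <| mem_nonZeroDivisors_of_ne_zero <|
        Polynomial.leadingCoeff_ne_zero.2 <| Polynomial.ne_zero_of_natDegree_gt <|
        natDegree_ne_zero.bot_lt)).of_dvd ?_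
  convert Polynomial.map_dvd (algebraMap K[X] (FractionRing K[X])) hdvd
  rw [Polynomial.map_sub, Polynomial.map_C, Polynomial.map_map]
  rfl

variable [Finite K] {k : Type*} [Field k] [IsAlgClosed k] [Algebra K k] {w : K[X]}

theorem exists_forall_aevalAeval_eq_zero_of_dvd (hD : D.derivative ≠ 0) {p : K[X][X]}
    (hdvd : p ∣ D.map Polynomial.C - Polynomial.C D)
    (hirr : Irreducible (p.map (Polynomial.mapRingHom (algebraMap K k)))) (hw : w ≠ 0) :
    ∃ N, ∀ (K' : Type*) [Field K'] [Finite K'] [Algebra K K'], N ≤ Nat.card K' →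
      ∃ α β : K', Polynomial.aeval α w ≠ 0 ∧ Polynomial.aevalAeval α β p = 0 := by
  obtain ⟨u, hu⟩ := isUnit_leadingCoeff_of_dvd_map_C_sub_C hD hdvd
  let q := Polynomial.C (↑u⁻¹ : K[X]) * p
  have isUnit : IsUnit (Polynomial.C (↑u⁻¹ : K[X])) := u⁻¹.isUnit.map Polynomial.C
  have monic : q.Monic :=
    Polynomial.monic_C_mul_of_mul_leadingCoeff_eq_one (by rw [← hu, u.inv_mul])
  have irreducible : Irreducible (q.map (Polynomial.mapRingHom (algebraMap K k))) := by
    rw [Polynomial.map_mul]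
    exact (irreducible_isUnit_mul (isUnit.map (Polynomial.mapRingHom _))).2 hirr
  obtain ⟨N, hN⟩ := exists_forall_aevalAeval_eq_zero_of_irreducible_map (k := k) monic
    (separable_map_fractionRing_of_dvd_map_C_sub_C hD (isUnit.mul_left_dvd.2 hdvd))
    irreducible hw
  refine ⟨N, fun K' _ _ _ hK' ↦ ?_⟩
  obtain ⟨α, β, hα, hq⟩ := hN K' hK'
  rw [map_mul] at hq
  exact ⟨α, β, hα, (mul_eq_zero.1 hq).resolve_left (isUnit.map (Polynomial.aevalAeval α β)).ne_zero⟩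

theorem map_equivMvPolynomial {R S : Type*} [CommRing R] [CommRing S] (f : R →+* S) (q : R[X][X]) :
    map f (Polynomial.Bivariate.equivMvPolynomial R q) =
      Polynomial.Bivariate.equivMvPolynomial S (q.map (Polynomial.mapRingHom f)) := by
  suffices (map f).comp (Polynomial.Bivariate.equivMvPolynomial R : R[X][X] →+* _) =
      (Polynomial.Bivariate.equivMvPolynomial S : S[X][X] →+* _).comp
        (Polynomial.mapRingHom (Polynomial.mapRingHom f)) from congr($this q)
  ext <;> simp

theorem aeval_equivMvPolynomial {R A : Type*} [CommRing R] [CommRing A] [Algebra R A] (a b : A)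
    (q : R[X][X]) :
    aeval ![a, b] (Polynomial.Bivariate.equivMvPolynomial R q) = Polynomial.aevalAeval a b q := by
  suffices (aeval ![a, b]).comp (Polynomial.Bivariate.equivMvPolynomial R).toAlgHom =
      Polynomial.aevalAeval a b from congr($this q)
  ext <;> simp

theorem equivMvPolynomial_map_C_sub_C {R : Type*} [CommRing R] (D : R[X]) :
    Polynomial.Bivariate.equivMvPolynomial R (D.map Polynomial.C - Polynomial.C D) =
      Polynomial.aeval (X 1) D - Polynomial.aeval (X 0) D := by
  rw [map_sub]
  induction D using Polynomial.induction_on' with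
  | add p q hp hq =>
    simp only [Polynomial.map_add, map_add, add_sub_add_comm, hp, hq]
  | monomial n a => simp [← Polynomial.C_mul_X_pow_eq_monomial]

theorem exists_forall_aeval_eq_zero_of_dvd (hD : D.derivative ≠ 0) {p : MvPolynomial (Fin 2) K}
    (hdvd : p ∣ Polynomial.aeval (X 0) D - Polynomial.aeval (X 1) D)
    (hirr : Irreducible (map (algebraMap K k) p)) (hw : w ≠ 0) :
    ∃ N, ∀ (K' : Type*) [Field K'] [Finite K'] [Algebra K K'], N ≤ Nat.card K' →
      ∃ α β : K', Polynomial.aeval α w ≠ 0 ∧ aeval ![α, β] p = 0 := by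
  obtain ⟨q, rfl⟩ := (Polynomial.Bivariate.equivMvPolynomial K).surjective p
  rw [dvd_sub_comm, ← equivMvPolynomial_map_C_sub_C, map_dvd_iff] at hdvd
  rw [map_equivMvPolynomial, MulEquiv.irreducible_iff] at hirr
  simp only [aeval_equivMvPolynomial]
  exact exists_forall_aevalAeval_eq_zero_of_dvd hD hdvd hirr hw

theorem aeval_pderiv_mul_eq_zero {R A σ : Type*} [CommSemiring R] [CommSemiring A] [Algebra R A]
    {x : σ → A} {u v : MvPolynomial σ R} (hu : aeval x u = 0) (hv : aeval x v = 0) (i : σ) :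
    aeval x (pderiv i (u * v)) = 0 := by
  rw [pderiv_mul, map_add, map_mul, map_mul, hu, hv, mul_zero, zero_mul, add_zero]

theorem exists_forall_aeval_ne_zero_and_aeval_eq_zero (hD : D.derivative ≠ 0)
    {u h : MvPolynomial (Fin 2) K}
    (huh : u * h = Polynomial.aeval (X 0) D - Polynomial.aeval (X 1) D)
    (hfac : ∃ p, p ∣ h ∧ Irreducible (map (algebraMap K k) p)) :
    ∃ N, ∀ (K' : Type*) [Field K'] [Finite K'] [Algebra K K'], N ≤ Nat.card K' →
      ∃ α β : K', aeval ![α, β] u ≠ 0 ∧ aeval ![α, β] h = 0 := by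
  obtain ⟨p, p_dvd, irreducible⟩ := hfac
  obtain ⟨N, hN⟩ :=
    exists_forall_aeval_eq_zero_of_dvd hD (huh ▸ p_dvd.mul_left u) irreducible hD
  refine ⟨N, fun K' _ _ _ hK' ↦ ?_⟩
  obtain ⟨α, β, hα, hp⟩ := hN K' hK'
  have hh : aeval ![α, β] h = 0 := zero_dvd_iff.1 (hp ▸ map_dvd (aeval ![α, β]) p_dvd)
  refine ⟨α, β, fun hu ↦ hα ?_, hh⟩
  have := aeval_pderiv_mul_eq_zero hu hh 0
  simpa [huh, ← Polynomial.aeval_algHom_apply, Derivation.map_aeval] using this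

end SeparatedVariables

theorem derivative_X_add_one_pow_add_X_pow_ne_zero {K : Type*} [Field K] [CharP K 2] {t : ℕ}
    (ht : 1 < t) (htodd : Odd t) :
    Polynomial.derivative ((Polynomial.X + 1) ^ t + Polynomial.X ^ t : Polynomial K) ≠ 0 := by
  intro h
  have t_eq_one : (t : K) = 1 := by
    rw [CharTwo.natCast_eq_ite, if_neg (Nat.not_even_iff_odd.2 htodd)]
  have := congr_arg (Polynomial.eval 0) h
  simp [t_eq_one, Polynomial.derivative_pow, (by lia : t - 1 ≠ 0)] at this

theorem stmt_3_general {K : Type*} [Field K] [Finite K] [CharP K 2] {k : Type*} [Field k]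
    [IsAlgClosed k] [Algebra K k] {t : ℕ} (ht : 3 ≤ t) (htodd : Odd t)
    {h : MvPolynomial (Fin 2) K}
    (hh : (X 0 + X 1) * (X 0 + X 1 + 1) * h =
      (X 0 + 1) ^ t + X 0 ^ t + (X 1 + 1) ^ t + X 1 ^ t)
    (hfac : ∃ p, p ∣ h ∧ Irreducible (map (algebraMap K k) p)) :
    ∃ N, ∀ (K' : Type*) [Field K'] [Finite K'] [Algebra K K'], N ≤ Nat.card K' →
      ∃ α β : K', α ≠ β ∧ α ≠ β + 1 ∧ aeval ![α, β] h = 0 := by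
  have huh : (X 0 + X 1) * (X 0 + X 1 + 1) * h =
      Polynomial.aeval (X 0) ((Polynomial.X + 1) ^ t + Polynomial.X ^ t : Polynomial K) -
        Polynomial.aeval (X 1) ((Polynomial.X + 1) ^ t + Polynomial.X ^ t : Polynomial K) := by
    rw [hh]
    simp [CharTwo.sub_eq_add, add_assoc]
  obtain ⟨N, hN⟩ := exists_forall_aeval_ne_zero_and_aeval_eq_zero
    (derivative_X_add_one_pow_add_X_pow_ne_zero (by lia) htodd) huh hfac
  refine ⟨N, fun K' _ _ _ hK' ↦ ?_⟩
  obtain ⟨α, β, hu, hαβ⟩ := hN K' hK'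
  have : CharP K' 2 := charP_of_injective_algebraMap (algebraMap K K').injective 2
  refine ⟨α, β, ?_, ?_, hαβ⟩ <;> rintro rfl <;> apply hu
  · simp [CharTwo.add_self_eq_zero]
  · simp [add_right_comm, CharTwo.add_self_eq_zero]

/-- If `h_t(x,y) = ((x+1)^t + x^t + (y+1)^t + y^t)/((x+y)(x+y+1))` has an absolutely
irreducible factor defined over `𝔽₂`, then for all sufficiently large `n` it has a rational
point `(α, β)` over `𝔽_{2^n}` with `α ≠ β` and `α ≠ β + 1`. -/
theorem stmt_3 (t : ℕ) (ht : 3 ≤ t) (htodd : Odd t)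
    (h : MvPolynomial (Fin 2) (ZMod 2))
    (hh : (X 0 + X 1) * (X 0 + X 1 + 1) * h =
      (X 0 + 1) ^ t + X 0 ^ t + (X 1 + 1) ^ t + X 1 ^ t)
    (hfac : ∃ p : MvPolynomial (Fin 2) (ZMod 2), p ∣ h ∧
      Irreducible (MvPolynomial.map (algebraMap (ZMod 2) (AlgebraicClosure (ZMod 2))) p)) :
    ∃ N : ℕ, ∀ n ≥ N, ∃ α β : GaloisField 2 n,
      α ≠ β ∧ α ≠ β + 1 ∧ (MvPolynomial.aeval ![α, β]) h = 0 := by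
  obtain ⟨N, hN⟩ := stmt_3_general ht htodd hh hfac
  refine ⟨N + 1, fun n hn ↦ hN (GaloisField 2 n) ?_⟩
  rw [GaloisField.card 2 n (by lia)]
  exact (Nat.le_of_succ_le hn).trans n.lt_two_pow_self.le
end

section
/- Let t = 2^i·ℓ + 1 where i ≥ 1 and ℓ ≥ 1 is odd, let K be a field of characteristic 2, let α, β ∈ K and set λ = α + β + 1. Write f_t(x,y) = x^t + y^t + 1 + (x+y+1)^t ∈ K[x,y], and for m ≥ 0 let F_m denote the degree-m homogeneous component of f_t(x+α, y+β). Then: F_0 = α^t + β^t + λ^t + 1; F_1 = (α^{t−1} + λ^{t−1})x + (β^{t−1} + λ^{t−1})y; F_j = 0 for all j with 1 < j < 2^i; F_{2^i} = (α^{t−2^i} + λ^{t−2^i})x^{2^i} + (β^{t−2^i} + λ^{t−2^i})y^{2^i}; and F_{2^i+1} = (α^{t−2^i−1} + λ^{t−2^i−1})x^{2^i+1} + (β^{t−2^i−1} + λ^{t−2^i−1})y^{2^i+1} + λ^{t−2^i−1}(x^{2^i}y + x y^{2^i}). -/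
open MvPolynomial

/-! Put `q = 2 ^ i`. After the translation every summand of `f_t` other than `1` is a `t`-th power
of a linear form plus a constant, so by the binomial theorem its component of degree `j ≠ 0` is
`t.choose j` times an explicit form. As `t = q ℓ + 1` with `1 < q`, Lucas' theorem in base `q`
gives, modulo `2`, `t.choose 1 = 1`, `t.choose j = 0` for `1 < j < q`, and
`t.choose q = t.choose (q + 1) = ℓ`. The powers `(x + y) ^ q` and `(x + y) ^ (q + 1)` that remain
are expanded by the Frobenius endomorphism. -/

section Lucas

variable {p : ℕ} [Fact p.Prime]

theorem choose_modEq_choose_mod_pow_mul_choose_div_pow (n k a : ℕ) :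
    n.choose k ≡ (n % p ^ a).choose (k % p ^ a) * (n / p ^ a).choose (k / p ^ a) [MOD p] := by
  induction a generalizing n k with
  | zero => simpa [Nat.mod_one] using Nat.ModEq.refl _
  | succ a ih =>
    have mod_pow_succ_mod (m : ℕ) : m % p ^ (a + 1) % p = m % p :=
      Nat.mod_mod_of_dvd m (dvd_pow_self p a.succ_ne_zero)
    have mod_pow_succ_div (m : ℕ) : m % p ^ (a + 1) / p = m / p % p ^ a := by
      rw [pow_succ', Nat.mod_mul_right_div_self]
    have lucas_remainder := Choose.choose_modEq_choose_mod_mul_choose_div_nat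
      (p := p) (n := n % p ^ (a + 1)) (k := k % p ^ (a + 1))
    simp only [mod_pow_succ_mod, mod_pow_succ_div] at lucas_remainder
    calc n.choose k
        ≡ (n % p).choose (k % p) * (n / p).choose (k / p) [MOD p] :=
          Choose.choose_modEq_choose_mod_mul_choose_div_nat
      _ ≡ (n % p).choose (k % p) * ((n / p % p ^ a).choose (k / p % p ^ a) *
            (n / p / p ^ a).choose (k / p / p ^ a)) [MOD p] := (ih _ _).mul_left _
      _ ≡ (n % p ^ (a + 1)).choose (k % p ^ (a + 1)) *
            (n / p ^ (a + 1)).choose (k / p ^ (a + 1)) [MOD p] := by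
          rw [← mul_assoc, Nat.div_div_eq_div_mul, Nat.div_div_eq_div_mul, ← pow_succ']
          exact lucas_remainder.symm.mul_right _

theorem cast_choose_pow_mul_add (R : Type*) [Semiring R] [CharP R p] {a r s : ℕ} (m k : ℕ)
    (hr : r < p ^ a) (hs : s < p ^ a) :
    ((p ^ a * m + r).choose (p ^ a * k + s) : R) = r.choose s * m.choose k := by
  have hq : 0 < p ^ a := r.zero_le.trans_lt hr
  have lucas := CharP.natCast_eq_natCast' R p <|
    choose_modEq_choose_mod_pow_mul_choose_div_pow (p := p) (p ^ a * m + r) (p ^ a * k + s) a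
  simpa only [Nat.mul_add_mod, Nat.mul_add_div hq, Nat.mod_eq_of_lt hr, Nat.mod_eq_of_lt hs,
    Nat.div_eq_of_lt hr, Nat.div_eq_of_lt hs, add_zero, Nat.cast_mul] using lucas

end Lucas

theorem add_pow_char_pow_add_one {R : Type*} [CommSemiring R] (p : ℕ) [Fact p.Prime] [CharP R p]
    (x y : R) (n : ℕ) :
    (x + y) ^ (p ^ n + 1) =
      x ^ (p ^ n + 1) + y ^ (p ^ n + 1) + (x ^ p ^ n * y + x * y ^ p ^ n) := by
  rw [pow_succ, add_pow_char_pow]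
  ring

-- For `t < j` the exponent `t - j` is truncated, but then the binomial coefficient is zero.
theorem homogeneousComponent_add_C_pow {σ R : Type*} [CommSemiring R] {P : MvPolynomial σ R}
    (hP : P.IsHomogeneous 1) (c : R) (t j : ℕ) :
    homogeneousComponent j ((P + C c) ^ t) = C (t.choose j * c ^ (t - j)) * P ^ j := by
  have binomial : (P + C c) ^ t =
      ∑ m ∈ Finset.range (t + 1), C (t.choose m * c ^ (t - m)) * P ^ m := by
    rw [add_pow]
    refine Finset.sum_congr rfl fun m _ => ?_
    simp only [map_mul, map_pow, map_natCast]
    ring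
  have hPow (m : ℕ) : (P ^ m).IsHomogeneous m := by simpa only [one_mul] using hP.pow m
  have component_term (m : ℕ) : homogeneousComponent j (C (t.choose m * c ^ (t - m)) * P ^ m) =
      if j = m then C (t.choose m * c ^ (t - m)) * P ^ m else 0 :=
    homogeneousComponent_of_mem ((hPow m).C_mul _)
  rw [binomial, map_sum, Finset.sum_congr rfl fun m _ => component_term m, Finset.sum_ite_eq]
  split_ifs with hj
  · rfl
  · rw [Nat.choose_eq_zero_of_lt (by simpa [Nat.lt_succ_iff] using hj)]
    simp

section Translation

variable {R : Type*} [CommSemiring R]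

/-- The polynomial `f_t(x + α, y + β)` with `f_t(x, y) = x^t + y^t + 1 + (x + y + 1)^t`, whose
homogeneous components describe `f_t` near the point `(α, β)`; the variables `x` and `y` are `X 0`
and `X 1`. -/
noncomputable def translatedPowerSum (t : ℕ) (α β : R) : MvPolynomial (Fin 2) R :=
  bind₁ ![X 0 + C α, X 1 + C β] (X 0 ^ t + X 1 ^ t + 1 + (X 0 + X 1 + 1) ^ t)

theorem translatedPowerSum_eq (t : ℕ) (α β : R) :
    translatedPowerSum t α β =
      (X 0 + C α) ^ t + (X 1 + C β) ^ t + 1 + (X 0 + X 1 + C (α + β + 1)) ^ t := by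
  simp only [translatedPowerSum, map_add, map_pow, map_one, bind₁_X_right, Matrix.cons_val_zero,
    Matrix.cons_val_one]
  ring

theorem homogeneousComponent_zero_translatedPowerSum (t : ℕ) (α β : R) :
    homogeneousComponent 0 (translatedPowerSum t α β) =
      C (α ^ t + β ^ t + (α + β + 1) ^ t + 1) := by
  rw [homogeneousComponent_zero, ← constantCoeff_eq, translatedPowerSum_eq]
  simp only [map_add, map_pow, map_one, constantCoeff_X, constantCoeff_C, zero_add]
  ring

theorem homogeneousComponent_translatedPowerSum {j : ℕ} (hj : j ≠ 0) (t : ℕ) (α β : R) :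
    homogeneousComponent j (translatedPowerSum t α β) =
      C (t.choose j : R) * (C (α ^ (t - j)) * X 0 ^ j + C (β ^ (t - j)) * X 1 ^ j +
        C ((α + β + 1) ^ (t - j)) * (X 0 + X 1) ^ j) := by
  have hX (k : Fin 2) : (X k : MvPolynomial (Fin 2) R).IsHomogeneous 1 := isHomogeneous_X R k
  have component_one : homogeneousComponent j (1 : MvPolynomial (Fin 2) R) = 0 := by
    rw [homogeneousComponent_of_mem (isHomogeneous_one (Fin 2) R), if_neg hj]
  rw [translatedPowerSum_eq, map_add, map_add, map_add, component_one,
    homogeneousComponent_add_C_pow (hX 0), homogeneousComponent_add_C_pow (hX 1),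
    homogeneousComponent_add_C_pow ((hX 0).add (hX 1))]
  simp only [map_mul]
  ring

end Translation

theorem stmt_6_general (K : Type*) [CommSemiring K] [CharP K 2] (i l t : ℕ) (hi : 1 ≤ i)
    (ht : t = 2 ^ i * l + 1) (α β : K) :
    let lam : K := α + β + 1
    let sh : MvPolynomial (Fin 2) K := translatedPowerSum t α β
    (homogeneousComponent 0 sh = C (α ^ t + β ^ t + lam ^ t + 1)) ∧
    (homogeneousComponent 1 sh =
      C (α ^ (t - 1) + lam ^ (t - 1)) * X 0 + C (β ^ (t - 1) + lam ^ (t - 1)) * X 1) ∧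
    (∀ j : ℕ, 1 < j → j < 2 ^ i → homogeneousComponent j sh = 0) ∧
    (homogeneousComponent (2 ^ i) sh =
      C (l : K) * (C (α ^ (t - 2 ^ i) + lam ^ (t - 2 ^ i)) * X 0 ^ 2 ^ i +
        C (β ^ (t - 2 ^ i) + lam ^ (t - 2 ^ i)) * X 1 ^ 2 ^ i)) ∧
    (homogeneousComponent (2 ^ i + 1) sh =
      C (l : K) * (C (α ^ (t - 2 ^ i - 1) + lam ^ (t - 2 ^ i - 1)) * X 0 ^ (2 ^ i + 1) +
        C (β ^ (t - 2 ^ i - 1) + lam ^ (t - 2 ^ i - 1)) * X 1 ^ (2 ^ i + 1) +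
        C (lam ^ (t - 2 ^ i - 1)) * (X 0 ^ 2 ^ i * X 1 + X 0 * X 1 ^ 2 ^ i))) := by
  intro lam sh
  have hq : 1 < 2 ^ i := Nat.one_lt_two_pow (Nat.one_le_iff_ne_zero.mp hi)
  have choose_low (j : ℕ) (hj : j < 2 ^ i) : (t.choose j : K) = Nat.choose 1 j := by
    simpa [ht] using cast_choose_pow_mul_add K l 0 hq hj
  have choose_high (s : ℕ) (hs : s < 2 ^ i) :
      (t.choose (2 ^ i + s) : K) = Nat.choose 1 s * l := by
    simpa [ht] using cast_choose_pow_mul_add K l 1 hq hs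
  have choose_q : (t.choose (2 ^ i) : K) = l := by simpa using choose_high 0 (by positivity)
  have choose_q_add_one : (t.choose (2 ^ i + 1) : K) = l := by simpa using choose_high 1 hq
  refine ⟨homogeneousComponent_zero_translatedPowerSum t α β, ?_, fun j hj hjq => ?_, ?_, ?_⟩
  · rw [homogeneousComponent_translatedPowerSum one_ne_zero, choose_low 1 hq, Nat.choose_self]
    simp only [Nat.cast_one, map_one, map_add, pow_one]
    ring
  · rw [homogeneousComponent_translatedPowerSum (by lia), choose_low j hjq,
      Nat.choose_eq_zero_of_lt hj, Nat.cast_zero, C_0, zero_mul]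
  · rw [homogeneousComponent_translatedPowerSum (by positivity), choose_q, add_pow_char_pow]
    simp only [map_add]
    ring
  · rw [homogeneousComponent_translatedPowerSum (by positivity), choose_q_add_one,
      add_pow_char_pow_add_one, ← Nat.sub_sub]
    simp only [map_add]
    ring

/-- The low-degree homogeneous components of `f_t(x+α, y+β)`, where
`f_t(x,y) = x^t + y^t + 1 + (x+y+1)^t` and `t = 2^i ℓ + 1`. -/
theorem stmt_6 (K : Type*) [Field K] [CharP K 2] (i l t : ℕ) (hi : 1 ≤ i)
    (hl : 1 ≤ l) (hlodd : Odd l) (ht : t = 2 ^ i * l + 1) (α β : K) :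
    let lam : K := α + β + 1
    let sh : MvPolynomial (Fin 2) K := bind₁ ![X 0 + C α, X 1 + C β]
      (X 0 ^ t + X 1 ^ t + 1 + (X 0 + X 1 + 1) ^ t)
    (homogeneousComponent 0 sh = C (α ^ t + β ^ t + lam ^ t + 1)) ∧
    (homogeneousComponent 1 sh =
      C (α ^ (t - 1) + lam ^ (t - 1)) * X 0 + C (β ^ (t - 1) + lam ^ (t - 1)) * X 1) ∧
    (∀ j : ℕ, 1 < j → j < 2 ^ i → homogeneousComponent j sh = 0) ∧
    (homogeneousComponent (2 ^ i) sh =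
      C (α ^ (t - 2 ^ i) + lam ^ (t - 2 ^ i)) * X 0 ^ 2 ^ i +
        C (β ^ (t - 2 ^ i) + lam ^ (t - 2 ^ i)) * X 1 ^ 2 ^ i) ∧
    (homogeneousComponent (2 ^ i + 1) sh =
      C (α ^ (t - 2 ^ i - 1) + lam ^ (t - 2 ^ i - 1)) * X 0 ^ (2 ^ i + 1) +
        C (β ^ (t - 2 ^ i - 1) + lam ^ (t - 2 ^ i - 1)) * X 1 ^ (2 ^ i + 1) +
        C (lam ^ (t - 2 ^ i - 1)) * (X 0 ^ 2 ^ i * X 1 + X 0 * X 1 ^ 2 ^ i)) := by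
  have hlK : (l : K) = 1 := natCast_eq_one_of_odd_of_two_eq_zero hlodd CharTwo.two_eq_zero
  simpa only [translatedPowerSum, hlK, map_one, one_mul] using stmt_6_general K i l t hi ht α β
end

section
/- Let t = 2^i·ℓ + 1 where i ≥ 1 and ℓ ≥ 3 is odd, let K be an algebraically closed field of characteristic 2, and let α, β ∈ K satisfy α^ℓ = β^ℓ = (α+β+1)^ℓ = 1. Set λ = α + β + 1 and let F_{2^i+1} = (α^{t−2^i−1} + λ^{t−2^i−1})x^{2^i+1} + (β^{t−2^i−1} + λ^{t−2^i−1})y^{2^i+1} + λ^{t−2^i−1}(x^{2^i}y + x y^{2^i}), the degree-(2^i+1) homogeneous component of f_t(x+α, y+β) where f_t(x,y) = x^t + y^t + 1 + (x+y+1)^t. Then F_{2^i+1} is nonzero and is a product of 2^i + 1 pairwise non-proportional linear forms over K; in particular F_{2^i+1} is squarefree. -/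
open MvPolynomial

/-!
Write `q = 2 ^ i`. Since `α ^ l = 1`, the power `α ^ (t - q - 1)` is the inverse of `α ^ q`, and
likewise for `β` and `λ`. Hence `F = ∑ A i j x_i ^ q x_j` for a symmetric matrix `A` with
`det A = (α ^ q + β ^ q + λ ^ q) / (α β λ) ^ q`, and the numerator is `(α + β + λ) ^ q = 1`.

Because `q = 0` in `K`, the partial derivatives of `F` are the entries of the row vector
`(x_i ^ q) A`. As `A` is invertible, the square of a polynomial `d` can divide `F` only if `d`
divides both `x ^ q` and `y ^ q`, so `F` is squarefree. Any binary form over an algebraically closed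
field is a product of linear forms, and those of a squarefree form are pairwise non-proportional.
-/

theorem dvd_derivation_of_mul_self_dvd {R A : Type*} [CommSemiring R] [CommSemiring A] [Algebra R A]
    (D : Derivation R A A) {d p : A} (h : d * d ∣ p) : d ∣ D p := by
  obtain ⟨e, rfl⟩ := h
  simp only [Derivation.leibniz, smul_eq_mul]
  exact ⟨d * D e + 2 * e * D d, by ring⟩

theorem isRelPrime_X_pow_X_pow {σ R : Type*} [CommRing R] [IsDomain R] {i j : σ} (hij : i ≠ j)
    (m n : ℕ) : IsRelPrime (X i ^ m : MvPolynomial σ R) (X j ^ n) := fun d hi hj ↦ by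
  obtain ⟨r, -, hr⟩ := (dvd_prime_pow X_prime m).mp hi
  rcases r.eq_zero_or_pos with rfl | hr_pos
  · simpa [associated_one_iff_isUnit] using hr
  · have X_i_dvd_X_j : (X i : MvPolynomial σ R) ∣ X j :=
      X_prime.dvd_of_dvd_pow ((dvd_pow_self _ hr_pos.ne').trans (hr.symm.dvd.trans hj))
    exact absurd (X_dvd_X.mp X_i_dvd_X_j) hij

section FrobeniusForm

variable {σ R : Type*} [Fintype σ] [CommSemiring R]

/-- The form `∑ A i j x_i ^ q x_j` with coefficient matrix `A`. When `q` is a power of the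
characteristic this is usually called a Frobenius form; here `q` may be any natural number. -/
noncomputable def frobeniusForm (q : ℕ) (A : Matrix σ σ R) : MvPolynomial σ R :=
  ∑ i, ∑ j, C (A i j) * X i ^ q * X j

theorem isHomogeneous_frobeniusForm (q : ℕ) (A : Matrix σ σ R) :
    (frobeniusForm q A).IsHomogeneous (q + 1) :=
  .sum _ _ _ fun i _ ↦ .sum _ _ _ fun j _ ↦
    (isHomogeneous_C_mul_X_pow (A i j) i q).mul (isHomogeneous_X R j)

theorem frobeniusForm_symm_fin_two (q : ℕ) (a b m : R) :
    frobeniusForm q !![a, m; m, b] =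
      C a * X 0 ^ (q + 1) + C b * X 1 ^ (q + 1) + C m * (X 0 ^ q * X 1 + X 0 * X 1 ^ q) := by
  simp only [frobeniusForm, Fin.sum_univ_two, Matrix.of_apply, Matrix.cons_val',
    Matrix.cons_val_zero, Matrix.cons_val_one, Matrix.cons_val_fin_one]
  ring

open Matrix in
theorem pderiv_frobeniusForm {q : ℕ} (hq : (q : R) = 0) (A : Matrix σ σ R) (k : σ) :
    pderiv k (frobeniusForm q A) = ((fun i ↦ X i ^ q) ᵥ* A.map C) k := by
  classical
  have hq' : (q : MvPolynomial σ R) = 0 := by rw [← map_natCast C, hq, map_zero]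
  simp [frobeniusForm, pderiv_X, Matrix.vecMul, dotProduct, Pi.single_apply, hq', mul_comm]

end FrobeniusForm

section SquarefreeFrobeniusForm

variable {σ R : Type*} [Fintype σ] [DecidableEq σ] [CommRing R]

open Matrix in
theorem dvd_X_pow_of_mul_self_dvd_frobeniusForm {q : ℕ} (hq : (q : R) = 0)
    {A : Matrix σ σ R} (hA : IsUnit A.det) {d : MvPolynomial σ R}
    (hd : d * d ∣ frobeniusForm q A) (i : σ) : d ∣ X i ^ q := by
  have X_pow_eq : (fun i ↦ (X i : MvPolynomial σ R) ^ q) =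
      (fun k ↦ pderiv k (frobeniusForm q A)) ᵥ* A⁻¹.map C := by
    simp only [pderiv_frobeniusForm hq, Matrix.vecMul_vecMul, ← Matrix.map_mul,
      Matrix.mul_nonsing_inv A hA, Matrix.map_one C C_0 C_1, Matrix.vecMul_one]
  rw [congrFun X_pow_eq i]
  exact Finset.dvd_sum fun k _ ↦ (dvd_derivation_of_mul_self_dvd (pderiv k) hd).mul_right _

theorem squarefree_frobeniusForm [Nontrivial σ] [IsDomain R] {q : ℕ}
    (hq : (q : R) = 0) {A : Matrix σ σ R} (hA : IsUnit A.det) :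
    Squarefree (frobeniusForm q A) := fun d hd ↦ by
  obtain ⟨i, j, hij⟩ := exists_pair_ne σ
  exact isRelPrime_X_pow_X_pow hij q q
    (dvd_X_pow_of_mul_self_dvd_frobeniusForm hq hA hd i)
    (dvd_X_pow_of_mul_self_dvd_frobeniusForm hq hA hd j)

end SquarefreeFrobeniusForm

theorem not_isUnit_of_isHomogeneous {σ R : Type*} [CommSemiring R] [Nontrivial R] {n : ℕ}
    (hn : n ≠ 0) {p : MvPolynomial σ R} (hp : p.IsHomogeneous n) : ¬IsUnit p := fun h ↦ by
  have constantCoeff_eq_zero : constantCoeff p = 0 := hp.coeff_eq_zero (by simpa using hn.symm)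
  exact not_isUnit_zero (constantCoeff_eq_zero ▸ h.map constantCoeff)

theorem isRelPrime_of_squarefree_prod {ι M : Type*} [CommMonoid M] {s : Finset ι} {f : ι → M}
    (hf : Squarefree (∏ j ∈ s, f j)) {j k : ι} (hj : j ∈ s) (hk : k ∈ s) (hjk : j ≠ k) :
    IsRelPrime (f j) (f k) := by
  classical
  have mul_dvd_prod : f j * f k ∣ ∏ j ∈ s, f j := by
    rw [← Finset.prod_pair hjk]
    exact Finset.prod_dvd_prod_of_subset _ _ _ (by simp [Finset.insert_subset_iff, hj, hk])
  exact .of_squarefree_mul (hf.squarefree_of_dvd mul_dvd_prod)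

section LinearFactors

variable {K : Type*} [Field K] [IsAlgClosed K] {n : ℕ}

theorem exists_eq_mul_natDegree_le {p : Polynomial K} (hp : p.natDegree ≤ n + 1) :
    ∃ l g : Polynomial K, l.natDegree ≤ 1 ∧ g.natDegree ≤ n ∧ p = l * g := by
  rcases hp.lt_or_eq with hlt | heq
  · exact ⟨1, p, by simp, by lia, (one_mul p).symm⟩
  · have degree_ne_zero : p.degree ≠ 0 := fun h ↦ by
      simp [Polynomial.natDegree_eq_of_degree_eq_some h] at heq
    obtain ⟨r, hr⟩ := IsAlgClosed.exists_root p degree_ne_zero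
    refine ⟨Polynomial.X - Polynomial.C r, p /ₘ (Polynomial.X - Polynomial.C r), by simp, ?_,
      (Polynomial.mul_divByMonic_eq_iff_isRoot.mpr hr).symm⟩
    simp [Polynomial.natDegree_divByMonic _ (Polynomial.monic_X_sub_C r), heq]

theorem exists_homogenize_eq_prod {p : Polynomial K} (hp : p.natDegree ≤ n + 1) :
    ∃ L : Fin (n + 1) → MvPolynomial (Fin 2) K,
      (∀ j, (L j).IsHomogeneous 1) ∧ p.homogenize (n + 1) = ∏ j, L j := by
  induction n generalizing p with
  | zero => exact ⟨fun _ ↦ p.homogenize 1, fun _ ↦ p.isHomogeneous_homogenize, by simp⟩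
  | succ n ih =>
    obtain ⟨l, g, hl, hg, rfl⟩ := exists_eq_mul_natDegree_le hp
    obtain ⟨L, hL, hgL⟩ := ih hg
    refine ⟨Fin.cons (l.homogenize 1) L, Fin.cases l.isHomogeneous_homogenize hL, ?_⟩
    rw [Fin.prod_cons, ← hgL, add_comm (n + 1), Polynomial.homogenize_mul l g hl hg]

theorem exists_eq_prod_of_isHomogeneous {F : MvPolynomial (Fin 2) K}
    (hF : F.IsHomogeneous (n + 1)) :
    ∃ L : Fin (n + 1) → MvPolynomial (Fin 2) K,
      (∀ j, (L j).IsHomogeneous 1) ∧ F = ∏ j, L j := by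
  have natDegree_le : (aeval ![Polynomial.X, 1] F).natDegree ≤ (n + 1) * 1 :=
    aeval_natDegree_le F hF.totalDegree_le _ fun j ↦ by fin_cases j <;> simp
  rw [← Polynomial.homogenize_eq_of_isHomogeneous hF rfl]
  exact exists_homogenize_eq_prod (by simpa using natDegree_le)

theorem exists_eq_prod_not_proportional_of_squarefree {F : MvPolynomial (Fin 2) K}
    (hF : F.IsHomogeneous (n + 1)) (hsq : Squarefree F) :
    ∃ L : Fin (n + 1) → MvPolynomial (Fin 2) K,
      F = ∏ j, L j ∧
      (∀ j, (L j).IsHomogeneous 1 ∧ L j ≠ 0) ∧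
      (∀ j k, j ≠ k → ∀ c : K, L j ≠ C c * L k) := by
  obtain ⟨L, hL, rfl⟩ := exists_eq_prod_of_isHomogeneous hF
  refine ⟨L, rfl, fun j ↦ ⟨hL j, Finset.prod_ne_zero_iff.mp hsq.ne_zero j (Finset.mem_univ j)⟩,
    fun j k hjk c h ↦ ?_⟩
  have isRelPrime : IsRelPrime (L j) (L k) :=
    isRelPrime_of_squarefree_prod hsq (Finset.mem_univ j) (Finset.mem_univ k) hjk
  exact not_isUnit_of_isHomogeneous one_ne_zero (hL k)
    (isRelPrime (Dvd.intro_left (C c) h.symm) dvd_rfl)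

end LinearFactors

theorem pow_mul_add_one_sub_sub_one_eq_inv {G : Type*} [DivisionMonoid G] {l : ℕ} (hl : l ≠ 0)
    (q : ℕ) {x : G} (hx : x ^ l = 1) : x ^ (q * l + 1 - q - 1) = (x ^ q)⁻¹ := by
  have exponent_eq : q * l + 1 - q - 1 + q = l * q := by
    have : q ≤ q * l := Nat.le_mul_of_pos_right q (Nat.pos_of_ne_zero hl)
    lia
  apply eq_inv_of_mul_eq_one_left
  rw [← pow_add, exponent_eq, pow_mul, hx, one_pow]

theorem det_inv_add_inv_eq_div {K : Type*} [Field K] {a b c : K} (ha : a ≠ 0) (hb : b ≠ 0)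
    (hc : c ≠ 0) :
    (!![a⁻¹ + c⁻¹, c⁻¹; c⁻¹, b⁻¹ + c⁻¹]).det = (a + b + c) / (a * b * c) := by
  rw [Matrix.det_fin_two_of]
  field_simp
  ring

theorem pow_add_pow_add_pow_two_pow_eq_one {R : Type*} [CommSemiring R] [CharP R 2] (α β : R)
    (i : ℕ) : α ^ 2 ^ i + β ^ 2 ^ i + (α + β + 1) ^ 2 ^ i = 1 := by
  rw [← add_pow_char_pow, ← add_pow_char_pow, ← add_assoc, CharTwo.add_self_eq_zero, zero_add,
    one_pow]

theorem stmt_7_general (K : Type*) [Field K] [IsAlgClosed K] [CharP K 2] (i l t : ℕ)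
    (hi : 1 ≤ i) (hl : l ≠ 0) (ht : t = 2 ^ i * l + 1)
    (α β : K) (hα : α ^ l = 1) (hβ : β ^ l = 1) (hlam : (α + β + 1) ^ l = 1) :
    let lam : K := α + β + 1
    let F : MvPolynomial (Fin 2) K :=
      C (α ^ (t - 2 ^ i - 1) + lam ^ (t - 2 ^ i - 1)) * X 0 ^ (2 ^ i + 1) +
        C (β ^ (t - 2 ^ i - 1) + lam ^ (t - 2 ^ i - 1)) * X 1 ^ (2 ^ i + 1) +
        C (lam ^ (t - 2 ^ i - 1)) * (X 0 ^ 2 ^ i * X 1 + X 0 * X 1 ^ 2 ^ i)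
    F ≠ 0 ∧
    (∃ L : Fin (2 ^ i + 1) → MvPolynomial (Fin 2) K,
      F = ∏ j, L j ∧
      (∀ j, (L j).IsHomogeneous 1 ∧ L j ≠ 0) ∧
      (∀ j k, j ≠ k → ∀ c : K, L j ≠ C c * L k)) ∧
    Squarefree F := by
  intro lam F
  have pow_two_pow_ne_zero {x : K} (hx : x ^ l = 1) : x ^ 2 ^ i ≠ 0 :=
    pow_ne_zero _ (IsUnit.of_pow_eq_one hx hl).ne_zero
  let A := !![(α ^ 2 ^ i)⁻¹ + (lam ^ 2 ^ i)⁻¹, (lam ^ 2 ^ i)⁻¹;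
    (lam ^ 2 ^ i)⁻¹, (β ^ 2 ^ i)⁻¹ + (lam ^ 2 ^ i)⁻¹]
  have hF : F = frobeniusForm (2 ^ i) A := by
    simp only [F, A, ht, frobeniusForm_symm_fin_two, pow_mul_add_one_sub_sub_one_eq_inv hl _ hα,
      pow_mul_add_one_sub_sub_one_eq_inv hl _ hβ,
      pow_mul_add_one_sub_sub_one_eq_inv hl _ (x := lam) hlam]
  have hA : IsUnit A.det := by
    rw [det_inv_add_inv_eq_div (pow_two_pow_ne_zero hα) (pow_two_pow_ne_zero hβ)
      (pow_two_pow_ne_zero hlam), pow_add_pow_add_pow_two_pow_eq_one]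
    simp [pow_two_pow_ne_zero hα, pow_two_pow_ne_zero hβ, pow_two_pow_ne_zero hlam]
  have two_pow_eq_zero : ((2 ^ i : ℕ) : K) = 0 := by
    simp [CharTwo.two_eq_zero, Nat.ne_of_gt hi]
  have hsq : Squarefree F := hF ▸ squarefree_frobeniusForm two_pow_eq_zero hA
  have hhom : F.IsHomogeneous (2 ^ i + 1) := hF ▸ isHomogeneous_frobeniusForm _ A
  exact ⟨hsq.ne_zero, exists_eq_prod_not_proportional_of_squarefree hhom hsq, hsq⟩

/-- At a singular point `(α, β)` of `f_t` (with `t = 2^i ℓ + 1`), the tangent-cone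
candidate `F_{2^i+1}` is a nonzero product of `2^i + 1` pairwise non-proportional linear
forms over the algebraically closed field `K`; in particular it is squarefree. -/
theorem stmt_7 (K : Type*) [Field K] [IsAlgClosed K] [CharP K 2] (i l t : ℕ)
    (hi : 1 ≤ i) (hl : 3 ≤ l) (hlodd : Odd l) (ht : t = 2 ^ i * l + 1)
    (α β : K) (hα : α ^ l = 1) (hβ : β ^ l = 1) (hlam : (α + β + 1) ^ l = 1) :
    let lam : K := α + β + 1
    let F : MvPolynomial (Fin 2) K :=
      C (α ^ (t - 2 ^ i - 1) + lam ^ (t - 2 ^ i - 1)) * X 0 ^ (2 ^ i + 1) +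
        C (β ^ (t - 2 ^ i - 1) + lam ^ (t - 2 ^ i - 1)) * X 1 ^ (2 ^ i + 1) +
        C (lam ^ (t - 2 ^ i - 1)) * (X 0 ^ 2 ^ i * X 1 + X 0 * X 1 ^ 2 ^ i)
    F ≠ 0 ∧
    (∃ L : Fin (2 ^ i + 1) → MvPolynomial (Fin 2) K,
      F = ∏ j, L j ∧
      (∀ j, (L j).IsHomogeneous 1 ∧ L j ≠ 0) ∧
      (∀ j k, j ≠ k → ∀ c : K, L j ≠ C c * L k)) ∧
    Squarefree F :=
  stmt_7_general K i l t hi (by lia) ht α β hα hβ hlam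
end

section
/- Let t = 2^i·ℓ + 1 where i ≥ 1 and ℓ ≥ 3 is odd, let K be an algebraically closed field of characteristic 2, and let f_t(x,y) = x^t + y^t + 1 + (x+y+1)^t ∈ K[x,y]. A point P = (α, β) ∈ K^2 is a singular point of f_t (that is, m_P(f_t) ≥ 2) if and only if α^ℓ = 1, β^ℓ = 1 and (α + β + 1)^ℓ = 1. -/
open MvPolynomial

/-- The multiplicity of a two-variable polynomial `h` at a point `P = (α, β)`:
the least `m` such that the degree-`m` homogeneous component of `h(x+α, y+β)`
is nonzero. -/
noncomputable def multAt {K : Type*} [CommRing K]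
    (h : MvPolynomial (Fin 2) K) (P : K × K) : ℕ :=
  sInf {m : ℕ | homogeneousComponent m (bind₁ ![X 0 + C P.1, X 1 + C P.2] h) ≠ 0}

/-!
By the Jacobian criterion a point is singular when the polynomial and both its partial derivatives
vanish there. Put `t = n + 1`, let `t` be invertible and `γ = α + β + 1`. The partial derivatives
of `x ^ t + y ^ t + 1 - (x + y + 1) ^ t` vanish at `(α, β)` if and only if `α ^ n = β ^ n = γ ^ n`,
and then its value there is `γ ^ n * (α + β - γ) + 1 = 1 - γ ^ n`. So the singular points are given
by `α ^ n = β ^ n = γ ^ n = 1`. In characteristic `p` with `n = p ^ i * l`, injectivity of the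
Frobenius map replaces `n` by `l`; for `p = 2` the sign of the last power is immaterial.
-/

section LowOrderTerms

variable {R σ : Type*} [CommSemiring R]

theorem derivation_aeval_eq_sum_pderiv {A M : Type*} [Fintype σ] [CommSemiring A] [Algebra R A]
    [AddCommMonoid M] [Module A M] [Module R M] (D : Derivation R A M) (f : σ → A)
    (h : MvPolynomial σ R) :
    D (aeval f h) = ∑ i, aeval f (pderiv i h) • D (f i) := by
  classical
  induction h using MvPolynomial.induction_on with
  | C a => simp
  | add g h hg hh => simp only [map_add, hg, hh, add_smul, Finset.sum_add_distrib]
  | mul_X h j hh =>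
    simp only [map_mul, map_add, Derivation.leibniz, hh, pderiv_X, aeval_X, smul_eq_mul, add_smul,
      mul_smul, Finset.sum_add_distrib, Finset.smul_sum, Pi.single_apply]
    simp

theorem constantCoeff_pderiv (g : MvPolynomial σ R) (j : σ) :
    constantCoeff (pderiv j g) = coeff (Finsupp.single j 1) g := by
  simp [constantCoeff_eq, coeff_pderiv]

theorem homogeneousComponent_zero_eq_zero_iff (g : MvPolynomial σ R) :
    homogeneousComponent 0 g = 0 ↔ constantCoeff g = 0 := by
  rw [homogeneousComponent_zero, C_eq_zero, constantCoeff_eq]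

theorem homogeneousComponent_one_eq_zero_iff (g : MvPolynomial σ R) :
    homogeneousComponent 1 g = 0 ↔ ∀ j, constantCoeff (pderiv j g) = 0 := by
  simp only [constantCoeff_pderiv]
  constructor
  · intro h j
    simpa [coeff_homogeneousComponent] using congrArg (coeff (Finsupp.single j 1)) h
  · intro h
    ext d
    rw [coeff_homogeneousComponent]
    split_ifs with hd
    · obtain ⟨j, rfl⟩ := (Finsupp.sum_eq_one_iff d).mp hd
      simpa using h j
    · simp

end LowOrderTerms

section Multiplicity

variable {K : Type*} [CommRing K]

/-- The translation `h(x, y) ↦ h(x + α, y + β)` for `P = (α, β)`, as it occurs in `multAt`: the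
result lives in variables indexed by `ℕ`, of which only `X 0` and `X 1` occur. -/
noncomputable def recenter (P : K × K) : MvPolynomial (Fin 2) K →ₐ[K] MvPolynomial ℕ K :=
  bind₁ ![X 0 + C P.1, X 1 + C P.2]

theorem recenter_injective (P : K × K) : Function.Injective (recenter P) := by
  let back : MvPolynomial ℕ K →ₐ[K] MvPolynomial (Fin 2) K :=
    aeval fun j => if j = 0 then X 0 - C P.1 else X 1 - C P.2
  have back_comp_recenter : back.comp (recenter P) = AlgHom.id K _ := by
    ext i : 1
    fin_cases i <;> simp [back, recenter, ← algebraMap_eq]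
  exact Function.LeftInverse.injective (g := back) (DFunLike.congr_fun back_comp_recenter)

theorem constantCoeff_recenter (P : K × K) (h : MvPolynomial (Fin 2) K) :
    constantCoeff (recenter P h) = eval ![P.1, P.2] h := by
  have : (constantCoeff.comp (recenter P).toRingHom) = eval ![P.1, P.2] := by
    ext i
    · simp
    · fin_cases i <;> simp [recenter]
  exact DFunLike.congr_fun this h

theorem pderiv_recenter (P : K × K) (h : MvPolynomial (Fin 2) K) (i : Fin 2) :
    pderiv (i : ℕ) (recenter P h) = recenter P (pderiv i h) := by
  have := derivation_aeval_eq_sum_pderiv (pderiv (i : ℕ)) ![X 0 + C P.1, X 1 + C P.2] h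
  fin_cases i <;> simpa [recenter, Fin.sum_univ_two, pderiv_X] using this

theorem pderiv_recenter_of_two_le (P : K × K) (h : MvPolynomial (Fin 2) K) {j : ℕ} (hj : 2 ≤ j) :
    pderiv j (recenter P h) = 0 := by
  have := derivation_aeval_eq_sum_pderiv (pderiv j) ![X 0 + C P.1, X 1 + C P.2] h
  have h0 : j ≠ 0 := by lia
  have h1 : j ≠ 1 := by lia
  simpa [recenter, Fin.sum_univ_two, pderiv_X, h0, h1] using this

theorem le_multAt_iff {h : MvPolynomial (Fin 2) K} (hh : h ≠ 0) (P : K × K) (n : ℕ) :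
    n ≤ multAt h P ↔ ∀ m < n, homogeneousComponent m (recenter P h) = 0 := by
  have hne : {m | homogeneousComponent m (recenter P h) ≠ 0}.Nonempty := by
    by_contra! hempty
    refine hh (recenter_injective P ?_)
    rw [map_zero, ← sum_homogeneousComponent (recenter P h)]
    exact Finset.sum_eq_zero fun m _ => by simpa using Set.eq_empty_iff_forall_notMem.mp hempty m
  refine (le_csInf_iff'' hne).trans (forall_congr' fun m => ?_)
  rw [Set.mem_ofPred_eq, ← not_imp_not, not_not, not_le]

theorem two_le_multAt_iff {h : MvPolynomial (Fin 2) K} (hh : h ≠ 0) (P : K × K) :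
    2 ≤ multAt h P ↔
      eval ![P.1, P.2] h = 0 ∧ ∀ i, eval ![P.1, P.2] (pderiv i h) = 0 := by
  have hpderiv : (∀ j, constantCoeff (pderiv j (recenter P h)) = 0) ↔
      ∀ i, eval ![P.1, P.2] (pderiv i h) = 0 := by
    constructor
    · intro H i
      rw [← constantCoeff_recenter, ← pderiv_recenter]
      exact H i
    · intro H j
      obtain hj | hj := lt_or_ge j 2
      · rw [pderiv_recenter P h ⟨j, hj⟩, constantCoeff_recenter]
        exact H _
      · rw [pderiv_recenter_of_two_le P h hj, map_zero]
  rw [le_multAt_iff hh, Nat.forall_lt_succ_right, Nat.forall_lt_succ_right,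
    homogeneousComponent_zero_eq_zero_iff, homogeneousComponent_one_eq_zero_iff, hpderiv,
    constantCoeff_recenter]
  simp

end Multiplicity

section PowAddDefect

/-- The polynomial `x ^ t + y ^ t + 1 - (x + y + 1) ^ t`, the failure of `u ↦ u ^ t` to be additive
on the triple `(x, y, 1)`. The minus sign makes sense of `f_t` in every characteristic. -/
noncomputable def powAddDefect (R : Type*) [CommRing R] (t : ℕ) : MvPolynomial (Fin 2) R :=
  X 0 ^ t + X 1 ^ t + 1 - (X 0 + X 1 + 1) ^ t

variable {R : Type*} [CommRing R]

theorem eval_powAddDefect (t : ℕ) (α β : R) :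
    eval ![α, β] (powAddDefect R t) = α ^ t + β ^ t + 1 - (α + β + 1) ^ t := by
  simp [powAddDefect]

theorem eval_pderiv_powAddDefect_succ (n : ℕ) (α β : R) (i : Fin 2) :
    eval ![α, β] (pderiv i (powAddDefect R (n + 1))) =
      (n + 1 : ℕ) * (![α, β] i ^ n - (α + β + 1) ^ n) := by
  fin_cases i <;> simp [powAddDefect, pderiv_X, mul_sub]

theorem powAddDefect_succ_ne_zero [Nontrivial R] {n : ℕ} (hn : n ≠ 0)
    (hunit : IsUnit ((n + 1 : ℕ) : R)) : powAddDefect R (n + 1) ≠ 0 := by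
  intro hzero
  have hderiv := eval_pderiv_powAddDefect_succ n (0 : R) 0 0
  rw [hzero, map_zero, map_zero, eq_comm, hunit.mul_right_eq_zero] at hderiv
  simp [hn] at hderiv

theorem pow_defect_eq_zero_and_pow_eq_iff (n : ℕ) {α β γ : R} (hγ : γ = α + β + 1) :
    (α ^ (n + 1) + β ^ (n + 1) + 1 - γ ^ (n + 1) = 0 ∧ α ^ n = γ ^ n ∧ β ^ n = γ ^ n) ↔
      α ^ n = 1 ∧ β ^ n = 1 ∧ γ ^ n = 1 := by
  have hvalue (hα : α ^ n = γ ^ n) (hβ : β ^ n = γ ^ n) :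
      α ^ (n + 1) + β ^ (n + 1) + 1 - γ ^ (n + 1) = 1 - γ ^ n := by
    linear_combination α * hα + β * hβ - γ ^ n * hγ
  constructor
  · rintro ⟨hzero, hα, hβ⟩
    have hγ_one : γ ^ n = 1 := (sub_eq_zero.mp ((hvalue hα hβ).symm.trans hzero)).symm
    exact ⟨hα.trans hγ_one, hβ.trans hγ_one, hγ_one⟩
  · rintro ⟨hα, hβ, hγ_one⟩
    have hαγ := hα.trans hγ_one.symm
    have hβγ := hβ.trans hγ_one.symm
    exact ⟨by rw [hvalue hαγ hβγ, hγ_one, sub_self], hαγ, hβγ⟩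

theorem two_le_multAt_powAddDefect_succ_iff [Nontrivial R] {n : ℕ} (hn : n ≠ 0)
    (hunit : IsUnit ((n + 1 : ℕ) : R)) (α β : R) :
    2 ≤ multAt (powAddDefect R (n + 1)) (α, β) ↔
      α ^ n = 1 ∧ β ^ n = 1 ∧ (α + β + 1) ^ n = 1 := by
  rw [two_le_multAt_iff (powAddDefect_succ_ne_zero hn hunit), eval_powAddDefect,
    ← pow_defect_eq_zero_and_pow_eq_iff n rfl]
  simp only [eval_pderiv_powAddDefect_succ, hunit.mul_right_eq_zero, sub_eq_zero,
    Fin.forall_fin_two, Matrix.cons_val_zero, Matrix.cons_val_one]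

end PowAddDefect

theorem stmt_8_general {K : Type*} [CommRing K] [IsReduced K] (p : ℕ) [Fact p.Prime] [CharP K p]
    {i l : ℕ} (hi : i ≠ 0) (hl : l ≠ 0) (α β : K) :
    2 ≤ multAt (powAddDefect K (p ^ i * l + 1)) (α, β) ↔
      α ^ l = 1 ∧ β ^ l = 1 ∧ (α + β + 1) ^ l = 1 := by
  have hp : p.Prime := Fact.out
  have : Nontrivial K := CharP.nontrivial_of_char_ne_one hp.ne_one
  have hunit : IsUnit ((p ^ i * l + 1 : ℕ) : K) := by simp [hi]
  have hn : p ^ i * l ≠ 0 := mul_ne_zero (pow_ne_zero i hp.ne_zero) hl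
  simp only [two_le_multAt_powAddDefect_succ_iff hn hunit, ExpChar.pow_prime_pow_mul_eq_one_iff]

/-- For `t = 2^i ℓ + 1`, a point `(α, β)` is a singular point of
`f_t(x,y) = x^t + y^t + 1 + (x+y+1)^t` if and only if `α`, `β` and `α+β+1` are
`ℓ`-th roots of unity. -/
theorem stmt_8 (K : Type*) [Field K] [IsAlgClosed K] [CharP K 2] (i l t : ℕ)
    (hi : 1 ≤ i) (hl : 3 ≤ l) (hlodd : Odd l) (ht : t = 2 ^ i * l + 1) (α β : K) :
    2 ≤ multAt (X 0 ^ t + X 1 ^ t + 1 + (X 0 + X 1 + 1) ^ t : MvPolynomial (Fin 2) K)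
        (α, β) ↔
      α ^ l = 1 ∧ β ^ l = 1 ∧ (α + β + 1) ^ l = 1 := by
  rw [← CharTwo.sub_eq_add, ht]
  exact stmt_8_general 2 (by lia) (by lia) α β
end

section
/- Let K be a field of characteristic 2, let ℓ be an odd positive integer, and let H = {a ∈ K : a^ℓ = 1}; assume H has exactly ℓ elements. Then for every α ∈ H with α ≠ 1 there exists β ∈ H with β ≠ 1, β ≠ α, and (α + β + 1)^ℓ ≠ 1. -/
/-!
If every `ℓ`-th root of unity `β` gave another one, `α + β + 1`, then translation by `α + 1 ≠ 0`
would be a fixed-point-free involution of the set of `ℓ`-th roots of unity, so this set, if finite,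
would have even cardinality. But `a ↦ a⁻¹ = a ^ (ℓ - 1)` is also an involution of it, and as `ℓ` is
odd it fixes only `1`, so the cardinality is odd. In an arbitrary ring of characteristic `2`, which
may contain infinitely many roots of unity, the same count is made inside `𝔽₂[α]`, which is finite
because `α` is integral over `𝔽₂`.
-/

open Set

theorem ncard_modEq_ncard_fixed {X : Type*} {s : Set X} (hs : s.Finite) {f : X → X}
    (hmaps : MapsTo f s s) {p n : ℕ} [Fact p.Prime] (hf : EqOn f^[p ^ n] id s) :
    s.ncard ≡ {x ∈ s | f x = x}.ncard [MOD p] := by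
  classical
  have := hs.fintype
  let g : Function.End s := hmaps.restrict
  have hg : g ^ p ^ n = 1 := by
    funext x
    apply Subtype.ext
    change ((hmaps.restrict^[p ^ n] x : s) : X) = x
    rw [hmaps.iterate_restrict]
    exact hf x.2
  have hfixed : {x ∈ s | f x = x} = Subtype.val '' Function.fixedPoints g := by
    ext x
    simp [g, Function.IsFixedPt, Subtype.ext_iff, and_comm]
  rw [hfixed, ncard_image_of_injective _ Subtype.val_injective, ← Nat.card_coe_set_eq,
    ← Nat.card_coe_set_eq, Nat.card_eq_fintype_card, Nat.card_eq_fintype_card]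
  exact Equiv.Perm.card_fixedPoints_modEq hg

theorem ncard_modEq_two_ncard_fixed {X : Type*} {s : Set X} (hs : s.Finite) {f : X → X}
    (hmaps : MapsTo f s s) (hinv : LeftInvOn f f s) :
    s.ncard ≡ {x ∈ s | f x = x}.ncard [MOD 2] :=
  ncard_modEq_ncard_fixed hs hmaps (n := 1) hinv

theorem odd_ncard_pow_eq_one {M : Type*} [Monoid M] {n : ℕ} (hn : Odd n)
    (hfin : {a : M | a ^ n = 1}.Finite) : Odd {a : M | a ^ n = 1}.ncard := by
  obtain ⟨k, rfl⟩ := hn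
  have hmaps : MapsTo (· ^ (2 * k)) {a : M | a ^ (2 * k + 1) = 1} {a | a ^ (2 * k + 1) = 1} := by
    intro a ha
    rw [mem_ofPred_eq, pow_right_comm, ha, one_pow]
  have hpow_mul_self {a : M} (ha : a ^ (2 * k + 1) = 1) : a ^ (2 * k) * a = 1 := by
    rwa [← pow_succ]
  have hinv : LeftInvOn (· ^ (2 * k)) (· ^ (2 * k)) {a : M | a ^ (2 * k + 1) = 1} := by
    intro a ha
    exact left_inv_eq_right_inv (hpow_mul_self (hmaps ha)) (hpow_mul_self ha)
  have hfixed : {a ∈ {a : M | a ^ (2 * k + 1) = 1} | a ^ (2 * k) = a} = {1} := by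
    ext a
    refine ⟨fun ⟨ha, hfix⟩ ↦ ?_, by rintro rfl; simp⟩
    have hsq : a ^ 2 = 1 := by rw [sq, ← hpow_mul_self ha, hfix]
    rwa [mem_ofPred_eq, pow_succ, pow_mul, hsq, one_pow, one_mul] at ha
  have hmod := ncard_modEq_two_ncard_fixed hfin hmaps hinv
  rw [hfixed, ncard_singleton] at hmod
  exact Nat.odd_iff.mpr hmod

theorem even_ncard_of_mapsTo_add_right {A : Type*} [AddGroup A] {s : Set A} (hs : s.Finite)
    {c : A} (hc : c ≠ 0) (hcc : c + c = 0) (hmaps : MapsTo (· + c) s s) : Even s.ncard := by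
  have hmod := ncard_modEq_two_ncard_fixed hs hmaps fun x _ ↦ by simp [add_assoc, hcc]
  simpa [hc, Nat.even_iff, Nat.ModEq] using hmod

theorem exists_pow_eq_one_and_add_pow_ne_one {R : Type*} [Ring R] {n : ℕ} (hn : Odd n)
    (hfin : {a : R | a ^ n = 1}.Finite) {c : R} (hc : c ≠ 0) (hcc : c + c = 0) :
    ∃ b : R, b ^ n = 1 ∧ (b + c) ^ n ≠ 1 := by
  by_contra! hmaps
  exact Nat.not_even_iff_odd.mpr (odd_ncard_pow_eq_one hn hfin)
    (even_ncard_of_mapsTo_add_right hfin hc hcc hmaps)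

theorem exists_pow_eq_one_and_add_pow_ne_one_of_mem_subring {R : Type*} [Ring R] (S : Subring R)
    [Finite S] {n : ℕ} (hn : Odd n) {c : R} (hcS : c ∈ S) (hc : c ≠ 0) (hcc : c + c = 0) :
    ∃ b : R, b ^ n = 1 ∧ (b + c) ^ n ≠ 1 := by
  obtain ⟨b, hb, hbc⟩ := exists_pow_eq_one_and_add_pow_ne_one hn (toFinite _) (c := (⟨c, hcS⟩ : S))
    (fun h ↦ hc (congrArg Subtype.val h)) (Subtype.ext hcc)
  exact ⟨b, congrArg Subtype.val hb, fun h ↦ hbc (Subtype.ext h)⟩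

theorem finite_adjoin_singleton {F R : Type*} [CommRing F] [Finite F] [Ring R] [Algebra F R]
    {x : R} (hx : IsIntegral F x) : Finite (Algebra.adjoin F {x}) :=
  have := Algebra.finite_adjoin_simple_of_isIntegral hx
  Module.finite_of_finite F

theorem stmt_9_general {R : Type*} [Ring R] [CharP R 2] {l : ℕ} (hlodd : Odd l) {α : R}
    (hα : α ^ l = 1) (hα1 : α ≠ 1) :
    ∃ β : R, β ^ l = 1 ∧ β ≠ 1 ∧ β ≠ α ∧ (α + β + 1) ^ l ≠ 1 := by
  let := ZMod.algebra R 2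
  let S := (Algebra.adjoin (ZMod 2) {α}).toSubring
  have hint : IsIntegral (ZMod 2) α := .of_pow hlodd.pos (hα ▸ isIntegral_one)
  have : Finite S := finite_adjoin_singleton hint
  have hmem : α + 1 ∈ S := add_mem (Algebra.self_mem_adjoin_singleton _ α) (one_mem S)
  have hα0 : α + 1 ≠ 0 := CharTwo.add_eq_zero.not.mpr hα1
  obtain ⟨β, hβ, hne⟩ := exists_pow_eq_one_and_add_pow_ne_one_of_mem_subring S hlodd hmem hα0
    (CharTwo.add_self_eq_zero _)
  rw [← add_assoc, add_comm β α] at hne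
  refine ⟨β, hβ, ?_, ?_, hne⟩
  · rintro rfl
    exact hne (by rw [CharTwo.add_cancel_right, hα])
  · rintro rfl
    exact hne (by rw [CharTwo.add_self_eq_zero, zero_add, one_pow])

/-- If `K` has characteristic `2` and contains all `ℓ` of the `ℓ`-th roots of unity
(`ℓ` odd), then for every `ℓ`-th root of unity `α ≠ 1` there is an `ℓ`-th root of
unity `β` with `β ≠ 1`, `β ≠ α` and `(α + β + 1)^ℓ ≠ 1`. -/
theorem stmt_9 (K : Type*) [Field K] [CharP K 2] (l : ℕ) (hlodd : Odd l)
    (hlpos : 0 < l) (hcard : Set.ncard {a : K | a ^ l = 1} = l)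
    (α : K) (hα : α ^ l = 1) (hα1 : α ≠ 1) :
    ∃ β : K, β ^ l = 1 ∧ β ≠ 1 ∧ β ≠ α ∧ (α + β + 1) ^ l ≠ 1 :=
  stmt_9_general hlodd hα hα1
end

section
/- Let t = 2^i·ℓ + 1 where i ≥ 1 and ℓ ≥ 3 is odd, let K be an algebraically closed field of characteristic 2, and let α, β ∈ K satisfy α^ℓ = β^ℓ = (α+β+1)^ℓ = 1. Set λ = α + β + 1 and let F_{2^i} = (α^{t−2^i} + λ^{t−2^i})x^{2^i} + (β^{t−2^i} + λ^{t−2^i})y^{2^i}, the degree-2^i homogeneous component of f_t(x+α, y+β) where f_t(x,y) = x^t + y^t + 1 + (x+y+1)^t. Then F_{2^i} = 0 if and only if α^{2^i−1} = β^{2^i−1} = λ^{2^i−1}. In particular, if gcd(ℓ, 2^i − 1) = ℓ then F_{2^i} = 0 at every such point. -/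
open MvPolynomial

/-! Put `q = 2 ^ i`. Since `(t - q) + (q - 1) = q * l`, the powers `a ^ (t - q)` and `a ^ (q - 1)`
of an `l`-th root of unity `a` are inverse to each other. In characteristic two a coefficient
`a ^ (t - q) + b ^ (t - q)` therefore vanishes exactly when `a ^ (q - 1) = b ^ (q - 1)`. -/

theorem pow_eq_pow_of_pow_add_eq_one {M : Type*} [Monoid M] {a b : M} {m n : ℕ}
    (ha : a ^ (m + n) = 1) (hb : b ^ (m + n) = 1) (h : a ^ m = b ^ m) : a ^ n = b ^ n := by
  have a_inv : a ^ n * a ^ m = 1 := by rw [← pow_add, add_comm, ha]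
  have b_inv : a ^ m * b ^ n = 1 := by rw [h, ← pow_add, hb]
  exact left_inv_eq_right_inv a_inv b_inv

theorem pow_eq_pow_iff_of_pow_add_eq_one {M : Type*} [Monoid M] {a b : M} {m n : ℕ}
    (ha : a ^ (m + n) = 1) (hb : b ^ (m + n) = 1) : a ^ m = b ^ m ↔ a ^ n = b ^ n :=
  ⟨pow_eq_pow_of_pow_add_eq_one ha hb,
    pow_eq_pow_of_pow_add_eq_one (add_comm m n ▸ ha) (add_comm m n ▸ hb)⟩

theorem C_mul_X_pow_add_C_mul_X_pow_eq_zero_iff {σ R : Type*} [CommSemiring R] {i j : σ}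
    (hij : i ≠ j) {m n : ℕ} (hm : m ≠ 0) (hn : n ≠ 0) {a b : R} :
    (C a * X i ^ m + C b * X j ^ n : MvPolynomial σ R) = 0 ↔ a = 0 ∧ b = 0 := by
  classical
  constructor
  · intro h
    have eval_single (k : σ) := congrArg (eval (Pi.single k 1)) h
    exact ⟨by simpa [hij.symm, hn] using eval_single i, by simpa [hij, hm] using eval_single j⟩
  · rintro ⟨rfl, rfl⟩
    simp

theorem pow_add_pow_eq_zero_iff_of_pow_eq_one {R : Type*} [Ring R] [CharP R 2] {q l t : ℕ}
    (hq : q ≠ 0) (hl : l ≠ 0) (ht : t = q * l + 1) {a b : R} (ha : a ^ l = 1) (hb : b ^ l = 1) :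
    a ^ (t - q) + b ^ (t - q) = 0 ↔ a ^ (q - 1) = b ^ (q - 1) := by
  have exponent_sum : t - q + (q - 1) = l * q := by
    have : q ≤ q * l := Nat.le_mul_of_pos_right q (Nat.pos_of_ne_zero hl)
    rw [mul_comm l]
    omega
  have pow_sum {c : R} (hc : c ^ l = 1) : c ^ (t - q + (q - 1)) = 1 := by
    rw [exponent_sum, pow_mul, hc, one_pow]
  rw [CharTwo.add_eq_zero, pow_eq_pow_iff_of_pow_add_eq_one (pow_sum ha) (pow_sum hb)]

theorem stmt_10_general {R : Type*} [CommRing R] [CharP R 2] {q l t : ℕ}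
    (hq : q ≠ 0) (hl : l ≠ 0) (ht : t = q * l + 1)
    {α β lam : R} (hα : α ^ l = 1) (hβ : β ^ l = 1) (hlam : lam ^ l = 1) :
    let F : MvPolynomial (Fin 2) R :=
      C (α ^ (t - q) + lam ^ (t - q)) * X 0 ^ q + C (β ^ (t - q) + lam ^ (t - q)) * X 1 ^ q
    (F = 0 ↔ α ^ (q - 1) = lam ^ (q - 1) ∧ β ^ (q - 1) = lam ^ (q - 1)) ∧
    (l ∣ q - 1 → F = 0) := by
  intro F
  have vanishing_iff : F = 0 ↔ α ^ (q - 1) = lam ^ (q - 1) ∧ β ^ (q - 1) = lam ^ (q - 1) := by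
    rw [C_mul_X_pow_add_C_mul_X_pow_eq_zero_iff (by decide) hq hq,
      pow_add_pow_eq_zero_iff_of_pow_eq_one hq hl ht hα hlam,
      pow_add_pow_eq_zero_iff_of_pow_eq_one hq hl ht hβ hlam]
  refine ⟨vanishing_iff, fun l_dvd => vanishing_iff.2 ?_⟩
  have pow_pred {c : R} (hc : c ^ l = 1) : c ^ (q - 1) = 1 :=
    orderOf_dvd_iff_pow_eq_one.1 ((orderOf_dvd_of_pow_eq_one hc).trans l_dvd)
  exact ⟨(pow_pred hα).trans (pow_pred hlam).symm, (pow_pred hβ).trans (pow_pred hlam).symm⟩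

/-- At a singular point `(α, β)` of `f_t` (with `t = 2^i ℓ + 1`), the component
`F_{2^i}` vanishes iff `α^{2^i-1} = β^{2^i-1} = λ^{2^i-1}` where `λ = α + β + 1`;
in particular it vanishes whenever `gcd(ℓ, 2^i - 1) = ℓ`. -/
theorem stmt_10 (K : Type*) [Field K] [IsAlgClosed K] [CharP K 2] (i l t : ℕ)
    (hi : 1 ≤ i) (hl : 3 ≤ l) (hlodd : Odd l) (ht : t = 2 ^ i * l + 1)
    (α β : K) (hα : α ^ l = 1) (hβ : β ^ l = 1) (hlam : (α + β + 1) ^ l = 1) :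
    let lam : K := α + β + 1
    let F : MvPolynomial (Fin 2) K :=
      C (α ^ (t - 2 ^ i) + lam ^ (t - 2 ^ i)) * X 0 ^ 2 ^ i +
        C (β ^ (t - 2 ^ i) + lam ^ (t - 2 ^ i)) * X 1 ^ 2 ^ i
    (F = 0 ↔
      α ^ (2 ^ i - 1) = lam ^ (2 ^ i - 1) ∧ β ^ (2 ^ i - 1) = lam ^ (2 ^ i - 1)) ∧
    (Nat.gcd l (2 ^ i - 1) = l → F = 0) := by
  simpa only [Nat.gcd_eq_left_iff_dvd] using
    stmt_10_general (by positivity : 2 ^ i ≠ 0) (by omega) ht hα hβ hlam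
end
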